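/- arXiv:math/0410246 — 2 statements merged into one kernel-verified Lean document; each statement's English description precedes it below -/
import Mathlib

section
/- For all integers n ≥ 3 and ℓ ≥ 1, liminf_{X→∞} (log |F_n^{(ℓ)}(X)|) / (log |F_n(X)|) ≥ 2/((n−1)(n+2)ℓ). -/
/-- A finite-dimensional intermediate field of `ℂ/ℚ` is a number field. -/
noncomputable instance (F : IntermediateField ℚ ℂ) [FiniteDimensional ℚ F] :
    NumberField F := ⟨⟩

/-- The set of number fields (realized as intermediate fields of `ℂ/ℚ`) of degree `n`
over `ℚ` whose discriminant has absolute value at most `X`. -/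
def NumberFieldSet (n : ℕ) (X : ℝ) : Set (IntermediateField ℚ ℂ) :=
  {F | ∃ h : FiniteDimensional ℚ F, Module.finrank ℚ F = n ∧
    (haveI := h; |(NumberField.discr F : ℝ)| ≤ X)}

/-- The subset of `NumberFieldSet n X` of those fields with class number divisible by `ℓ`. -/
def NumberFieldSetDvd (n ℓ : ℕ) (X : ℝ) : Set (IntermediateField ℚ ℂ) :=
  {F | ∃ h : FiniteDimensional ℚ F, Module.finrank ℚ F = n ∧
    (haveI := h; |(NumberField.discr F : ℝ)| ≤ X ∧ ℓ ∣ NumberField.classNumber F)}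

/-- The equivalence relation "being isomorphic as fields" on a set of intermediate
fields of `ℂ/ℚ`; the quotient is the set of isomorphism classes. -/
def isoSetoid (S : Set (IntermediateField ℚ ℂ)) : Setoid S :=
  ⟨fun K L => Nonempty ((K : IntermediateField ℚ ℂ) ≃+* (L : IntermediateField ℚ ℂ)),
    ⟨fun _ => ⟨RingEquiv.refl _⟩, fun ⟨e⟩ => ⟨e.symm⟩, fun ⟨e⟩ ⟨f⟩ => ⟨e.trans f⟩⟩⟩

/-- `|F_n(X)|`: the number of isomorphism classes of number fields of degree `n`
with discriminant of absolute value at most `X`. -/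
noncomputable def Fcard (n : ℕ) (X : ℝ) : ℕ :=
  Nat.card (Quotient (isoSetoid (NumberFieldSet n X)))

/-- `|F_n^{(ℓ)}(X)|`: the number of those classes with class number divisible by `ℓ`. -/
noncomputable def FcardDvd (n ℓ : ℕ) (X : ℝ) : ℕ :=
  Nat.card (Quotient (isoSetoid (NumberFieldSetDvd n ℓ X)))

/-!
For integers `a₁, …, aₙ` and `t`, let `θ` be a root of `∏ (X - aⱼ) + t ^ ℓ`. If `t` is coprime to
all differences `aᵢ - aⱼ`, then the ideals `(θ - aⱼ)` are pairwise coprime and their product is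
`(t) ^ ℓ`, so each of them is an `ℓ`-th power. If `ℓ` did not divide the class number, then for some
prime `p ∣ ℓ` every `θ - aⱼ` would be a unit times a `p`-th power. When `t ^ ℓ` dominates the `aⱼ`,
the field `ℚ(θ)` is not totally real, so its unit rank is smaller than `n - 1`. Congruence
conditions on `a` and `t` make the polynomial irreducible and provide primes whose residue
characters show that the `n - 1` elements `θ - aⱼ` with `j ≠ j₀` are independent modulo `p`-th
powers and roots of unity, which is a contradiction.

Let each `aⱼ` range over about `u ^ ℓ` values and `t` over about `u ^ n` values of size `u ^ n`.
Then `θ` has size `O(u ^ ℓ)` and the discriminant is `O(u ^ (ℓ n (n - 1)))`. A positive proportion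
of the `u ^ (ℓ n + n)` parameters satisfies the coprimality condition and gives distinct
polynomials, whereas one field contains only `O(u ^ (ℓ n))` integers of size `O(u ^ ℓ)`. This yields
at least a constant times `u ^ n` fields, that is, `X ^ (1 / (ℓ (n - 1)))` in terms of the
discriminant bound `X`.

Conversely, a field of discriminant at most `X` has a primitive integer of size `O(X ^ (1 / n))`,
since most integers in a box of that size lie in no proper subfield. Bounding the coefficients of
its minimal polynomial gives `|F_n(X)| = O(X ^ ((n + 1) / 2))`.
-/

section IntegersInBoxes

open NumberField NumberField.mixedEmbedding MeasureTheory Module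
open scoped NNReal Pointwise

lemma add_mem_convexBodyLT {K : Type*} [Field K] {f g : InfinitePlace K → ℝ≥0}
    {x y : mixedSpace K}
    (hx : x ∈ convexBodyLT K f) (hy : y ∈ convexBodyLT K g) :
    x + y ∈ convexBodyLT K (f + g) := by
  simp only [Set.mem_prod, Set.mem_univ_pi, mem_ball_zero_iff, Pi.add_apply,
    NNReal.coe_add] at hx hy ⊢
  exact ⟨fun w ↦ (norm_add_le _ _).trans_lt (add_lt_add (hx.1 w) (hy.1 w)),
    fun w ↦ (norm_add_le _ _).trans_lt (add_lt_add (hx.2 w) (hy.2 w))⟩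

variable {K : Type*} [Field K] [NumberField K]

lemma measurableSet_convexBodyLT (f : InfinitePlace K → ℝ≥0) :
    MeasurableSet (convexBodyLT K f) :=
  ((isOpen_set_pi Set.finite_univ fun _ _ ↦ Metric.isOpen_ball).prod
    (isOpen_set_pi Set.finite_univ fun _ _ ↦ Metric.isOpen_ball)).measurableSet

open scoped Classical in
lemma volume_convexBodyLT_const (r : ℝ≥0) :
    volume (convexBodyLT K fun _ ↦ r) =
      ((convexBodyLTFactor K * r ^ finrank ℚ K : ℝ≥0) : ENNReal) := by
  rw [convexBodyLT_volume, Finset.prod_pow_eq_pow_sum, InfinitePlace.sum_mult_eq]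
  push_cast
  rfl

lemma eq_zero_of_forall_infinitePlace_lt_one {x : 𝓞 K}
    (hx : ∀ w : InfinitePlace K, w (x : K) < 1) : x = 0 := by
  by_contra hx0
  obtain ⟨w⟩ : Nonempty (InfinitePlace K) := inferInstance
  exact (hx w).not_ge (InfinitePlace.one_le_of_lt_one hx0 fun w' _ ↦ hx w')

lemma pairwiseDisjoint_vadd_convexBodyLT_half (s : Set (𝓞 K)) :
    s.PairwiseDisjoint fun x ↦ mixedEmbedding K x +ᵥ convexBodyLT K fun _ ↦ 1 / 2 := by
  refine fun x _ y _ hxy ↦ Set.disjoint_left.2 ?_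
  rintro _ ⟨u, hu, rfl⟩ ⟨v, hv, hvu⟩
  have hdiff : v + -u = mixedEmbedding K ((x - y : 𝓞 K) : K) := by
    have hvu' : mixedEmbedding K (y : K) + v = mixedEmbedding K x + u := hvu
    rw [RingOfIntegers.coe_eq_algebraMap, map_sub, map_sub, ← sub_eq_add_neg,
      sub_eq_sub_iff_add_eq_add, add_comm v, hvu']
  have hmem := add_mem_convexBodyLT hv (convexBodyLT_neg_mem K _ u hu)
  rw [hdiff, convexBodyLT_mem] at hmem
  refine hxy (sub_eq_zero.1 (eq_zero_of_forall_infinitePlace_lt_one fun w ↦ ?_))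
  have hw := hmem w
  norm_num at hw ⊢
  exact hw

open scoped Classical in
lemma card_le_of_forall_infinitePlace_lt {B : ℝ≥0} {s : Finset (𝓞 K)}
    (hs : ∀ x ∈ s, ∀ w : InfinitePlace K, w (x : K) < B) :
    (s.card : ℝ) ≤ (2 * B + 1) ^ finrank ℚ K := by
  set n := finrank ℚ K
  have hsub : ⋃ x ∈ s, (mixedEmbedding K x +ᵥ convexBodyLT K fun _ ↦ (1 / 2 : ℝ≥0)) ⊆
      convexBodyLT K fun _ ↦ B + 1 / 2 := by
    refine Set.iUnion₂_subset fun x hx ↦ ?_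
    rintro _ ⟨u, hu, rfl⟩
    exact add_mem_convexBodyLT ((convexBodyLT_mem K _).2 (hs x hx)) hu
  have hvol := measure_mono (μ := volume) hsub
  rw [measure_biUnion_finset (pairwiseDisjoint_vadd_convexBodyLT_half _)
    fun x _ ↦ (measurableSet_convexBodyLT _).const_vadd _] at hvol
  simp only [measure_vadd, Finset.sum_const, volume_convexBodyLT_const, nsmul_eq_mul] at hvol
  have hvol' : (s.card : ℝ≥0) * (convexBodyLTFactor K * (1 / 2) ^ n) ≤
      convexBodyLTFactor K * (B + 1 / 2) ^ n := by exact_mod_cast hvol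
  rw [mul_left_comm] at hvol'
  have hcard : (s.card : ℝ) * (1 / 2) ^ n ≤ (B + 1 / 2) ^ n := by
    exact_mod_cast le_of_mul_le_mul_left hvol' (pos_iff_ne_zero.2 (convexBodyLTFactor_ne_zero K))
  rw [show (B : ℝ) + 1 / 2 = (2 * B + 1) * (1 / 2) by ring, mul_pow] at hcard
  exact le_of_mul_le_mul_right hcard (by positivity)

end IntegersInBoxes

section Blichfeldt

open MeasureTheory
open scoped Pointwise ENNReal

variable {E L : Type*} [MeasurableSpace E] {μ : Measure E} {F s : Set E} [AddGroup L]
  [Countable L] [AddAction L E] [MeasurableSpace L] [MeasurableVAdd L E]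
  [VAddInvariantMeasure L E μ]

lemma measure_eq_lintegral_tsum_indicator_vadd (fund : IsAddFundamentalDomain L F μ)
    (hs : MeasurableSet s) :
    μ s = ∫⁻ x in F, ∑' g : L, (g +ᵥ s).indicator 1 x ∂μ := by
  have hm (g : L) : MeasurableSet (g +ᵥ s) := hs.const_vadd g
  rw [fund.measure_eq_tsum s,
    lintegral_tsum fun g ↦ (measurable_one.indicator (hm g)).aemeasurable]
  simp only [lintegral_indicator_one (hm _), Measure.restrict_apply (hm _)]

lemma exists_finset_card_eq_forall_mem_vadd (fund : IsAddFundamentalDomain L F μ)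
    (hs : MeasurableSet s) {m : ℕ} (h : m * μ F < μ s) :
    ∃ (x : E) (t : Finset L), t.card = m + 1 ∧ ∀ g ∈ t, x ∈ g +ᵥ s := by
  classical
  contrapose! h
  have hcard (x : E) (t : Finset L) (ht : ∀ g ∈ t, x ∈ g +ᵥ s) : t.card ≤ m := by
    by_contra! hlt
    obtain ⟨t', ht', hc⟩ := Finset.exists_subset_card_eq (Nat.succ_le_of_lt hlt)
    obtain ⟨g, hg, hgs⟩ := h x t' hc
    exact hgs (ht g (ht' hg))
  have hsum (x : E) : ∑' g : L, (g +ᵥ s).indicator (1 : E → ℝ≥0∞) x ≤ m := by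
    rw [ENNReal.tsum_eq_iSup_sum]
    refine iSup_le fun t ↦ ?_
    simp only [Set.indicator_apply, Pi.one_apply, Finset.sum_boole]
    exact_mod_cast hcard x _ fun g hg ↦ (Finset.mem_filter.1 hg).2
  calc μ s = ∫⁻ x in F, ∑' g : L, (g +ᵥ s).indicator 1 x ∂μ :=
        measure_eq_lintegral_tsum_indicator_vadd fund hs
    _ ≤ ∫⁻ _ in F, (m : ℝ≥0∞) ∂μ := lintegral_mono hsum
    _ = m * μ F := by rw [setLIntegral_const]

end Blichfeldt

section ManyIntegers

open NumberField NumberField.mixedEmbedding MeasureTheory Module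
open scoped NNReal Pointwise

variable {K : Type*} [Field K] [NumberField K]

open scoped Classical in
lemma natCast_mul_covolume_lt_volume_convexBodyLT {B : ℝ≥0} {m : ℕ}
    (hm : m * √|(discr K : ℝ)| < (B : ℝ) ^ finrank ℚ K) :
    m * volume (ZSpan.fundamentalDomain (latticeBasis K)) <
      volume (convexBodyLT K fun _ ↦ B / 2) := by
  set r₁ := InfinitePlace.nrRealPlaces K
  set r₂ := InfinitePlace.nrComplexPlaces K
  have hrank : finrank ℚ K = r₁ + 2 * r₂ := (InfinitePlace.card_add_two_mul_card_eq_rank K).symm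
  have hreal : (m : ℝ) * (2⁻¹ ^ r₂ * √‖discr K‖) < 2 ^ r₁ * Real.pi ^ r₂ * (B / 2) ^ finrank ℚ K :=
    calc (m : ℝ) * (2⁻¹ ^ r₂ * √‖discr K‖) = 2⁻¹ ^ r₂ * (m * √|(discr K : ℝ)|) := by
          rw [Int.norm_eq_abs]; ring
      _ < 2⁻¹ ^ r₂ * (B : ℝ) ^ finrank ℚ K := by gcongr
      _ = 2 ^ r₁ * 2 ^ r₂ * (B / 2) ^ finrank ℚ K := by
          rw [div_pow, hrank, pow_add 2, two_mul r₂, pow_add 2, inv_pow]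
          field_simp
      _ ≤ 2 ^ r₁ * Real.pi ^ r₂ * (B / 2) ^ finrank ℚ K := by gcongr; exact Real.two_le_pi
  have hnnreal : (m : ℝ≥0) * (2⁻¹ ^ r₂ * NNReal.sqrt ‖discr K‖₊) <
      convexBodyLTFactor K * (B / 2) ^ finrank ℚ K := by
    rw [← NNReal.coe_lt_coe]
    push_cast
    exact hreal
  rw [volume_fundamentalDomain_latticeBasis, volume_convexBodyLT_const]
  refine lt_of_eq_of_lt ?_ (ENNReal.coe_lt_coe.2 hnnreal)
  push_cast [ENNReal.coe_inv two_ne_zero]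
  rfl

lemma exists_finset_integers_card_eq {B : ℝ≥0} {m : ℕ}
    (hm : m * √|(discr K : ℝ)| < (B : ℝ) ^ finrank ℚ K) :
    ∃ s : Finset (𝓞 K), s.card = m + 1 ∧ ∀ x ∈ s, ∀ w : InfinitePlace K, w (x : K) < B := by
  classical
  let Λ := (Submodule.span ℤ (Set.range (latticeBasis K))).toAddSubgroup
  have : Countable Λ := inferInstanceAs (Countable (Submodule.span ℤ _))
  obtain ⟨x, t, ht, hxt⟩ := exists_finset_card_eq_forall_mem_vadd
    (ZSpan.isAddFundamentalDomain' (latticeBasis K) volume) (measurableSet_convexBodyLT _)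
    (natCast_mul_covolume_lt_volume_convexBodyLT hm)
  obtain ⟨g₀, hg₀⟩ : t.Nonempty := Finset.card_pos.1 (by lia)
  have hpreimage (g : Λ) : ∃ a : 𝓞 K, mixedEmbedding K (a : K) = g := by
    simpa using (mem_span_latticeBasis K).1 g.2
  choose a ha using hpreimage
  refine ⟨t.image fun g ↦ a g₀ - a g, ?_, ?_⟩
  · rw [Finset.card_image_of_injective, ht]
    intro g g' hgg'
    rw [sub_right_inj] at hgg'
    exact Subtype.ext (by rw [← ha, hgg', ha])
  · simp only [Finset.mem_image, forall_exists_index, and_imp, forall_apply_eq_imp_iff₂]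
    intro g hg w
    obtain ⟨y, hy, hyx⟩ := hxt g hg
    obtain ⟨y₀, hy₀, hyx₀⟩ := hxt g₀ hg₀
    have hdiff : y + -y₀ = mixedEmbedding K ((a g₀ - a g : 𝓞 K) : K) := by
      have hyy₀ : (g : mixedSpace K) + y = g₀ + y₀ := hyx.trans hyx₀.symm
      rw [RingOfIntegers.coe_eq_algebraMap, map_sub, map_sub, ha, ha, ← sub_eq_add_neg,
        sub_eq_sub_iff_add_eq_add, add_comm y, hyy₀]
    have hmem := add_mem_convexBodyLT hy (convexBodyLT_neg_mem K _ y₀ hy₀)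
    rw [hdiff, convexBodyLT_mem] at hmem
    simpa using hmem w

lemma exists_finset_integers_pow_le_card (K : Type*) [Field K] [NumberField K] {B : ℝ≥0}
    (hB : 0 < B) :
    ∃ s : Finset (𝓞 K), (∀ x ∈ s, ∀ w : InfinitePlace K, w (x : K) < B) ∧
      (B : ℝ) ^ finrank ℚ K ≤ s.card * √|(discr K : ℝ)| := by
  have hD : 0 < √|(discr K : ℝ)| := by simpa using discr_ne_zero K
  obtain ⟨m, hm⟩ : ∃ m, ⌈(B : ℝ) ^ finrank ℚ K / √|(discr K : ℝ)|⌉₊ = m + 1 :=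
    Nat.exists_eq_add_one.2 (Nat.ceil_pos.2 (by positivity))
  obtain ⟨hlt, hle⟩ := (Nat.ceil_eq_iff m.succ_ne_zero).1 hm
  rw [Nat.succ_sub_one, lt_div_iff₀ hD] at hlt
  obtain ⟨s, hs, hsB⟩ := exists_finset_integers_card_eq hlt
  exact ⟨s, hsB, by rwa [hs, ← div_le_iff₀ hD]⟩

end ManyIntegers

section PrimitiveIntegers

open NumberField Module IntermediateField
open scoped NNReal

/-- The intermediate field on which two embeddings agree, that is, `AlgHom.equalizer` as an
`IntermediateField`. -/
def algHomEqualizerField {F K L : Type*} [Field F] [Field K] [Field L] [Algebra F K] [Algebra F L]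
    (φ ψ : K →ₐ[F] L) : IntermediateField F K :=
  (AlgHom.equalizer φ ψ).toIntermediateField fun x hx ↦ by
    simp only [AlgHom.mem_equalizer, map_inv₀] at hx ⊢
    rw [hx]

lemma algHomEqualizerField_ne_top {F K L : Type*} [Field F] [Field K] [Field L] [Algebra F K]
    [Algebra F L] {φ ψ : K →ₐ[F] L} (h : φ ≠ ψ) : algHomEqualizerField φ ψ ≠ ⊤ := fun htop ↦
  h (AlgHom.ext fun x ↦ (htop ▸ mem_top : x ∈ algHomEqualizerField φ ψ))

lemma two_mul_finrank_le_finrank {F K : Type*} [Field F] [Field K] [Algebra F K]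
    [FiniteDimensional F K] {E : IntermediateField F K} (hE : E ≠ ⊤) :
    2 * finrank F E ≤ finrank F K := by
  have hindex : finrank E K ≠ 1 := fun h ↦ hE (finrank_eq_one_iff_eq_top.1 h)
  have hpos : 0 < finrank E K := finrank_pos
  rw [← finrank_mul_finrank F E K, mul_comm]
  exact Nat.mul_le_mul_left _ (by lia)

variable {K : Type*} [Field K] [NumberField K]

lemma card_sq_le_of_forall_mem_intermediateField {E : IntermediateField ℚ K} (hE : E ≠ ⊤)
    {B : ℝ≥0} (hB : 1 ≤ B) {s : Finset (𝓞 K)}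
    (hs : ∀ x ∈ s, ∀ w : InfinitePlace K, w (x : K) < B) (hsE : ∀ x ∈ s, (x : K) ∈ E) :
    (s.card : ℝ) ^ 2 ≤ (3 * B) ^ finrank ℚ K := by
  classical
  have hint (x : s) : IsIntegral ℤ (⟨x.1, hsE x.1 x.2⟩ : E) :=
    (isIntegral_algHom_iff (E.val.restrictScalars ℤ) Subtype.val_injective).1
      (RingOfIntegers.isIntegral_coe x.1)
  let f (x : s) : 𝓞 E := ⟨⟨x.1, hsE x.1 x.2⟩, hint x⟩
  have hf : Function.Injective f := fun x y hxy ↦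
    Subtype.ext (RingOfIntegers.ext (congrArg (fun z : 𝓞 E ↦ ((z : E) : K)) hxy))
  have hcard : (s.card : ℝ) ≤ (2 * B + 1) ^ finrank ℚ E := by
    rw [← Fintype.card_coe s, ← Finset.card_univ, ← Finset.card_image_of_injective _ hf]
    refine card_le_of_forall_infinitePlace_lt ?_
    simp only [Finset.mem_image, Finset.mem_univ, true_and, forall_exists_index,
      forall_apply_eq_imp_iff]
    intro x w
    obtain ⟨w', rfl⟩ := InfinitePlace.comap_surjective (K := K) w
    exact hs x.1 x.2 w'
  have hB' : (1 : ℝ) ≤ B := hB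
  calc (s.card : ℝ) ^ 2 ≤ ((2 * (B : ℝ) + 1) ^ finrank ℚ E) ^ 2 := by gcongr
    _ ≤ ((3 * (B : ℝ)) ^ finrank ℚ E) ^ 2 := by gcongr; linarith
    _ = (3 * (B : ℝ)) ^ (2 * finrank ℚ E) := by rw [← pow_mul, mul_comm 2]
    _ ≤ (3 * B) ^ finrank ℚ K := pow_le_pow_right₀ (by linarith) (two_mul_finrank_le_finrank hE)

lemma card_sq_le_of_forall_not_primitive {B : ℝ≥0} (hB : 1 ≤ B) {s : Finset (𝓞 K)}
    (hs : ∀ x ∈ s, ∀ w : InfinitePlace K, w (x : K) < B) (hprim : ∀ x ∈ s, ℚ⟮(x : K)⟯ ≠ ⊤) :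
    (s.card : ℝ) ^ 2 ≤ (finrank ℚ K : ℝ) ^ 2 * (3 * B) ^ finrank ℚ K := by
  classical
  let φ : K →ₐ[ℚ] ℂ := IsAlgClosed.lift
  let sAgree (ψ : K →ₐ[ℚ] ℂ) : Finset (𝓞 K) := {x ∈ s | φ ≠ ψ ∧ φ x = ψ x}
  have hcover : s ⊆ Finset.univ.biUnion sAgree := fun x hx ↦ by
    have hx' := hprim x hx
    rw [Ne, Field.primitive_element_iff_algHom_eq_of_eval ℚ ℂ
      (fun _ ↦ IsAlgClosed.splits _) (x : K) φ] at hx'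
    push Not at hx'
    obtain ⟨ψ, hψx, hψ⟩ := hx'
    exact Finset.mem_biUnion.2 ⟨ψ, Finset.mem_univ _, Finset.mem_filter.2 ⟨hx, hψ, hψx⟩⟩
  have hAgree (ψ : K →ₐ[ℚ] ℂ) : ((sAgree ψ).card : ℝ) ≤ √((3 * B) ^ finrank ℚ K) := by
    obtain rfl | hψ := eq_or_ne φ ψ
    · simp [sAgree]
    · exact Real.le_sqrt_of_sq_le <| card_sq_le_of_forall_mem_intermediateField
        (algHomEqualizerField_ne_top hψ) hB (fun x hx ↦ hs x (Finset.mem_filter.1 hx).1)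
        fun x hx ↦ (Finset.mem_filter.1 hx).2.2
  have hcard : (s.card : ℝ) ≤ finrank ℚ K * √((3 * B) ^ finrank ℚ K) :=
    calc (s.card : ℝ) ≤ ∑ ψ, ((sAgree ψ).card : ℝ) := by
          exact_mod_cast (Finset.card_le_card hcover).trans Finset.card_biUnion_le
      _ ≤ ∑ _ψ : K →ₐ[ℚ] ℂ, √((3 * B) ^ finrank ℚ K) := Finset.sum_le_sum fun ψ _ ↦ hAgree ψ
      _ = finrank ℚ K * √((3 * B) ^ finrank ℚ K) := by
          rw [Finset.sum_const, Finset.card_univ, AlgHom.card ℚ K ℂ, nsmul_eq_mul]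
  calc (s.card : ℝ) ^ 2 ≤ (finrank ℚ K * √((3 * B) ^ finrank ℚ K)) ^ 2 := by gcongr
    _ = (finrank ℚ K : ℝ) ^ 2 * (3 * B) ^ finrank ℚ K := by
        rw [mul_pow, Real.sq_sqrt (by positivity)]

/- Among the at least `B ^ n / √|d|` integers of the box, those in proper subfields number only
`O(B ^ (n / 2))`. -/
lemma exists_primitive_integer_forall_infinitePlace_lt {B : ℝ≥0} (hB : 1 ≤ B)
    (h : (finrank ℚ K : ℝ) ^ 2 * 3 ^ finrank ℚ K * |(discr K : ℝ)| < (B : ℝ) ^ finrank ℚ K) :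
    ∃ α : 𝓞 K, ℚ⟮(α : K)⟯ = ⊤ ∧ ∀ w : InfinitePlace K, w (α : K) < B := by
  set n := finrank ℚ K
  obtain ⟨s, hs, hcard⟩ := exists_finset_integers_pow_le_card K (one_pos.trans_le hB)
  by_contra! hprim
  have hsprim (x) (hx : x ∈ s) : ℚ⟮(x : K)⟯ ≠ ⊤ := fun hx' ↦
    have ⟨w, hw⟩ := hprim x hx'
    (hs x hx w).not_ge hw
  have hBpos : (0 : ℝ) < B ^ n := pow_pos (NNReal.coe_pos.2 (one_pos.trans_le hB)) _
  have hle : (B : ℝ) ^ n * B ^ n ≤ n ^ 2 * 3 ^ n * |(discr K : ℝ)| * B ^ n :=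
    calc (B : ℝ) ^ n * B ^ n = (B ^ n) ^ 2 := by ring
      _ ≤ (s.card * √|(discr K : ℝ)|) ^ 2 := by gcongr
      _ = (s.card : ℝ) ^ 2 * |(discr K : ℝ)| := by rw [mul_pow, Real.sq_sqrt (by positivity)]
      _ ≤ n ^ 2 * (3 * B) ^ n * |(discr K : ℝ)| := by
          gcongr
          exact card_sq_le_of_forall_not_primitive hB hs hsprim
      _ = n ^ 2 * 3 ^ n * |(discr K : ℝ)| * B ^ n := by rw [mul_pow]; ring
  exact h.not_ge (le_of_mul_le_mul_right hle hBpos)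

end PrimitiveIntegers

section IsomorphismClasses

variable {S T : Set (IntermediateField ℚ ℂ)}

lemma injective_quotientMap_inclusion (h : S ⊆ T) :
    Function.Injective (Quotient.map (sa := isoSetoid S) (sb := isoSetoid T) (Set.inclusion h)
      fun _ _ e ↦ e) := by
  rintro ⟨K⟩ ⟨L⟩ hKL
  exact Quotient.sound (Quotient.exact hKL : (isoSetoid T).r _ _)

lemma card_quotient_isoSetoid_mono [Finite (Quotient (isoSetoid T))] (h : S ⊆ T) :
    Nat.card (Quotient (isoSetoid S)) ≤ Nat.card (Quotient (isoSetoid T)) :=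
  Nat.card_le_card_of_injective _ (injective_quotientMap_inclusion h)

lemma numberFieldSet_finite (n : ℕ) (X : ℝ) : (NumberFieldSet n X).Finite := by
  refine ((NumberField.finite_of_discr_bdd ℂ ⌊X⌋₊).image Subtype.val).subset ?_
  rintro F ⟨hF, -, hX⟩
  refine ⟨⟨F, hF⟩, ?_, rfl⟩
  have hX' : ((NumberField.discr F).natAbs : ℝ) ≤ X := by rwa [Nat.cast_natAbs, Int.cast_abs]
  rw [Set.mem_ofPred_eq, Int.abs_eq_natAbs]
  exact_mod_cast Nat.le_floor hX'

lemma numberFieldSetDvd_subset (n ℓ : ℕ) (X : ℝ) :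
    NumberFieldSetDvd n ℓ X ⊆ NumberFieldSet n X :=
  fun _ ⟨hF, hn, hX, _⟩ ↦ ⟨hF, hn, hX⟩

instance (n : ℕ) (X : ℝ) : Finite (NumberFieldSet n X) := numberFieldSet_finite n X

instance (n ℓ : ℕ) (X : ℝ) : Finite (NumberFieldSetDvd n ℓ X) :=
  (numberFieldSet_finite n X).subset (numberFieldSetDvd_subset n ℓ X)

lemma fcardDvd_le_fcard (n ℓ : ℕ) (X : ℝ) : FcardDvd n ℓ X ≤ Fcard n X :=
  card_quotient_isoSetoid_mono (numberFieldSetDvd_subset n ℓ X)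

lemma monotone_fcardDvd (n ℓ : ℕ) : Monotone (FcardDvd n ℓ) := fun _ _ hXY ↦
  card_quotient_isoSetoid_mono fun _ ⟨hF, hn, hX, hℓ⟩ ↦ ⟨hF, hn, hX.trans hXY, hℓ⟩

lemma fcardDvd_one (n : ℕ) (X : ℝ) : FcardDvd n 1 X = Fcard n X :=
  (fcardDvd_le_fcard n 1 X).antisymm <|
    card_quotient_isoSetoid_mono fun _ ⟨hF, hn, hX⟩ ↦ ⟨hF, hn, hX, one_dvd _⟩

end IsomorphismClasses

section IntegralGenerators

open NumberField IntermediateField Polynomial Module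

/-- The integer `θ` generates the field `K` over `ℚ` and has minimal polynomial `f` over `ℤ`. -/
structure IsIntegralGenerator {K : Type*} [Field K] [CharZero K] (f : ℤ[X]) (θ : 𝓞 K) : Prop where
  adjoin_eq_top : ℚ⟮(θ : K)⟯ = ⊤
  minpoly_eq : minpoly ℤ (θ : K) = f

lemma exists_isIntegralGenerator {f : ℤ[X]} (hf : f.Monic) (hirr : Irreducible f) :
    ∃ (F : IntermediateField ℚ ℂ) (_ : FiniteDimensional ℚ F) (θ : 𝓞 F),
      IsIntegralGenerator f θ := by
  have hirr' := hf.irreducible_iff_irreducible_map_fraction_map (K := ℚ) |>.1 hirr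
  obtain ⟨z, hz⟩ := IsAlgClosed.exists_aeval_eq_zero ℂ _ hirr'.degree_pos.ne'
  have hzint : IsIntegral ℤ z := ⟨f, hf, by rwa [aeval_map_algebraMap] at hz⟩
  have : FiniteDimensional ℚ ℚ⟮z⟯ := adjoin.finiteDimensional hzint.tower_top
  let θ := AdjoinSimple.gen ℚ z
  have hθ : IsIntegral ℤ θ :=
    (isIntegral_algHom_iff (ℚ⟮z⟯.val.restrictScalars ℤ) Subtype.val_injective).1 hzint
  refine ⟨ℚ⟮z⟯, this, ⟨θ, hθ⟩, ?_, ?_⟩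
  · refine (Field.primitive_element_iff_minpoly_natDegree_eq ℚ θ).2 ?_
    rw [show minpoly ℚ θ = minpoly ℚ z from minpoly_gen ℚ z]
    exact (adjoin.finrank hzint.tower_top).symm
  · have hmin : minpoly ℤ θ = minpoly ℤ z :=
      (minpoly.algHom_eq (ℚ⟮z⟯.val.restrictScalars ℤ) Subtype.val_injective θ).symm
    apply map_injective (algebraMap ℤ ℚ) (algebraMap ℤ ℚ).injective_int
    change (minpoly ℤ θ).map _ = _
    rw [hmin, ← minpoly.isIntegrallyClosed_eq_field_fractions' ℚ hzint,
      minpoly.eq_of_irreducible_of_monic hirr' hz (hf.map _)]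

namespace IsIntegralGenerator

lemma minpoly_rat_eq {K : Type*} [Field K] [CharZero K] {f : ℤ[X]} {θ : 𝓞 K}
    (h : IsIntegralGenerator f θ) : minpoly ℚ (θ : K) = f.map (algebraMap ℤ ℚ) := by
  rw [minpoly.isIntegrallyClosed_eq_field_fractions' ℚ θ.isIntegral_coe, h.minpoly_eq]

lemma monic {K : Type*} [Field K] [CharZero K] {f : ℤ[X]} {θ : 𝓞 K}
    (h : IsIntegralGenerator f θ) : f.Monic :=
  h.minpoly_eq ▸ minpoly.monic θ.isIntegral_coe

lemma aeval_eq_zero {K : Type*} [Field K] [CharZero K] {f : ℤ[X]} {θ : 𝓞 K}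
    (h : IsIntegralGenerator f θ) : aeval θ f = 0 := by
  apply RingOfIntegers.coe_injective
  rw [← h.minpoly_eq, map_zero, ← aeval_algebraMap_apply]
  exact minpoly.aeval ℤ _

variable {K L : Type*} [Field K] [NumberField K] [Field L] [NumberField L] {f : ℤ[X]} {θ : 𝓞 K}
  {η : 𝓞 L}

lemma natDegree_eq (h : IsIntegralGenerator f θ) : f.natDegree = finrank ℚ K := by
  rw [← (Field.primitive_element_iff_minpoly_natDegree_eq ℚ _).1 h.adjoin_eq_top,
    h.minpoly_rat_eq, h.monic.natDegree_map]

lemma exists_powerBasis (h : IsIntegralGenerator f θ) : ∃ pb : PowerBasis ℚ K, pb.gen = θ :=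
  have hθ := Algebra.IsIntegral.isIntegral (R := ℚ) (θ : K)
  ⟨_, PowerBasis.ofAdjoinEqTop_gen hθ
    (Algebra.adjoin_eq_top_of_primitive_element hθ.isAlgebraic h.adjoin_eq_top)⟩

lemma nonempty_ringEquiv (hθ : IsIntegralGenerator f θ) (hη : IsIntegralGenerator f η) :
    Nonempty (K ≃+* L) := by
  obtain ⟨pbK, hK⟩ := hθ.exists_powerBasis
  obtain ⟨pbL, hL⟩ := hη.exists_powerBasis
  have hmin : minpoly ℚ pbK.gen = minpoly ℚ pbL.gen := by
    rw [hK, hL, hθ.minpoly_rat_eq, hη.minpoly_rat_eq]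
  exact ⟨(pbK.equivOfMinpoly pbL hmin).toRingEquiv⟩

lemma exists_embedding_eq_of_mem_aroots (h : IsIntegralGenerator f θ) {z : ℂ}
    (hz : z ∈ f.aroots ℂ) : ∃ φ : K →+* ℂ, φ θ = z := by
  have hroot : z ∈ (minpoly ℚ (θ : K)).rootSet ℂ := by
    rw [h.minpoly_rat_eq, mem_rootSet, aeval_map_algebraMap]
    exact ⟨(h.monic.map _).ne_zero, (mem_aroots.1 hz).2⟩
  rw [← Embeddings.range_eval_eq_rootSet_minpoly K ℂ (θ : K)] at hroot
  exact hroot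

lemma norm_le_of_mem_aroots (h : IsIntegralGenerator f θ) {B : ℝ}
    (hB : ∀ w : InfinitePlace K, w (θ : K) ≤ B) {z : ℂ} (hz : z ∈ f.aroots ℂ) : ‖z‖ ≤ B := by
  obtain ⟨φ, rfl⟩ := h.exists_embedding_eq_of_mem_aroots hz
  exact hB (InfinitePlace.mk φ)

lemma abs_coeff_le (h : IsIntegralGenerator f θ) {B : ℝ}
    (hB : ∀ w : InfinitePlace K, w (θ : K) ≤ B) (i : ℕ) :
    |(f.coeff i : ℝ)| ≤ B ^ (finrank ℚ K - i) * (finrank ℚ K).choose i := by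
  have hcoeff := coeff_le_of_roots_le i h.monic (IsAlgClosed.splits _)
    fun _ hz ↦ h.norm_le_of_mem_aroots hB hz
  rw [h.natDegree_eq, coeff_map] at hcoeff
  simpa using hcoeff

end IsIntegralGenerator

end IntegralGenerators

section UpperBound

open NumberField Polynomial Module
open scoped NNReal

lemma monic_eq_of_forall_coeff_eq {R : Type*} [Semiring R] {f g : R[X]} {n : ℕ} (hf : f.Monic)
    (hg : g.Monic) (hfn : f.natDegree = n) (hgn : g.natDegree = n)
    (h : ∀ i < n, f.coeff i = g.coeff i) : f = g := by
  refine (ext_iff_natDegree_le hfn.le hgn.le).2 fun i hi ↦ ?_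
  obtain hi | rfl := hi.lt_or_eq
  · exact h i hi
  · trans 1
    · rw [← hfn, hf.coeff_natDegree]
    · rw [← hgn, hg.coeff_natDegree]

lemma fcard_le_prod {n : ℕ} {X : ℝ} {N : Fin n → ℕ}
    (h : ∀ F ∈ NumberFieldSet n X, ∃ (f : ℤ[X]) (θ : 𝓞 F),
      IsIntegralGenerator f θ ∧ ∀ i : Fin n, |f.coeff i| ≤ N i) :
    Fcard n X ≤ ∏ i, (2 * N i + 1) := by
  choose! f θ hfθ hcoeff using h
  let coeffs (q : Quotient (isoSetoid (NumberFieldSet n X))) (i : Fin n) :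
      Finset.Icc (-(N i : ℤ)) (N i) :=
    ⟨(f q.out.1).coeff i, Finset.mem_Icc.2 (abs_le.1 (hcoeff _ q.out.2 i))⟩
  have hinj : Function.Injective coeffs := fun q q' hqq' ↦ by
    obtain ⟨⟨hfin, hn, -⟩, ⟨hfin', hn', -⟩⟩ := And.intro q.out.2 q'.out.2
    have hgen := hfθ _ q.out.2
    have hgen' := hfθ _ q'.out.2
    have hpoly : f q.out.1 = f q'.out.1 :=
      monic_eq_of_forall_coeff_eq hgen.monic hgen'.monic (hgen.natDegree_eq.trans hn)
        (hgen'.natDegree_eq.trans hn') fun i hi ↦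
          congrArg Subtype.val (congrFun hqq' ⟨i, hi⟩)
    rw [← hpoly] at hgen'
    rw [← q.out_eq, ← q'.out_eq]
    exact Quotient.sound (hgen.nonempty_ringEquiv hgen')
  calc Fcard n X ≤ Nat.card (∀ i, Finset.Icc (-(N i : ℤ)) (N i)) :=
        Nat.card_le_card_of_injective coeffs hinj
    _ = ∏ i, (2 * N i + 1) := by
        rw [Nat.card_eq_fintype_card, Fintype.card_pi]
        refine Finset.prod_congr rfl fun i _ ↦ ?_
        rw [Fintype.card_coe, Int.card_Icc]
        lia

lemma exists_isIntegralGenerator_abs_coeff_le {K : Type*} [Field K] [NumberField K] {B : ℝ}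
    (hB : 1 ≤ B)
    (h : (finrank ℚ K : ℝ) ^ 2 * 3 ^ finrank ℚ K * |(discr K : ℝ)| < B ^ finrank ℚ K) :
    ∃ (f : ℤ[X]) (θ : 𝓞 K), IsIntegralGenerator f θ ∧
      ∀ i, |(f.coeff i : ℝ)| ≤ 2 ^ finrank ℚ K * B ^ (finrank ℚ K - i) := by
  lift B to ℝ≥0 using zero_le_one.trans hB
  obtain ⟨θ, hθ, hθB⟩ := exists_primitive_integer_forall_infinitePlace_lt (by exact_mod_cast hB) h
  have hgen : IsIntegralGenerator (minpoly ℤ (θ : K)) θ := ⟨hθ, rfl⟩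
  refine ⟨_, θ, hgen, fun i ↦ (hgen.abs_coeff_le (fun w ↦ (hθB w).le) i).trans ?_⟩
  rw [mul_comm]
  gcongr
  exact_mod_cast Nat.choose_le_two_pow _ i

lemma fcard_le_of_lt_pow {n : ℕ} {X B : ℝ} (hB : 1 ≤ B) (h : (n : ℝ) ^ 2 * 3 ^ n * X < B ^ n) :
    (Fcard n X : ℝ) ≤ (3 * 2 ^ n) ^ n * B ^ (n * (n + 1) / 2) := by
  have hcard : Fcard n X ≤ ∏ i : Fin n, (2 * ⌊2 ^ n * B ^ (n - (i : ℕ))⌋₊ + 1) := by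
    refine fcard_le_prod fun F ⟨hF, hn, hX⟩ ↦ ?_
    have hF' : (finrank ℚ F : ℝ) ^ 2 * 3 ^ finrank ℚ F * |(discr F : ℝ)| < B ^ finrank ℚ F := by
      rw [hn]
      exact h.trans_le' (by gcongr)
    obtain ⟨f, θ, hgen, hcoeff⟩ := exists_isIntegralGenerator_abs_coeff_le hB hF'
    refine ⟨f, θ, hgen, fun i ↦ ?_⟩
    rw [Int.abs_eq_natAbs]
    refine Int.ofNat_le.2 (Nat.le_floor ?_)
    rw [Nat.cast_natAbs, Int.cast_abs]
    simpa only [hn] using hcoeff i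
  have hfactor (i : ℕ) : (2 * ⌊2 ^ n * B ^ (n - i)⌋₊ + 1 : ℝ) ≤ 3 * 2 ^ n * B ^ (n - i) := by
    have hfloor : (⌊2 ^ n * B ^ (n - i)⌋₊ : ℝ) ≤ 2 ^ n * B ^ (n - i) := Nat.floor_le (by positivity)
    have hone : 1 ≤ 2 ^ n * B ^ (n - i) :=
      one_le_mul_of_one_le_of_one_le (one_le_pow₀ one_le_two) (one_le_pow₀ hB)
    linarith
  have hexp : ∑ i : Fin n, (n - (i : ℕ)) = n * (n + 1) / 2 := by
    have hreflect : ∑ i ∈ Finset.range n, (n - i) = ∑ i ∈ Finset.range (n + 1), i := by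
      rw [← Finset.sum_range_reflect (fun i ↦ i) (n + 1), Finset.sum_range_succ]
      simp
    rw [Fin.sum_univ_eq_sum_range (fun i ↦ n - i) n, hreflect, Finset.sum_range_id, mul_comm,
      Nat.add_sub_cancel]
  calc (Fcard n X : ℝ) ≤ ∏ i : Fin n, (2 * ⌊2 ^ n * B ^ (n - (i : ℕ))⌋₊ + 1 : ℝ) := by
        exact_mod_cast hcard
    _ ≤ ∏ i : Fin n, 3 * 2 ^ n * B ^ (n - (i : ℕ)) :=
        Finset.prod_le_prod (fun _ _ ↦ by positivity) fun i _ ↦ hfactor i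
    _ = (3 * 2 ^ n) ^ n * B ^ (n * (n + 1) / 2) := by
        rw [Finset.prod_mul_distrib, Finset.prod_pow_eq_pow_sum, hexp]
        simp

lemma exists_fcard_le {n : ℕ} (hn : n ≠ 0) :
    ∃ C > 0, ∀ X : ℝ, 1 ≤ X → (Fcard n X : ℝ) ≤ C * X ^ (((n : ℝ) + 1) / 2) := by
  set c : ℝ := (n : ℝ) ^ 2 * 3 ^ n + 1 with hc
  refine ⟨(3 * 2 ^ n) ^ n * c ^ (((n : ℝ) + 1) / 2), by positivity, fun X hX ↦ ?_⟩
  have hX0 : 0 < X := one_pos.trans_le hX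
  have hc1 : 1 ≤ c := le_add_of_nonneg_left (by positivity)
  set B : ℝ := (c * X) ^ (1 / (n : ℝ)) with hB
  have hB1 : 1 ≤ B := Real.one_le_rpow (one_le_mul_of_one_le_of_one_le hc1 hX) (by positivity)
  have hBn : B ^ n = c * X := by
    rw [hB, one_div, Real.rpow_inv_natCast_pow (by positivity) hn]
  have hBexp : B ^ (n * (n + 1) / 2) = (c * X) ^ (((n : ℝ) + 1) / 2) := by
    rw [hB, ← Real.rpow_natCast, ← Real.rpow_mul (by positivity),
      Nat.cast_div (Nat.even_mul_succ_self n).two_dvd two_ne_zero]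
    push_cast
    congr 1
    field_simp
  have hlt : (n : ℝ) ^ 2 * 3 ^ n * X < B ^ n := by
    rw [hBn, hc]
    linarith
  calc (Fcard n X : ℝ) ≤ (3 * 2 ^ n) ^ n * B ^ (n * (n + 1) / 2) := fcard_le_of_lt_pow hB1 hlt
    _ = (3 * 2 ^ n) ^ n * c ^ (((n : ℝ) + 1) / 2) * X ^ (((n : ℝ) + 1) / 2) := by
        rw [hBexp, Real.mul_rpow (by positivity) hX0.le, mul_assoc]

end UpperBound

section ClassNumberCriterion

open NumberField Module

lemma exists_sum_nsmul_eq_nsmul {M ι : Type*} [AddCommGroup M] [Free ℤ M] [Module.Finite ℤ M]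
    [Fintype ι] (p : ℕ) [Fact p.Prime] (hι : finrank ℤ M < Fintype.card ι) (f : ι → M) :
    ∃ v : ι → ℕ, (∃ i, ¬p ∣ v i) ∧ ∃ m : M, ∑ j, v j • f j = p • m := by
  let b := Free.chooseBasis ℤ M
  let c : ι → Free.ChooseBasisIndex ℤ M → ZMod p := fun j t ↦ (b.repr (f j) t : ZMod p)
  have hdep : ¬LinearIndependent (ZMod p) c := fun h ↦ by
    have hle := h.fintype_card_le_finrank
    rw [finrank_fintype_fun_eq_card, ← finrank_eq_card_chooseBasisIndex] at hle
    exact hι.not_ge hle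
  obtain ⟨g, hg, i, hi⟩ := Fintype.not_linearIndependent_iff.1 hdep
  have hdvd (t) : (p : ℤ) ∣ b.repr (∑ j, (g j).val • f j) t := by
    rw [← ZMod.intCast_zmod_eq_zero_iff_dvd, map_sum, Finsupp.finsetSum_apply]
    simpa [c] using congrFun hg t
  choose d hd using hdvd
  refine ⟨fun j ↦ (g j).val, ⟨i, fun h ↦ hi ?_⟩, ∑ t, d t • b t, ?_⟩
  · rwa [← ZMod.natCast_zmod_val (g i), ZMod.natCast_eq_zero_iff]
  · rw [← b.sum_repr (∑ j, (g j).val • f j), Finset.smul_sum]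
    exact Finset.sum_congr rfl fun t _ ↦ by rw [hd, mul_smul, natCast_zsmul]

lemma dvd_of_pow_eq_mul_pow {p q τ v : ℕ} [Fact q.Prime] {g ζ y : ZMod q}
    (hpq : p * τ ∣ q - 1) (hg : orderOf g = q - 1) (hζ : ζ ^ τ = 1) (h : g ^ v = ζ * y ^ p) :
    p ∣ v := by
  have hq : q - 1 ≠ 0 := Nat.sub_ne_zero_of_lt (Fact.out : q.Prime).one_lt
  obtain ⟨s, hs⟩ := hpq
  have hg0 : g ≠ 0 := by
    rintro rfl
    exact zero_ne_one ((zero_pow hq).symm.trans (hg ▸ pow_orderOf_eq_one _))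
  have hp : p ≠ 0 := by rintro rfl; simp [hq] at hs
  have hy : y ≠ 0 := by
    rintro rfl
    rw [zero_pow hp, mul_zero] at h
    exact pow_ne_zero v hg0 h
  have hone : g ^ (v * (τ * s)) = 1 := by
    rw [pow_mul, h, mul_pow, pow_mul ζ, hζ, one_pow, one_mul, ← pow_mul, ← mul_assoc, ← hs,
      ZMod.pow_card_sub_one_eq_one hy]
  have hdvd := orderOf_dvd_of_pow_eq_one hone
  rw [hg, hs, mul_assoc] at hdvd
  have hτs : 0 < τ * s := Nat.pos_of_ne_zero fun h0 ↦ hq (by rw [hs, mul_assoc, h0, mul_zero])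
  exact Nat.dvd_of_mul_dvd_mul_right hτs hdvd

variable {K : Type*} [Field K] [NumberField K]

lemma exists_prod_units_pow_eq_mul_pow {ι : Type*} [Fintype ι] (p : ℕ) [Fact p.Prime]
    (hι : Units.rank K < Fintype.card ι) (u : ι → (𝓞 K)ˣ) :
    ∃ v : ι → ℕ, (∃ i, ¬p ∣ v i) ∧
      ∃ ζ ∈ Units.torsion K, ∃ w : (𝓞 K)ˣ, ∏ j, u j ^ v j = ζ * w ^ p := by
  obtain ⟨v, hv, m, hm⟩ := exists_sum_nsmul_eq_nsmul (M := Additive ((𝓞 K)ˣ ⧸ Units.torsion K)) p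
    (by rwa [Units.finrank_modTorsion])
    (fun j ↦ Additive.ofMul (QuotientGroup.mk' (Units.torsion K) (u j)))
  obtain ⟨w, hw⟩ := QuotientGroup.mk'_surjective (Units.torsion K) m.toMul
  have hprod : QuotientGroup.mk' (Units.torsion K) (w ^ p) =
      QuotientGroup.mk' (Units.torsion K) (∏ j, u j ^ v j) := by
    simp only [map_pow, hw, map_prod]
    exact (congrArg Additive.toMul hm).symm
  exact ⟨v, hv, _, QuotientGroup.eq.1 hprod, w, by rw [mul_comm, mul_inv_cancel_left]⟩

variable (K) in
lemma torsionOrder_dvd_factorial : Units.torsionOrder K ∣ (4 ^ finrank ℚ K).factorial := by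
  classical
  let := Fintype.ofFinite (Units.torsion K)
  have hinj : Function.Injective fun ζ : Units.torsion K ↦ ((ζ : (𝓞 K)ˣ) : 𝓞 K) :=
    fun _ _ h ↦ Subtype.ext (Units.ext h)
  have hcard := card_le_of_forall_infinitePlace_lt (B := 3 / 2)
    (s := Finset.univ.image fun ζ : Units.torsion K ↦ ((ζ : (𝓞 K)ˣ) : 𝓞 K)) <| by
      simp only [Finset.mem_image, Finset.mem_univ, true_and, forall_exists_index,
        forall_apply_eq_imp_iff]
      intro ζ w
      rw [(Units.mem_torsion K).1 ζ.2 w]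
      norm_num
  rw [Finset.card_image_of_injective _ hinj, Finset.card_univ, ← Nat.card_eq_fintype_card,
    show 2 * ((3 / 2 : NNReal) : ℝ) + 1 = 4 by norm_num] at hcard
  exact Nat.dvd_factorial Nat.card_pos (by exact_mod_cast hcard)

lemma exists_eq_unit_mul_pow_of_span_eq_pow {p e : ℕ} (hp : p.Prime)
    (hdvd : ¬p ^ (e + 1) ∣ classNumber K) {x : 𝓞 K} (hx : x ≠ 0) {I : Ideal (𝓞 K)}
    (hI : Ideal.span {x} = I ^ p ^ (e + 1)) :
    ∃ (u : (𝓞 K)ˣ) (y : 𝓞 K), x = u * y ^ p := by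
  have hI0 : I ≠ 0 := by
    rintro rfl
    exact hx (by simpa [hp.ne_zero] using hI)
  have hmem : I ∈ nonZeroDivisors (Ideal (𝓞 K)) := mem_nonZeroDivisors_of_ne_zero hI0
  let c := ClassGroup.mk0 ⟨I, hmem⟩
  have hprincipal (s : ℕ) : c ^ s = 1 ↔ (I ^ s).IsPrincipal := by
    rw [← map_pow, ← ClassGroup.mk0_eq_one_iff (pow_mem hmem s)]
    rfl
  have hpow : c ^ p ^ (e + 1) = 1 := (hprincipal _).2 (hI ▸ ⟨⟨x, rfl⟩⟩)
  have hpow' : c ^ p ^ e = 1 := by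
    by_contra hne
    have horder : orderOf c = p ^ (e + 1) :=
      have : Fact p.Prime := ⟨hp⟩
      orderOf_eq_prime_pow hne hpow
    exact hdvd (horder ▸ orderOf_dvd_card)
  obtain ⟨⟨y, hy⟩⟩ := (hprincipal _).1 hpow'
  have hspan : Ideal.span {y ^ p} = Ideal.span {x} := by
    rw [← Ideal.span_singleton_pow, hI, pow_succ, pow_mul, hy]
  obtain ⟨u, hu⟩ := Ideal.span_singleton_eq_span_singleton.1 hspan
  exact ⟨u, y, by rw [← hu, mul_comm]⟩

/- Otherwise every `x j` is a unit times a `p`-th power for some prime `p ∣ ℓ`. There being more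
`x j` than independent units, some product of the `x j` with exponents not all divisible by `p` is
a root of unity times a `p`-th power; the residue character at a suitable `q` excludes this. -/
lemma dvd_classNumber_of_residues {ι : Type*} [Fintype ι] {ℓ : ℕ}
    (hι : Units.rank K < Fintype.card ι) {x : ι → 𝓞 K} (hx0 : ∀ j, x j ≠ 0)
    (hx : ∀ j, ∃ I : Ideal (𝓞 K), Ideal.span {x j} = I ^ ℓ)
    (hres : ∀ p : ℕ, p.Prime → p ∣ ℓ → ∀ i, ∃ (q : ℕ) (_ : Fact q.Prime) (φ : 𝓞 K →+* ZMod q),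
      p * Units.torsionOrder K ∣ q - 1 ∧ (∀ j ≠ i, φ (x j) = 1) ∧ orderOf (φ (x i)) = q - 1) :
    ℓ ∣ classNumber K := by
  rw [Nat.dvd_iff_prime_pow_dvd_dvd]
  rintro p (_ | e) hp ⟨m, rfl⟩
  · simp
  by_contra hdvd
  have : Fact p.Prime := ⟨hp⟩
  have hpow (j) : ∃ (u : (𝓞 K)ˣ) (y : 𝓞 K), x j = u * y ^ p := by
    obtain ⟨I, hI⟩ := hx j
    exact exists_eq_unit_mul_pow_of_span_eq_pow hp hdvd (hx0 j) (I := I ^ m)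
      (by rw [hI, mul_comm, pow_mul])
  choose u y huy using hpow
  obtain ⟨v, ⟨i, hi⟩, ζ, hζ, w, hprod⟩ := exists_prod_units_pow_eq_mul_pow p hι u
  have hrel : ∏ j, x j ^ v j = ζ * (w * ∏ j, y j ^ v j) ^ p :=
    calc ∏ j, x j ^ v j = ((∏ j, u j ^ v j : (𝓞 K)ˣ) : 𝓞 K) * (∏ j, y j ^ v j) ^ p := by
          push_cast
          rw [← Finset.prod_pow, ← Finset.prod_mul_distrib]
          exact Finset.prod_congr rfl fun j _ ↦ by rw [huy j]; ring
      _ = ζ * (w * ∏ j, y j ^ v j) ^ p := by rw [hprod]; push_cast; ring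
  have hζ1 : (ζ : 𝓞 K) ^ Units.torsionOrder K = 1 := by
    have hone : (⟨ζ, hζ⟩ : Units.torsion K) ^ Units.torsionOrder K = 1 := pow_card_eq_one'
    simpa using congrArg (fun z : Units.torsion K ↦ ((z : (𝓞 K)ˣ) : 𝓞 K)) hone
  obtain ⟨q, hq, φ, hpq, hone, horder⟩ :=
    hres p hp (dvd_mul_of_dvd_left (dvd_pow_self p e.succ_ne_zero) m) i
  refine hi (dvd_of_pow_eq_mul_pow (ζ := φ ζ) (y := φ (w * ∏ j, y j ^ v j)) hpq horder
    (by rw [← map_pow, hζ1, map_one]) ?_)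
  rw [← map_pow φ _ p, ← map_mul, ← hrel, map_prod, Fintype.prod_eq_single i, map_pow]
  exact fun j hj ↦ by rw [map_pow, hone j hj, one_pow]

end ClassNumberCriterion

section PadicRoots

open NumberField Polynomial

variable {K : Type*} [Field K] [NumberField K] {f : ℤ[X]} {θ : 𝓞 K}

namespace IsIntegralGenerator

lemma exists_ringHom_padicInt (h : IsIntegralGenerator f θ) {q : ℕ} [Fact q.Prime] {z : ℤ_[q]}
    (hz : aeval z f = 0) : ∃ Φ : 𝓞 K →+* ℤ_[q], Φ θ = z := by
  obtain ⟨pb, hpb⟩ := h.exists_powerBasis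
  have hroot : aeval (z : ℚ_[q]) (minpoly ℚ pb.gen) = 0 := by
    rw [hpb, h.minpoly_rat_eq, aeval_map_algebraMap]
    change aeval (algebraMap ℤ_[q] ℚ_[q] z) f = 0
    rw [aeval_algebraMap_apply, hz, map_zero]
  let ψ : K →ₐ[ℚ] ℚ_[q] := pb.lift (z : ℚ_[q]) hroot
  have hψ (x : 𝓞 K) : ψ x ∈ PadicInt.subring q := by
    have hx : IsIntegral ℤ_[q] (ψ x) := (map_isIntegral_int ψ x.isIntegral_coe).tower_top
    obtain ⟨y, hy⟩ := IsIntegrallyClosed.isIntegral_iff.1 hx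
    exact hy ▸ y.2
  refine ⟨(ψ.toRingHom.comp (algebraMap (𝓞 K) K)).codRestrict (PadicInt.subring q) hψ,
    Subtype.ext ?_⟩
  change ψ (θ : K) = z
  rw [← hpb]
  exact pb.lift_gen _ hroot

lemma exists_ringHom_zmod (h : IsIntegralGenerator f θ) {q : ℕ} [Fact q.Prime] {a : ℤ}
    (hroot : (q : ℤ) ∣ f.eval a) (hsimple : ¬(q : ℤ) ∣ f.derivative.eval a) :
    ∃ φ : 𝓞 K →+* ZMod q, φ θ = a := by
  have haeval (g : ℤ[X]) : aeval (a : ℤ_[q]) g = (g.eval a : ℤ) := by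
    simpa using aeval_algebraMap_apply ℤ_[q] a g
  have hderiv : ‖aeval (a : ℤ_[q]) f.derivative‖ = 1 := by
    rw [haeval]
    exact (PadicInt.norm_le_one _).antisymm
      (not_lt.1 ((PadicInt.norm_int_lt_one_iff_dvd _).not.2 hsimple))
  obtain ⟨z, hz, hza, -⟩ := hensels_lemma (F := f) (a := (a : ℤ_[q])) <| by
    rwa [hderiv, one_pow, haeval, PadicInt.norm_int_lt_one_iff_dvd]
  obtain ⟨Φ, hΦ⟩ := h.exists_ringHom_padicInt hz
  refine ⟨PadicInt.toZMod.comp Φ, ?_⟩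
  rw [RingHom.comp_apply, hΦ, ← sub_eq_zero, ← map_intCast (PadicInt.toZMod (p := q)) a,
    ← map_sub, ← RingHom.mem_ker, PadicInt.ker_toZMod, IsLocalRing.mem_maximalIdeal,
    PadicInt.mem_nonunits]
  rwa [hderiv] at hza

end IsIntegralGenerator

end PadicRoots

section Discriminant

open NumberField Polynomial Module

lemma norm_eval_derivative_le {F : ℂ[X]} (hF : F.Monic) {B : ℝ} (hB : ∀ z ∈ F.roots, ‖z‖ ≤ B)
    {z : ℂ} (hz : z ∈ F.roots) : ‖F.derivative.eval z‖ ≤ (2 * B) ^ (F.natDegree - 1) := by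
  classical
  have hsplits : F.Splits := IsAlgClosed.splits F
  have hcard : (F.roots.erase z).card = F.natDegree - 1 := by
    rw [Multiset.card_erase_of_mem hz, hsplits.natDegree_eq_card_roots, Nat.pred_eq_sub_one]
  rw [hsplits.eval_root_derivative hF hz, ← hcard, ← normHom_apply, map_multiset_prod,
    Multiset.map_map, ← Multiset.prod_replicate, ← Multiset.map_const']
  refine Multiset.prod_map_le_prod_map₀ _ _ (fun r _ ↦ norm_nonneg (z - r)) fun r hr ↦ ?_
  have hr' := hB r (Multiset.mem_of_mem_erase hr)
  exact (norm_sub_le z r).trans (by linarith [hB z hz])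

variable {K : Type*} [Field K] [NumberField K] {f : ℤ[X]} {θ : 𝓞 K}

namespace IsIntegralGenerator

lemma map_mem_aroots (h : IsIntegralGenerator f θ) (φ : K →+* ℂ) : φ θ ∈ f.aroots ℂ := by
  refine mem_aroots.2 ⟨h.monic.ne_zero, ?_⟩
  have hφ := aeval_algHom_apply (φ.comp (algebraMap (𝓞 K) K)).toIntAlgHom θ f
  rwa [h.aeval_eq_zero, map_zero] at hφ

lemma aeval_derivative_ne_zero (h : IsIntegralGenerator f θ) : aeval θ f.derivative ≠ 0 := by
  have hsep : (minpoly ℚ (θ : K)).Separable :=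
    (minpoly.irreducible (Algebra.IsIntegral.isIntegral _)).separable
  have hne := hsep.aeval_derivative_ne_zero (minpoly.aeval ℚ (θ : K))
  rw [h.minpoly_rat_eq, derivative_map, aeval_map_algebraMap] at hne
  rintro h0
  refine hne ?_
  rw [RingOfIntegers.coe_eq_algebraMap, aeval_algebraMap_apply, h0, map_zero]

lemma natAbs_discr_le_natAbs_norm (h : IsIntegralGenerator f θ) :
    (discr K).natAbs ≤ (Algebra.norm ℤ (aeval θ f.derivative)).natAbs := by
  have hmem : aeval θ (minpoly ℤ θ).derivative ∈ differentIdeal ℤ (𝓞 K) :=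
    aeval_derivative_mem_differentIdeal ℤ ℚ K θ <|
      Algebra.adjoin_eq_top_of_primitive_element (Algebra.IsAlgebraic.isAlgebraic _) h.adjoin_eq_top
  rw [← RingOfIntegers.minpoly_coe, h.minpoly_eq] at hmem
  rw [← absNorm_differentIdeal K (𝓞 K), ← Ideal.absNorm_span_singleton]
  refine Nat.le_of_dvd (Nat.pos_of_ne_zero ?_) <|
    Ideal.absNorm_dvd_absNorm_of_le ((Ideal.span_singleton_le_iff_mem _).2 hmem)
  rw [Ne, Ideal.absNorm_eq_zero_iff, Ideal.span_singleton_eq_bot]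
  exact h.aeval_derivative_ne_zero

lemma abs_discr_le (h : IsIntegralGenerator f θ) {B : ℝ}
    (hB : ∀ w : InfinitePlace K, w (θ : K) ≤ B) :
    |(discr K : ℝ)| ≤ (2 * B) ^ (finrank ℚ K * (finrank ℚ K - 1)) := by
  set x : 𝓞 K := aeval θ f.derivative
  have hplace (w : InfinitePlace K) : w (x : K) ≤ (2 * B) ^ (finrank ℚ K - 1) := by
    have hle := norm_eval_derivative_le (h.monic.map (algebraMap ℤ ℂ))
      (fun _ ↦ h.norm_le_of_mem_aroots hB) (h.map_mem_aroots w.embedding)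
    have hw := aeval_algHom_apply (w.embedding.comp (algebraMap (𝓞 K) K)).toIntAlgHom θ f.derivative
    rw [h.monic.natDegree_map, h.natDegree_eq, derivative_map, eval_map_algebraMap] at hle
    rw [← w.norm_embedding_eq]
    exact hw ▸ hle
  calc |(discr K : ℝ)| ≤ ((Algebra.norm ℤ x).natAbs : ℝ) := by
        rw [← Int.cast_abs, ← Nat.cast_natAbs]
        exact_mod_cast h.natAbs_discr_le_natAbs_norm
    _ = ∏ w : InfinitePlace K, w (x : K) ^ w.mult := by
        rw [InfinitePlace.prod_eq_abs_norm, ← Algebra.coe_norm_int, Nat.cast_natAbs]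
        simp
    _ ≤ ∏ w : InfinitePlace K, ((2 * B) ^ (finrank ℚ K - 1)) ^ w.mult :=
        Finset.prod_le_prod (fun _ _ ↦ by positivity) fun w _ ↦ by gcongr; exact hplace w
    _ = (2 * B) ^ (finrank ℚ K * (finrank ℚ K - 1)) := by
        rw [Finset.prod_pow_eq_pow_sum, InfinitePlace.sum_mult_eq, ← pow_mul,
          mul_comm (_ - 1)]

end IsIntegralGenerator

end Discriminant

section ShiftedProduct

open NumberField Polynomial Module

lemma norm_prod_sub_sub_pow_le {ι 𝕜 : Type*} [NormedField 𝕜] (z : 𝕜) {a : ι → 𝕜} {S : ℝ}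
    (ha : ∀ j, ‖a j‖ ≤ S) (s : Finset ι) :
    ‖∏ j ∈ s, (z - a j) - z ^ s.card‖ ≤ (‖z‖ + S) ^ s.card - ‖z‖ ^ s.card := by
  classical
  induction s using Finset.induction_on with
  | empty => simp
  | insert i s hi ih =>
    have hprod : ‖∏ j ∈ s, (z - a j)‖ ≤ (‖z‖ + S) ^ s.card := by
      rw [norm_prod, ← Finset.prod_const]
      exact Finset.prod_le_prod (fun _ _ ↦ norm_nonneg _) fun j _ ↦
        (norm_sub_le _ _).trans (by gcongr; exact ha j)
    have hS : 0 ≤ S := (norm_nonneg _).trans (ha i)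
    rw [Finset.prod_insert hi, Finset.card_insert_of_notMem hi]
    calc ‖(z - a i) * ∏ j ∈ s, (z - a j) - z ^ (s.card + 1)‖
        = ‖z * (∏ j ∈ s, (z - a j) - z ^ s.card) - a i * ∏ j ∈ s, (z - a j)‖ := by ring_nf
      _ ≤ ‖z‖ * ‖∏ j ∈ s, (z - a j) - z ^ s.card‖ + ‖a i‖ * ‖∏ j ∈ s, (z - a j)‖ := by
        rw [← norm_mul, ← norm_mul]
        exact norm_sub_le _ _
      _ ≤ ‖z‖ * ((‖z‖ + S) ^ s.card - ‖z‖ ^ s.card) + S * (‖z‖ + S) ^ s.card := by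
        gcongr
        exact ha i
      _ = (‖z‖ + S) ^ (s.card + 1) - ‖z‖ ^ (s.card + 1) := by ring

variable {ι : Type*} [Fintype ι]

/-- The polynomial `∏ j, (X - a j) + c`. Its root fields are the fields of the construction. -/
noncomputable def shiftedProd (a : ι → ℤ) (c : ℤ) : ℤ[X] := ∏ j, (X - C (a j)) + C c

@[simp]
lemma aeval_shiftedProd {R : Type*} [CommRing R] (a : ι → ℤ) (c : ℤ) (z : R) :
    aeval z (shiftedProd a c) = ∏ j, (z - (a j : R)) + c := by
  simp [shiftedProd, map_prod]

lemma natDegree_prod_X_sub_C (a : ι → ℤ) : (∏ j, (X - C (a j))).natDegree = Fintype.card ι := by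
  rw [natDegree_prod_of_monic _ _ fun j _ ↦ monic_X_sub_C (a j)]
  simp only [natDegree_X_sub_C, Finset.sum_const, Finset.card_univ, smul_eq_mul, mul_one]

section Nonempty

variable [Nonempty ι] (a : ι → ℤ) (c : ℤ)

lemma degree_C_lt_degree_prod_X_sub_C : (C c).degree < (∏ j, (X - C (a j))).degree :=
  degree_C_le.trans_lt <| natDegree_pos_iff_degree_pos.1 <| by
    rw [natDegree_prod_X_sub_C]
    exact Fintype.card_pos

lemma monic_shiftedProd : (shiftedProd a c).Monic :=
  (monic_prod_of_monic _ _ fun j _ ↦ monic_X_sub_C (a j)).add_of_left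
    (degree_C_lt_degree_prod_X_sub_C a c)

lemma natDegree_shiftedProd : (shiftedProd a c).natDegree = Fintype.card ι := by
  rw [shiftedProd, natDegree_add_eq_left_of_degree_lt (degree_C_lt_degree_prod_X_sub_C a c),
    natDegree_prod_X_sub_C]

end Nonempty

lemma norm_le_of_mem_aroots_shiftedProd [Nonempty ι] {a : ι → ℤ} {c : ℤ} {R S : ℝ} (hR : 0 < R)
    (hc : |(c : ℝ)| ≤ R ^ Fintype.card ι) (ha : ∀ j, |(a j : ℝ)| ≤ S) {z : ℂ}
    (hz : z ∈ (shiftedProd a c).aroots ℂ) : ‖z‖ ≤ R + S := by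
  by_contra! hlarge
  have hfactor (j : ι) : R < ‖z - a j‖ := by
    have htri := norm_sub_norm_le z (a j : ℂ)
    rw [Complex.norm_intCast] at htri
    linarith [ha j]
  have hprod : R ^ Fintype.card ι < ∏ j, ‖z - a j‖ := by
    simpa using Finset.prod_lt_prod_of_nonempty (fun _ _ ↦ hR) (fun j _ ↦ hfactor j)
      Finset.univ_nonempty
  have hroot := (mem_aroots.1 hz).2
  rw [aeval_shiftedProd] at hroot
  rw [← norm_prod, eq_neg_of_add_eq_zero_left hroot, norm_neg, Complex.norm_intCast] at hprod
  exact hprod.not_ge hc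

lemma abs_im_pow_natDegree_le_norm_eval {F : ℂ[X]} (hF : F.Monic)
    (hreal : ∀ r ∈ F.roots, r.im = 0) (z : ℂ) : |z.im| ^ F.natDegree ≤ ‖F.eval z‖ := by
  have hsplits : F.Splits := IsAlgClosed.splits F
  rw [hsplits.eval_eq_prod_roots_of_monic hF, hsplits.natDegree_eq_card_roots, ← normHom_apply,
    map_multiset_prod, Multiset.map_map, ← Multiset.prod_replicate, ← Multiset.map_const']
  refine Multiset.prod_map_le_prod_map₀ _ _ (fun _ _ ↦ abs_nonneg _) fun r hr ↦ ?_
  simpa [hreal r hr] using Complex.abs_im_le_norm (z - r)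

lemma norm_aeval_shiftedProd_le {a : ι → ℤ} {c : ℤ} {S : ℝ} (ha : ∀ j, |(a j : ℝ)| ≤ S) {z : ℂ}
    (hz : z ^ Fintype.card ι = -c) :
    ‖aeval z (shiftedProd a c)‖ ≤ (‖z‖ + S) ^ Fintype.card ι - ‖z‖ ^ Fintype.card ι := by
  have hle := norm_prod_sub_sub_pow_le z (a := fun j ↦ (a j : ℂ)) (S := S)
    (fun j ↦ by rw [Complex.norm_intCast]; exact ha j) Finset.univ
  rwa [Finset.card_univ, hz, sub_neg_eq_add, ← aeval_shiftedProd] at hle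

variable {K : Type*} [Field K] [NumberField K] {θ : 𝓞 K}

/- At `z = R * exp (π * I / n)` the polynomial `∏ j, (X - a j) + R ^ n` is small, because
`z ^ n + R ^ n = 0`, whereas a polynomial with real roots has absolute value at least
`|z.im| ^ n` there. -/
lemma not_isTotallyReal_of_shiftedProd [Nonempty ι] {a : ι → ℤ} {c : ℤ}
    (h : IsIntegralGenerator (shiftedProd a c) θ) {R S : ℝ} (hR : 0 ≤ R)
    (hc : R ^ Fintype.card ι = c) (ha : ∀ j, |(a j : ℝ)| ≤ S)
    (hS : (R + S) ^ Fintype.card ι - R ^ Fintype.card ι <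
      (R * Real.sin (Real.pi / Fintype.card ι)) ^ Fintype.card ι) :
    ¬IsTotallyReal K := by
  intro hK
  set n := Fintype.card ι
  have hn : 1 ≤ n := Fintype.card_pos
  set z : ℂ := R * Complex.exp ((Real.pi / n : ℝ) * Complex.I) with hz
  have hznorm : ‖z‖ = R := by
    rw [hz, norm_mul, Complex.norm_exp_ofReal_mul_I, Complex.norm_real, Real.norm_of_nonneg hR,
      mul_one]
  have hzpow : z ^ n = -c := by
    have hexp : (n : ℂ) * ((Real.pi / n : ℝ) * Complex.I) = Real.pi * Complex.I := by
      have hn0 : (n : ℂ) ≠ 0 := Nat.cast_ne_zero.2 (Nat.one_le_iff_ne_zero.1 hn)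
      push_cast
      field_simp
    rw [hz, mul_pow, ← Complex.exp_nat_mul, hexp, Complex.exp_pi_mul_I, ← Complex.ofReal_pow, hc]
    simp
  have hzim : |z.im| = R * Real.sin (Real.pi / n) := by
    rw [hz, Complex.im_ofReal_mul, Complex.exp_ofReal_mul_I_im, abs_of_nonneg]
    exact mul_nonneg hR (Real.sin_nonneg_of_nonneg_of_le_pi (by positivity)
      (div_le_self Real.pi_pos.le (by exact_mod_cast hn)))
  have hreal : ∀ r ∈ (shiftedProd a c).aroots ℂ, r.im = 0 := fun r hr ↦ by
    obtain ⟨φ, rfl⟩ := h.exists_embedding_eq_of_mem_aroots hr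
    exact Complex.conj_eq_iff_im.1
      (RingHom.congr_fun (IsTotallyReal.complexEmbedding_isReal φ) (θ : K))
  have hlower := abs_im_pow_natDegree_le_norm_eval
    ((monic_shiftedProd a c).map (algebraMap ℤ ℂ)) hreal z
  rw [eval_map_algebraMap, (monic_shiftedProd a c).natDegree_map, natDegree_shiftedProd,
    hzim] at hlower
  have hupper := norm_aeval_shiftedProd_le ha hzpow
  rw [hznorm] at hupper
  exact hS.not_ge (hlower.trans hupper)

lemma exists_span_sub_eq_pow {a : ι → ℤ} {t : ℤ} {ℓ : ℕ}
    (h : aeval θ (shiftedProd a (t ^ ℓ)) = 0)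
    (hcop : Pairwise fun i j ↦ IsCoprime t (a i - a j)) (i : ι) :
    ∃ I : Ideal (𝓞 K), Ideal.span {θ - (a i : 𝓞 K)} = I ^ ℓ := by
  have hroot : ∏ j, (θ - (a j : 𝓞 K)) = -(t : 𝓞 K) ^ ℓ := by
    rw [aeval_shiftedProd, Int.cast_pow] at h
    exact eq_neg_of_add_eq_zero_left h
  have hprod : ∏ j, Ideal.span {θ - (a j : 𝓞 K)} = Ideal.span {(t : 𝓞 K)} ^ ℓ := by
    rw [Ideal.prod_span_singleton, hroot, Ideal.span_singleton_pow, Ideal.span_singleton_neg]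
  refine Finset.exists_eq_pow_of_mul_eq_pow_of_coprime (fun j _ k _ hjk ↦ ?_) hprod i
    (Finset.mem_univ i)
  obtain ⟨u, v, huv⟩ : IsCoprime ((t : 𝓞 K) ^ ℓ) ((a j : 𝓞 K) - a k) := by
    simpa using (hcop hjk).pow_left (m := ℓ) |>.map (Int.castRingHom (𝓞 K))
  obtain ⟨d, hd⟩ : θ - (a j : 𝓞 K) ∣ (t : 𝓞 K) ^ ℓ := by
    rw [← dvd_neg, ← hroot]
    exact Finset.dvd_prod_of_mem _ (Finset.mem_univ j)
  rw [Ideal.isCoprime_span_singleton_iff]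
  exact ⟨u * d - v, v, by rw [← huv, hd]; ring⟩

end ShiftedProduct

section SeparatingPrimes

open NumberField Polynomial Module

lemma unitsRank_add_one_lt_finrank_of_not_isTotallyReal {K : Type*} [Field K] [NumberField K]
    (hK : ¬IsTotallyReal K) : Units.rank K + 1 < finrank ℚ K := by
  have hcomplex : InfinitePlace.nrComplexPlaces K ≠ 0 := fun h ↦
    hK (nrComplexPlaces_eq_zero_iff.1 h)
  have hsum := InfinitePlace.card_add_two_mul_card_eq_rank K
  have hcard := InfinitePlace.card_eq_nrRealPlaces_add_nrComplexPlaces K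
  rw [Units.rank]
  lia

variable {ι : Type*} [Fintype ι]

/-- A prime `q` at which `shiftedProd a c` has the simple root `0` and, for this root, the residues
`-a j` of `θ - a j` with `j ≠ j₀` are all `1`, except for `-a i`, which is a primitive root. Such a
prime shows that `θ - a i` is not a `p`-th power times the other `θ - a j`. -/
structure IsSeparatingPrime (a : ι → ℤ) (c : ℤ) (j₀ i : ι) (q : ℕ) : Prop where
  prime : q.Prime
  dvd_eval : (q : ℤ) ∣ (shiftedProd a c).eval 0
  not_dvd_eval_derivative : ¬(q : ℤ) ∣ (shiftedProd a c).derivative.eval 0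
  residue_eq_one : ∀ j ≠ i, j ≠ j₀ → ((-a j : ℤ) : ZMod q) = 1
  orderOf_residue : orderOf ((-a i : ℤ) : ZMod q) = q - 1

lemma dvd_classNumber_of_isSeparatingPrime {K : Type*} [Field K] [NumberField K] {θ : 𝓞 K}
    {a : ι → ℤ} {t : ℤ} {ℓ : ℕ} {j₀ : ι} (h : IsIntegralGenerator (shiftedProd a (t ^ ℓ)) θ)
    (ht : t ≠ 0) (hcop : Pairwise fun i j ↦ IsCoprime t (a i - a j)) (hK : ¬IsTotallyReal K)
    (hsep : ∀ p : ℕ, p.Prime → p ∣ ℓ → ∀ i ≠ j₀, ∃ q, p * (4 ^ Fintype.card ι).factorial ∣ q - 1 ∧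
      IsSeparatingPrime a (t ^ ℓ) j₀ i q) :
    ℓ ∣ classNumber K := by
  classical
  have : Nonempty ι := ⟨j₀⟩
  have hdeg : Fintype.card ι = finrank ℚ K := by rw [← h.natDegree_eq, natDegree_shiftedProd]
  have hrank := unitsRank_add_one_lt_finrank_of_not_isTotallyReal hK
  have hne (j : ι) : θ - (a j : 𝓞 K) ≠ 0 := by
    have hprod : ∏ j, (θ - (a j : 𝓞 K)) ≠ 0 := by
      have hroot := h.aeval_eq_zero
      rw [aeval_shiftedProd] at hroot
      rw [eq_neg_of_add_eq_zero_left hroot, neg_ne_zero, Int.cast_ne_zero]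
      exact pow_ne_zero ℓ ht
    exact Finset.prod_ne_zero_iff.1 hprod j (Finset.mem_univ j)
  refine dvd_classNumber_of_residues (ι := {j // j ≠ j₀}) (x := fun j ↦ θ - (a j : 𝓞 K))
    ?_ (fun j ↦ hne j) (fun j ↦ exists_span_sub_eq_pow h.aeval_eq_zero hcop j) ?_
  · rw [Fintype.card_subtype_compl, Fintype.card_subtype_eq]
    lia
  · rintro p hp hpℓ ⟨i, hi⟩
    obtain ⟨q, hpq, hq⟩ := hsep p hp hpℓ i hi
    have : Fact q.Prime := ⟨hq.prime⟩
    obtain ⟨φ, hφ⟩ := h.exists_ringHom_zmod hq.dvd_eval hq.not_dvd_eval_derivative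
    have hres (j : ι) : φ (θ - (a j : 𝓞 K)) = ((-a j : ℤ) : ZMod q) := by simp [hφ]
    refine ⟨q, ‹_›, φ, ?_, fun j hj ↦ ?_, ?_⟩
    · exact (mul_dvd_mul_left p (hdeg ▸ torsionOrder_dvd_factorial K)).trans hpq
    · rw [hres, hq.residue_eq_one j (fun hji ↦ hj (Subtype.ext hji)) j.2]
    · rw [hres, hq.orderOf_residue]

end SeparatingPrimes

section LocalSolvability

open Polynomial

variable {ι : Type*}

/-- The property `Q a c` holds on a residue class `a ≡ α`, `c ≡ 1` to some modulus, which can be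
chosen coprime to any given `N`. -/
def IsLocallySolvable (Q : (ι → ℤ) → ℤ → Prop) : Prop :=
  ∀ N : ℕ, N ≠ 0 → ∃ M : ℕ, M ≠ 0 ∧ M.Coprime N ∧ ∃ α : ι → ℤ, ∀ (a : ι → ℤ) (c : ℤ),
    (∀ j, a j ≡ α j [ZMOD M]) → c ≡ 1 [ZMOD M] → Q a c

namespace IsLocallySolvable

lemma and {Q₁ Q₂ : (ι → ℤ) → ℤ → Prop} (h₁ : IsLocallySolvable Q₁) (h₂ : IsLocallySolvable Q₂) :
    IsLocallySolvable fun a c ↦ Q₁ a c ∧ Q₂ a c := by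
  intro N hN
  obtain ⟨M₁, hM₁, hcop₁, α₁, hQ₁⟩ := h₁ N hN
  obtain ⟨M₂, hM₂, hcop₂, α₂, hQ₂⟩ := h₂ (N * M₁) (mul_ne_zero hN hM₁)
  obtain ⟨u, v, huv⟩ : IsCoprime (M₁ : ℤ) M₂ :=
    Nat.isCoprime_iff_coprime.2 hcop₂.coprime_mul_left_right.symm
  let α : ι → ℤ := fun j ↦ α₂ j * (u * M₁) + α₁ j * (v * M₂)
  have hα₁ (j) : α j ≡ α₁ j [ZMOD M₁] :=
    Int.modEq_iff_dvd.2 ⟨u * (α₁ j - α₂ j), by linear_combination (-α₁ j) * huv⟩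
  have hα₂ (j) : α j ≡ α₂ j [ZMOD M₂] :=
    Int.modEq_iff_dvd.2 ⟨v * (α₂ j - α₁ j), by linear_combination (-α₂ j) * huv⟩
  refine ⟨M₁ * M₂, mul_ne_zero hM₁ hM₂, hcop₁.mul_left hcop₂.coprime_mul_right_right, α,
    fun a c ha hc ↦ ?_⟩
  push_cast at ha hc
  exact ⟨hQ₁ a c (fun j ↦ ((ha j).of_mul_right _).trans (hα₁ j)) (hc.of_mul_right _),
    hQ₂ a c (fun j ↦ ((ha j).of_mul_left _).trans (hα₂ j)) (hc.of_mul_left _)⟩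

lemma forall_mem_finset {κ : Type*} (s : Finset κ) {Q : κ → (ι → ℤ) → ℤ → Prop}
    (h : ∀ x ∈ s, IsLocallySolvable (Q x)) : IsLocallySolvable fun a c ↦ ∀ x ∈ s, Q x a c := by
  classical
  induction s using Finset.induction_on with
  | empty => exact fun N _ ↦ ⟨1, one_ne_zero, Nat.coprime_one_left N, 0, by simp⟩
  | insert x s _ ih =>
    rw [Finset.forall_mem_insert] at h
    simpa only [Finset.forall_mem_insert] using h.1.and (ih h.2)

end IsLocallySolvable

lemma exists_prime_gt_and_coprime_and_dvd_sub_one {k N : ℕ} (hk : k ≠ 0) (hN : N ≠ 0) (B : ℕ) :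
    ∃ q, q.Prime ∧ B < q ∧ q.Coprime N ∧ k ∣ q - 1 := by
  obtain ⟨q, hq, hlarge, hmod⟩ := Nat.exists_prime_gt_modEq_one (B + N) hk
  exact ⟨q, hq, by lia, Nat.coprime_of_lt_prime hN (by lia) hq,
    (Nat.modEq_iff_dvd' hq.one_lt.le).1 hmod.symm⟩

lemma exists_orderOf_eq_and_add_inv_sub_ne_zero {q : ℕ} [Fact q.Prime] {k : ZMod q}
    (hk : 2 * k ≠ 0) :
    ∃ g : (ZMod q)ˣ, orderOf g = q - 1 ∧ k + (g⁻¹ : (ZMod q)ˣ) - g ≠ 0 := by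
  obtain ⟨g, hg⟩ := IsCyclic.exists_ofOrder_eq_natCard (α := (ZMod q)ˣ)
  rw [Nat.card_eq_fintype_card, ZMod.card_units] at hg
  by_contra! hzero
  have hg_zero := hzero g hg
  have hginv_zero := hzero g⁻¹ (by rw [orderOf_inv, hg])
  rw [inv_inv] at hginv_zero
  exact hk (by linear_combination hg_zero + hginv_zero)

variable [Fintype ι]

lemma eval_zero_shiftedProd (a : ι → ℤ) (c : ℤ) :
    (shiftedProd a c).eval 0 = ∏ j, (-a j) + c := by
  simp [shiftedProd, eval_prod]

lemma cast_eval_zero_derivative_shiftedProd {R : Type*} [CommRing R] {a : ι → ℤ} {b : ι → Rˣ}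
    (hb : ∀ j, ((-a j : ℤ) : R) = b j) (c : ℤ) :
    (((shiftedProd a c).derivative.eval 0 : ℤ) : R) =
      (∏ j, b j : Rˣ) * ∑ j, (((b j)⁻¹ : Rˣ) : R) := by
  classical
  rw [shiftedProd, derivative_add, derivative_C, add_zero, derivative_prod_finset, eval_finsetSum,
    Int.cast_sum, Finset.mul_sum]
  refine Finset.sum_congr rfl fun j _ ↦ ?_
  rw [derivative_X_sub_C, mul_one, eval_prod, Int.cast_prod, ← Units.val_mul,
    ← Finset.mul_prod_erase _ b (Finset.mem_univ j), mul_right_comm, mul_inv_cancel, one_mul,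
    Units.coe_prod]
  simp [← hb]

/- The residues of `-a j` are `g` at `i`, `-g⁻¹` at `j₀` and `1` elsewhere: their product is `-1`,
so that `0` is a root modulo `q`, and the derivative at `0` is minus the sum of their inverses. -/
lemma isSeparatingPrime_of_residues [DecidableEq ι] {a : ι → ℤ} {c : ℤ} {i j₀ : ι} (hi : i ≠ j₀)
    {q : ℕ} [Fact q.Prime] {g : (ZMod q)ˣ} (hg : orderOf g = q - 1)
    (hsimple : ((Fintype.card ι : ZMod q) - 2) + (g⁻¹ : (ZMod q)ˣ) - g ≠ 0)
    {b : ι → (ZMod q)ˣ} (hb : b = Pi.mulSingle i g * Pi.mulSingle j₀ (-g⁻¹))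
    (ha : ∀ j, ((-a j : ℤ) : ZMod q) = b j) (hc : (c : ZMod q) = 1) :
    IsSeparatingPrime a c j₀ i q := by
  have hbi : b i = g := by
    rw [hb, Pi.mul_apply, Pi.mulSingle_eq_same, Pi.mulSingle_eq_of_ne hi, mul_one]
  have hbj₀ : b j₀ = -g⁻¹ := by
    rw [hb, Pi.mul_apply, Pi.mulSingle_eq_same, Pi.mulSingle_eq_of_ne hi.symm, one_mul]
  have hb1 {j : ι} (hji : j ≠ i) (hjj₀ : j ≠ j₀) : b j = 1 := by
    rw [hb, Pi.mul_apply, Pi.mulSingle_eq_of_ne hji, Pi.mulSingle_eq_of_ne hjj₀, one_mul]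
  have hprod : ∏ j, b j = -1 := by
    simp only [hb, Pi.mul_apply, Finset.prod_mul_distrib, Finset.prod_pi_mulSingle',
      Finset.mem_univ, if_true, mul_neg, mul_inv_cancel]
  have hsum : ∑ j, (((b j)⁻¹ : (ZMod q)ˣ) : ZMod q) =
      ((Fintype.card ι : ZMod q) - 2) + (g⁻¹ : (ZMod q)ˣ) - g := by
    have hinv (j : ι) : (((b j)⁻¹ : (ZMod q)ˣ) : ZMod q) =
        1 + (if j = i then ((g⁻¹ : (ZMod q)ˣ) : ZMod q) - 1 else 0) +
          (if j = j₀ then -(g : ZMod q) - 1 else 0) := by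
      rcases eq_or_ne j i with rfl | hji
      · rw [hbi, if_pos rfl, if_neg hi]
        ring
      rcases eq_or_ne j j₀ with rfl | hjj₀
      · simp [hbj₀, hji, inv_neg]
      · simp [hb1 hji hjj₀, hji, hjj₀]
    simp only [hinv, Finset.sum_add_distrib, Finset.sum_ite_eq', Finset.mem_univ, if_true,
      Finset.sum_const, Finset.card_univ, nsmul_eq_mul, mul_one]
    ring
  refine ⟨Fact.out, ?_, ?_, fun j hji hjj₀ ↦ ?_, ?_⟩
  · rw [← ZMod.intCast_zmod_eq_zero_iff_dvd, eval_zero_shiftedProd, Int.cast_add, Int.cast_prod,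
      hc, Finset.prod_congr rfl fun j _ ↦ ha j, ← Units.coe_prod, hprod]
    simp
  · rw [← ZMod.intCast_zmod_eq_zero_iff_dvd, cast_eval_zero_derivative_shiftedProd ha, hprod, hsum]
    rwa [Units.val_neg, Units.val_one, neg_one_mul, neg_eq_zero]
  · rw [ha, hb1 hji hjj₀, Units.val_one]
  · rw [ha, hbi, orderOf_units, hg]

lemma isLocallySolvable_exists_isSeparatingPrime (hι : 3 ≤ Fintype.card ι) {k : ℕ} (hk : k ≠ 0)
    {i j₀ : ι} (hi : i ≠ j₀) :
    IsLocallySolvable fun a c ↦ ∃ q, k ∣ q - 1 ∧ IsSeparatingPrime a c j₀ i q := by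
  classical
  intro N hN
  obtain ⟨q, hq, hlarge, hcop, hkq⟩ :=
    exists_prime_gt_and_coprime_and_dvd_sub_one hk hN (2 * Fintype.card ι)
  have : Fact q.Prime := ⟨hq⟩
  have hcard : 2 * ((Fintype.card ι : ZMod q) - 2) ≠ 0 := by
    have hndvd : ¬q ∣ 2 * (Fintype.card ι - 2) := Nat.not_dvd_of_pos_of_lt (by lia) (by lia)
    rw [← ZMod.natCast_eq_zero_iff] at hndvd
    simpa [Nat.cast_sub (show 2 ≤ Fintype.card ι by lia)] using hndvd
  obtain ⟨g, hg, hsimple⟩ := exists_orderOf_eq_and_add_inv_sub_ne_zero hcard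
  let b : ι → (ZMod q)ˣ := Pi.mulSingle i g * Pi.mulSingle j₀ (-g⁻¹)
  refine ⟨q, hq.ne_zero, hcop, fun j ↦ -(b j : ZMod q).val,
    fun a c ha hc ↦ ⟨q, hkq, isSeparatingPrime_of_residues (b := b) hi hg hsimple rfl ?_ ?_⟩⟩
  · intro j
    rw [Int.cast_neg, (ZMod.intCast_eq_intCast_iff _ _ _).2 (ha j), Int.cast_neg, neg_neg,
      Int.cast_natCast, ZMod.natCast_zmod_val]
  · simpa using (ZMod.intCast_eq_intCast_iff _ _ _).2 hc

lemma exists_injective_prod_X_sub_C_eq_X_pow_sub_one [Nonempty ι] {q : ℕ} [Fact q.Prime]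
    (hdvd : Fintype.card ι ∣ q - 1) :
    ∃ r : ι → ZMod q, r.Injective ∧ ∏ j, (X - C (r j)) = X ^ Fintype.card ι - 1 := by
  obtain ⟨g, hg⟩ := IsCyclic.exists_ofOrder_eq_natCard (α := (ZMod q)ˣ)
  rw [Nat.card_eq_fintype_card, ZMod.card_units, ← orderOf_units] at hg
  obtain ⟨k, hk⟩ := hdvd
  have hζ : IsPrimitiveRoot ((g : ZMod q) ^ k) (Fintype.card ι) :=
    (hg ▸ IsPrimitiveRoot.orderOf (g : ZMod q)).pow
      (Nat.sub_pos_of_lt (Fact.out : q.Prime).one_lt) (hk.trans (mul_comm _ _))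
  let e : ι ≃ nthRootsFinset (Fintype.card ι) (1 : ZMod q) :=
    Fintype.equivOfCardEq (by rw [Fintype.card_coe, hζ.card_nthRootsFinset])
  refine ⟨fun j ↦ e j, Subtype.val_injective.comp e.injective, ?_⟩
  rw [X_pow_sub_one_eq_prod Fintype.card_pos hζ,
    ← Finset.prod_coe_sort (nthRootsFinset (Fintype.card ι) (1 : ZMod q))]
  exact Fintype.prod_equiv e _ _ fun _ ↦ rfl

lemma exists_lift_not_sq_dvd_prod_neg_add [Nonempty ι] {q : ℕ} [Fact q.Prime] {r : ι → ZMod q}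
    (hr : ∀ j, r j ≠ 0) (c : ℤ) :
    ∃ α : ι → ℤ, (∀ j, (α j : ZMod q) = r j) ∧ ¬(q : ℤ) ^ 2 ∣ ∏ j, (-α j) + c := by
  classical
  obtain ⟨j₀⟩ := ‹Nonempty ι›
  set α : ι → ℤ := fun j ↦ (r j).val with hα_def
  have hα (j) : (α j : ZMod q) = r j := by simp [hα_def]
  by_cases hsq : (q : ℤ) ^ 2 ∣ ∏ j, (-α j) + c
  · -- Changing one of the lifts by `q` changes the product by `q` times a unit modulo `q`.
    set P := ∏ j ∈ Finset.univ.erase j₀, (-α j) with hP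
    have hP_ndvd : ¬(q : ℤ) ∣ P := by
      rw [← ZMod.intCast_zmod_eq_zero_iff_dvd, hP, Int.cast_prod, Finset.prod_eq_zero_iff]
      rintro ⟨j, -, hj⟩
      exact hr j (by rwa [Int.cast_neg, hα, neg_eq_zero] at hj)
    refine ⟨Function.update α j₀ (α j₀ - q), fun j ↦ ?_, fun hsq' ↦ hP_ndvd ?_⟩
    · rcases eq_or_ne j j₀ with rfl | hj <;> simp [*]
    · have hprod := Finset.mul_prod_erase Finset.univ (fun j ↦ -α j) (Finset.mem_univ j₀)
      have hprod' := Finset.mul_prod_erase Finset.univ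
        (fun j ↦ -Function.update α j₀ (α j₀ - q) j) (Finset.mem_univ j₀)
      rw [Finset.prod_congr rfl fun j hj ↦ by
        rw [Function.update_of_ne (Finset.ne_of_mem_erase hj)], Function.update_self] at hprod'
      have hq : (q : ℤ) ≠ 0 := by exact_mod_cast (Fact.out : q.Prime).ne_zero
      refine Int.dvd_of_mul_dvd_mul_left hq ?_
      rw [← sq, show (q : ℤ) * P = -(α j₀ - q) * P - -α j₀ * P by ring, hprod, hprod']
      simpa using dvd_sub hsq' hsq
  · exact ⟨α, hα, hsq⟩

lemma irreducible_of_map_eq_X_pow {q : ℕ} [Fact q.Prime] {f : ℤ[X]} (hf : f.Monic)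
    (hdeg : 0 < f.natDegree) (hmap : f.map (Int.castRingHom (ZMod q)) = X ^ f.natDegree)
    (hsq : ¬(q : ℤ) ^ 2 ∣ f.eval 0) : Irreducible f := by
  have hq : (Ideal.span {(q : ℤ)}).IsPrime :=
    (Ideal.span_singleton_prime (by exact_mod_cast (Fact.out : q.Prime).ne_zero)).2
      (Nat.prime_iff_prime_int.1 Fact.out)
  refine IsEisensteinAt.irreducible ⟨?_, fun {k} hk ↦ ?_, ?_⟩ hq hf.isPrimitive hdeg
  · rw [hf.leadingCoeff]
    exact fun hone ↦ hq.ne_top ((Ideal.eq_top_iff_one _).2 hone)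
  · rw [Ideal.mem_span_singleton, ← ZMod.intCast_zmod_eq_zero_iff_dvd, ← eq_intCast
      (Int.castRingHom (ZMod q)), ← coeff_map, hmap, coeff_X_pow, if_neg hk.ne]
  · rwa [Ideal.span_singleton_pow, Ideal.mem_span_singleton, coeff_zero_eq_eval_zero]

lemma isLocallySolvable_irreducible_and_injective [Nonempty ι] :
    IsLocallySolvable fun (a : ι → ℤ) c ↦ Irreducible (shiftedProd a c) ∧ a.Injective := by
  intro N hN
  obtain ⟨q, hq, -, hcop, hdvd⟩ :=
    exists_prime_gt_and_coprime_and_dvd_sub_one (k := Fintype.card ι) Fintype.card_ne_zero hN 0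
  have : Fact q.Prime := ⟨hq⟩
  obtain ⟨r, hr, hprod⟩ := exists_injective_prod_X_sub_C_eq_X_pow_sub_one hdvd
  have hr0 (j : ι) : r j ≠ 0 := fun hj ↦ by
    have heval := congrArg (eval 0) hprod
    rw [eval_prod, Finset.prod_eq_zero (Finset.mem_univ j) (by simp [hj])] at heval
    simp at heval
  obtain ⟨α, hα, hsq⟩ := exists_lift_not_sq_dvd_prod_neg_add hr0 1
  refine ⟨q ^ 2, pow_ne_zero 2 hq.ne_zero, hcop.pow_left 2, α, fun a c ha hc ↦ ?_⟩
  push_cast at ha hc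
  have hqq : (q : ℤ) ∣ (q : ℤ) ^ 2 := dvd_pow_self _ two_ne_zero
  have har (j : ι) : (a j : ZMod q) = r j := by
    rw [← hα j]
    exact (ZMod.intCast_eq_intCast_iff _ _ _).2 ((ha j).of_dvd hqq)
  have hc1 : (c : ZMod q) = 1 := by
    simpa using (ZMod.intCast_eq_intCast_iff _ _ _).2 (hc.of_dvd hqq)
  refine ⟨irreducible_of_map_eq_X_pow (q := q) (monic_shiftedProd a c) ?_ ?_ fun hdvd ↦ hsq ?_,
    fun i j hij ↦ hr ?_⟩
  · exact natDegree_shiftedProd a c ▸ Fintype.card_pos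
  · rw [natDegree_shiftedProd, shiftedProd, Polynomial.map_add, map_C, eq_intCast, hc1, C_1,
      ← eq_sub_iff_add_eq, ← hprod]
    simp [Polynomial.map_prod, ← har]
  · rw [eval_zero_shiftedProd] at hdvd
    have hmod : ∏ j, (-a j) + c ≡ ∏ j, (-α j) + 1 [ZMOD (q : ℤ) ^ 2] :=
      (Int.ModEq.prod fun j _ ↦ (ha j).neg).add hc
    exact hmod.dvd_iff.1 hdvd
  · rw [← har, ← har, hij]

end LocalSolvability

section AdmissibleClasses

open NumberField Polynomial

variable {ι : Type*} [Fintype ι]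

/-- A residue class `α` modulo `M`, given by its representatives in `[0, M)`, such that for all
`a ≡ α` and `t ≡ 1` modulo `M` the polynomial `shiftedProd a (t ^ ℓ)` is irreducible and has the
separating primes required by `dvd_classNumber_of_isSeparatingPrime`. -/
structure IsAdmissibleClass (ℓ M : ℕ) (j₀ : ι) (α : ι → ℤ) : Prop where
  modulus_pos : 0 < M
  mem_Ico : ∀ j, α j ∈ Set.Ico 0 (M : ℤ)
  eq_of_modEq : ∀ i j, α i ≡ α j [ZMOD M] → i = j
  irreducible : ∀ (a : ι → ℤ) (t : ℤ), (∀ j, a j ≡ α j [ZMOD M]) → t ≡ 1 [ZMOD M] →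
    Irreducible (shiftedProd a (t ^ ℓ))
  exists_isSeparatingPrime : ∀ (a : ι → ℤ) (t : ℤ), (∀ j, a j ≡ α j [ZMOD M]) → t ≡ 1 [ZMOD M] →
    ∀ p : ℕ, p.Prime → p ∣ ℓ → ∀ i ≠ j₀, ∃ q, p * (4 ^ Fintype.card ι).factorial ∣ q - 1 ∧
      IsSeparatingPrime a (t ^ ℓ) j₀ i q

lemma exists_isAdmissibleClass (hι : 3 ≤ Fintype.card ι) {ℓ k : ℕ} (hℓ : ℓ ≠ 0) (hk : k ≠ 0)
    (j₀ : ι) : ∃ M α, k ∣ M ∧ IsAdmissibleClass ℓ M j₀ α := by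
  classical
  have : Nonempty ι := ⟨j₀⟩
  obtain ⟨M, hM, -, α, H⟩ := isLocallySolvable_irreducible_and_injective (ι := ι).and
    (.forall_mem_finset (ℓ.primeFactors ×ˢ Finset.univ.filter (· ≠ j₀)) fun x hx ↦ by
      simp only [Finset.mem_product, Nat.mem_primeFactors, Finset.mem_filter] at hx
      exact isLocallySolvable_exists_isSeparatingPrime hι
        (mul_ne_zero hx.1.1.ne_zero (Nat.factorial_ne_zero (4 ^ Fintype.card ι))) hx.2.2)
    1 one_ne_zero
  have hM' : (0 : ℤ) < M := by exact_mod_cast Nat.pos_of_ne_zero hM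
  have hdvd : (M : ℤ) ∣ (M * k : ℕ) := by exact_mod_cast Dvd.intro k rfl
  have hmod (j : ι) : α j % (M : ℤ) ≡ α j [ZMOD M] := Int.mod_modEq _ _
  have hclass (a : ι → ℤ) (t : ℤ) (ha : ∀ j, a j ≡ α j % M [ZMOD (M * k : ℕ)])
      (ht : t ≡ 1 [ZMOD (M * k : ℕ)]) :=
    H a (t ^ ℓ) (fun j ↦ ((ha j).of_dvd hdvd).trans (hmod j)) (by
      simpa using (ht.of_dvd hdvd).pow ℓ)
  refine ⟨M * k, fun j ↦ α j % M, Dvd.intro_left M rfl, by positivity, fun j ↦ ?_,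
    fun i j hij ↦ ?_, fun a t ha ht ↦ (hclass a t ha ht).1.1, fun a t ha ht p hp hpℓ i hi ↦
      (hclass a t ha ht).2 (p, i) ?_⟩
  · exact ⟨Int.emod_nonneg _ hM'.ne', (Int.emod_lt_of_pos _ hM').trans_le
      (by exact_mod_cast Nat.le_mul_of_pos_right M (Nat.pos_of_ne_zero hk))⟩
  · by_contra hne
    have hij' : α j ≡ α i [ZMOD M] := (hmod j).symm.trans ((hij.of_dvd hdvd).symm.trans (hmod i))
    -- If `α i ≡ α j`, then the class contains a tuple with equal entries at `i` and `j`.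
    refine hne ((H (Function.update α i (α j)) 1 (fun k ↦ ?_) rfl).1.2 ?_)
    · rcases eq_or_ne k i with rfl | hk
      · rwa [Function.update_self]
      · rw [Function.update_of_ne hk]
    · rw [Function.update_self, Function.update_of_ne (Ne.symm hne)]
  · simpa [hp, hpℓ, hℓ] using hi

end AdmissibleClasses

section FieldsFromPolynomials

open NumberField Polynomial Module

variable {K L : Type*} [Field K] [Field L]

lemma exists_minpoly_eq_and_forall_infinitePlace_le_of_ringEquiv (e : K ≃+* L) {θ : 𝓞 K} {B : ℝ}
    (hB : ∀ w : InfinitePlace K, w (θ : K) ≤ B) :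
    ∃ η : 𝓞 L, minpoly ℤ (η : L) = minpoly ℤ (θ : K) ∧ ∀ w : InfinitePlace L, w (η : L) ≤ B :=
  ⟨RingOfIntegers.mapRingEquiv e θ, minpoly.algEquiv_eq e.toIntAlgEquiv (θ : K),
    fun w ↦ hB (w.comap e.toRingHom)⟩

variable (K) in
lemma card_le_of_forall_exists_minpoly_eq [NumberField K] {B : ℝ} (hB : 0 ≤ B) {s : Finset ℤ[X]}
    (h : ∀ f ∈ s, ∃ θ : 𝓞 K, minpoly ℤ (θ : K) = f ∧ ∀ w : InfinitePlace K, w (θ : K) ≤ B) :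
    (s.card : ℝ) ≤ (2 * (B + 1) + 1) ^ finrank ℚ K := by
  classical
  choose! θ hθ hw using h
  have hinj : Set.InjOn θ s := fun f hf g hg hfg ↦ by rw [← hθ f hf, ← hθ g hg, hfg]
  rw [← Finset.card_image_of_injOn hinj]
  refine card_le_of_forall_infinitePlace_lt (B := ⟨B + 1, by positivity⟩) fun x hx w ↦ ?_
  obtain ⟨f, hf, rfl⟩ := Finset.mem_image.1 hx
  exact (hw f hf w).trans_lt (lt_add_one B)

lemma card_le_fcardDvd_mul {n ℓ : ℕ} {X B : ℝ} (hB : 0 ≤ B) {s : Finset ℤ[X]}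
    (h : ∀ f ∈ s, ∃ F ∈ NumberFieldSetDvd n ℓ X, ∃ (_ : FiniteDimensional ℚ F) (θ : 𝓞 F),
      minpoly ℤ (θ : F) = f ∧ ∀ w : InfinitePlace F, w (θ : F) ≤ B) :
    (s.card : ℝ) ≤ FcardDvd n ℓ X * (2 * (B + 1) + 1) ^ n := by
  classical
  have := Fintype.ofFinite (Quotient (isoSetoid (NumberFieldSetDvd n ℓ X)))
  choose F hF _ θ hθ hw using fun f : s ↦ h f f.2
  let isoClass (f : s) : Quotient (isoSetoid (NumberFieldSetDvd n ℓ X)) :=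
    Quotient.mk _ ⟨F f, hF f⟩
  have hfiber (c) (_ : c ∈ Finset.univ) :
      (s.attach.filter (isoClass · = c)).card ≤ ⌊(2 * (B + 1) + 1) ^ n⌋₊ := by
    obtain ⟨⟨L, hL⟩, rfl⟩ := Quotient.exists_rep c
    obtain ⟨hLfin, hLn, -⟩ := id hL
    have hcard := card_le_of_forall_exists_minpoly_eq L hB
      (s := (s.attach.filter (isoClass · = Quotient.mk _ ⟨L, hL⟩)).image (↑)) fun f hf ↦ by
        obtain ⟨f, hfc, rfl⟩ := Finset.mem_image.1 hf
        obtain ⟨e⟩ := Quotient.exact (Finset.mem_filter.1 hfc).2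
        obtain ⟨η, hη, hηw⟩ :=
          exists_minpoly_eq_and_forall_infinitePlace_le_of_ringEquiv e (hw f)
        exact ⟨η, hη.trans (hθ f), hηw⟩
    rw [Finset.card_image_of_injective _ Subtype.val_injective, hLn] at hcard
    exact Nat.le_floor hcard
  have hcard := Finset.card_le_mul_card_image_of_maps_to
    (fun f _ ↦ Finset.mem_univ (isoClass f)) _ hfiber
  rw [Finset.card_attach, Finset.card_univ, ← Nat.card_eq_fintype_card, ← FcardDvd, mul_comm]
    at hcard
  calc (s.card : ℝ) ≤ FcardDvd n ℓ X * ⌊(2 * (B + 1) + 1) ^ n⌋₊ := by exact_mod_cast hcard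
    _ ≤ FcardDvd n ℓ X * (2 * (B + 1) + 1) ^ n := by
        gcongr; exact Nat.floor_le (by positivity)

end FieldsFromPolynomials

section DivisorBound

lemma exists_add_one_pow_le_mul_two_pow (r : ℕ) :
    ∃ C : ℕ, C ≠ 0 ∧ ∀ k : ℕ, (k + 1) ^ r ≤ C * 2 ^ k := by
  obtain ⟨B, hB⟩ :=
    (tendsto_pow_const_div_const_pow_of_one_lt r (one_lt_two (α := ℝ))).bddAbove_range
  obtain ⟨C, hC⟩ := exists_nat_ge (2 * B)
  refine ⟨C + 1, C.succ_ne_zero, fun k ↦ ?_⟩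
  have hk : ((k + 1 : ℕ) : ℝ) ^ r ≤ B * 2 ^ (k + 1) :=
    (div_le_iff₀ (by positivity)).1 (hB ⟨k + 1, rfl⟩)
  have : ((k + 1 : ℕ) : ℝ) ^ r ≤ (C + 1) * 2 ^ k := by
    rw [pow_succ', ← mul_assoc, mul_comm B] at hk
    exact hk.trans (by gcongr; linarith)
  exact_mod_cast this

/- Only the primes below `2 ^ r` contribute more than the corresponding factor of `m`. -/
lemma exists_card_divisors_pow_le (r : ℕ) :
    ∃ C : ℕ, C ≠ 0 ∧ ∀ m ≠ 0, m.divisors.card ^ r ≤ C * m := by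
  obtain ⟨C, hC, hpow⟩ := exists_add_one_pow_le_mul_two_pow r
  refine ⟨C ^ 2 ^ r, pow_ne_zero _ hC, fun m hm ↦ ?_⟩
  have hfactor (p : ℕ) (hp : p ∈ m.primeFactors) : (m.factorization p + 1) ^ r ≤
      (if p < 2 ^ r then C else 1) * p ^ m.factorization p := by
    have hp2 := (Nat.prime_of_mem_primeFactors hp).two_le
    split_ifs with hpr
    · exact (hpow _).trans (by gcongr)
    · calc (m.factorization p + 1) ^ r ≤ (2 ^ m.factorization p) ^ r := by
            gcongr; exact Nat.lt_two_pow_self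
        _ = (2 ^ r) ^ m.factorization p := pow_right_comm 2 _ _
        _ ≤ 1 * p ^ m.factorization p := by rw [one_mul]; gcongr; exact not_lt.1 hpr
  have hsmall : (m.primeFactors.filter (· < 2 ^ r)).card ≤ 2 ^ r := by
    simpa using Finset.card_le_card fun p hp ↦
      Finset.mem_range.2 (Finset.mem_filter.1 hp).2
  calc m.divisors.card ^ r = ∏ p ∈ m.primeFactors, (m.factorization p + 1) ^ r := by
        rw [Nat.card_divisors hm, Finset.prod_pow]
    _ ≤ ∏ p ∈ m.primeFactors, (if p < 2 ^ r then C else 1) * p ^ m.factorization p :=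
        Finset.prod_le_prod' hfactor
    _ = C ^ (m.primeFactors.filter (· < 2 ^ r)).card * m := by
        rw [Finset.prod_mul_distrib, Finset.prod_ite, Finset.prod_const, Finset.prod_const_one,
          mul_one, ← Nat.prod_factorization_eq_prod_primeFactors,
          Nat.prod_factorization_pow_eq_self hm]
    _ ≤ C ^ 2 ^ r * m := by gcongr; exact Nat.one_le_iff_ne_zero.2 hC

lemma eventually_mul_card_divisors_pow_le (A B k r : ℕ) :
    ∀ᶠ u : ℕ in Filter.atTop, ∀ m ≠ 0, m ≤ B * u ^ k → A * m.divisors.card ^ r ≤ u := by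
  obtain ⟨C, -, hC⟩ := exists_card_divisors_pow_le (r * (k + 1))
  filter_upwards [Filter.eventually_ge_atTop (A ^ (k + 1) * (C * B))] with u hu m hm hmu
  refine (Nat.pow_le_pow_iff_left k.succ_ne_zero).1 ?_
  calc (A * m.divisors.card ^ r) ^ (k + 1) = A ^ (k + 1) * m.divisors.card ^ (r * (k + 1)) := by
        rw [mul_pow, ← pow_mul]
    _ ≤ A ^ (k + 1) * (C * (B * u ^ k)) := by grw [hC m hm, hmu]
    _ = A ^ (k + 1) * (C * B) * u ^ k := by ring
    _ ≤ u ^ (k + 1) := by grw [hu, pow_succ']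

end DivisorBound

section Progressions

variable {b : ℤ} {M N : ℕ}

/-- The first `N` terms `b, b + M, b + 2 M, …` of an arithmetic progression. -/
def progression (b : ℤ) (M N : ℕ) : Finset ℤ :=
  (Finset.range N).image fun k : ℕ ↦ b + M * k

lemma card_progression (hM : M ≠ 0) (b : ℤ) (N : ℕ) : (progression b M N).card = N := by
  rw [progression, Finset.card_image_of_injective, Finset.card_range]
  intro k k' h
  simpa [hM] using h

lemma modEq_of_mem_progression {x : ℤ} (hx : x ∈ progression b M N) : x ≡ b [ZMOD M] := by
  obtain ⟨k, -, rfl⟩ := Finset.mem_image.1 hx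
  simp [Int.ModEq]

lemma mem_Icc_of_mem_progression {x : ℤ} (hx : x ∈ progression b M N) :
    x ∈ Set.Icc b (b + M * N - M) := by
  obtain ⟨k, hk, rfl⟩ := Finset.mem_image.1 hx
  have hk : (k : ℤ) + 1 ≤ N := by exact_mod_cast Finset.mem_range.1 hk
  constructor <;> nlinarith

lemma card_filter_dvd_sub_progression_le {w : ℕ} (hw : w.Coprime M) (b y : ℤ) (N : ℕ) :
    ((progression b M N).filter ((w : ℤ) ∣ · - y)).card ≤ N / w + 1 := by
  rw [progression, Finset.filter_image]
  refine Finset.card_image_le.trans ?_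
  rw [← Finset.card_range (N / w + 1)]
  refine Finset.card_le_card_of_injOn (· / w) (fun k hk ↦ ?_) fun k hk k' hk' hdiv ↦ ?_
  · have hkN : k < N := by simpa using (Finset.mem_filter.1 hk).1
    simpa [Nat.lt_succ_iff] using Nat.div_le_div_right hkN.le
  · have hdvd := dvd_sub (Finset.mem_filter.1 hk).2 (Finset.mem_filter.1 hk').2
    rw [show b + M * (k : ℤ) - y - (b + M * (k' : ℤ) - y) = M * ((k : ℤ) - k') by ring] at hdvd
    have hmod : k' ≡ k [MOD w] :=
      Nat.modEq_iff_dvd.2 ((Nat.isCoprime_iff_coprime.2 hw).dvd_of_dvd_mul_left hdvd)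
    rw [← Nat.div_add_mod k w, ← Nat.div_add_mod k' w, hmod, show k / w = k' / w from hdiv]

end Progressions

section CountingTuples

variable {ι β : Type*} [Fintype ι]

lemma card_filter_piFinset_le [DecidableEq ι] {s : ι → Finset β} {i : ι} {P : (ι → β) → Prop}
    [DecidablePred P] {k : ℕ}
    (hk : ∀ a, ((s i).filter fun x ↦ P (Function.update a i x)).card ≤ k) :
    ((Fintype.piFinset s).filter P).card ≤ (∏ j ∈ Finset.univ.erase i, (s j).card) * k := by
  classical
  set J := Finset.univ.erase i
  have hcard : (Fintype.piFinset fun j : J ↦ s j).card = ∏ j ∈ J, (s j).card := by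
    rw [Fintype.card_piFinset, Finset.prod_coe_sort J fun j ↦ (s j).card]
  rw [← hcard, mul_comm]
  refine Finset.card_le_mul_card_image_of_maps_to (f := J.restrict) (fun a ha ↦ ?_) k fun c _ ↦ ?_
  · exact Fintype.mem_piFinset.2 fun j ↦ Fintype.mem_piFinset.1 (Finset.mem_filter.1 ha).1 j
  · rcases Finset.eq_empty_or_nonempty (((Fintype.piFinset s).filter P).filter
      (J.restrict · = c)) with hempty | ⟨a₀, ha₀⟩
    · simp [hempty]
    have hupdate {a : ι → β} (ha : J.restrict a = c) : Function.update a₀ i (a i) = a := by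
      refine Function.update_eq_iff.2 ⟨rfl, fun j hj ↦ ?_⟩
      exact congrFun ((Finset.mem_filter.1 ha₀).2.trans ha.symm)
        ⟨j, Finset.mem_erase.2 ⟨hj, Finset.mem_univ j⟩⟩
    refine (Finset.card_le_card_of_injOn (· i) (fun a ha ↦ ?_) fun a ha a' ha' h ↦ ?_).trans
      (hk a₀)
    · simp only [Finset.coe_filter, Finset.mem_filter, Fintype.mem_piFinset,
        Set.mem_ofPred_eq] at ha ⊢
      rw [hupdate ha.2]
      exact ⟨ha.1.1 i, ha.1.2⟩
    · rw [← hupdate (Finset.mem_filter.1 ha).2, ← hupdate (Finset.mem_filter.1 ha').2]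
      exact congrArg (Function.update a₀ i) h

lemma card_le_of_forall_prod_sub_eq {s : Finset (ι → ℤ)} {x c : ℤ} (hc : c ≠ 0)
    (hs : ∀ a ∈ s, ∏ j, (x - a j) = c) :
    s.card ≤ (2 * c.natAbs.divisors.card) ^ Fintype.card ι := by
  classical
  set D : Finset ℤ := c.natAbs.divisors.image (fun d : ℕ ↦ (d : ℤ)) ∪
    c.natAbs.divisors.image (fun d : ℕ ↦ -(d : ℤ))
  have hDcard : D.card ≤ 2 * c.natAbs.divisors.card := by
    rw [two_mul]
    exact (Finset.card_union_le _ _).trans (add_le_add Finset.card_image_le Finset.card_image_le)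
  calc s.card ≤ (Fintype.piFinset fun _ : ι ↦ D).card := by
        refine Finset.card_le_card_of_injOn (fun a j ↦ x - a j) (fun a ha ↦ ?_)
          fun a _ a' _ h ↦ funext fun j ↦ sub_right_injective (congrFun h j)
        refine Finset.mem_coe.2 (Fintype.mem_piFinset.2 fun j ↦ ?_)
        have hdvd : (x - a j).natAbs ∈ c.natAbs.divisors := Nat.mem_divisors.2
          ⟨Int.natAbs_dvd_natAbs.2 (hs a ha ▸ Finset.dvd_prod_of_mem _ (Finset.mem_univ j)),
            Int.natAbs_ne_zero.2 hc⟩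
        rcases Int.natAbs_eq (x - a j) with hj | hj
        · exact Finset.mem_union_left _ (Finset.mem_image.2 ⟨_, hdvd, hj.symm⟩)
        · exact Finset.mem_union_right _ (Finset.mem_image.2 ⟨_, hdvd, hj.symm⟩)
    _ = D.card ^ Fintype.card ι := by simp
    _ ≤ (2 * c.natAbs.divisors.card) ^ Fintype.card ι := by gcongr

end CountingTuples

section ParameterBox

open Polynomial

variable {ι : Type*} [Fintype ι] {ℓ M S T : ℕ} {j₀ : ι} {α : ι → ℤ} {x : (ι → ℤ) × ℤ}

/-- The polynomial `∏ j, (X - a j) + t ^ ℓ` attached to a pair of parameters `(a, t)`. -/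
noncomputable def parameterPoly (ℓ : ℕ) (x : (ι → ℤ) × ℤ) : ℤ[X] :=
  shiftedProd x.1 (x.2 ^ ℓ)

open scoped Classical in
/-- The pairs `(a, t)` with `a ≡ α` and `t ≡ 1` modulo `M`, where each entry of `a` runs through `S`
consecutive terms of its residue class, starting from `α j`, and `t` runs through `T` consecutive
terms, starting from `1 + M T`. -/
noncomputable def parameterBox (α : ι → ℤ) (M S T : ℕ) : Finset ((ι → ℤ) × ℤ) :=
  Fintype.piFinset (fun j ↦ progression (α j) M S) ×ˢ progression (1 + M * T) M T

lemma mem_parameterBox : x ∈ parameterBox α M S T ↔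
    (∀ j, x.1 j ∈ progression (α j) M S) ∧ x.2 ∈ progression (1 + M * T) M T := by
  classical rw [parameterBox, Finset.mem_product, Fintype.mem_piFinset]

lemma card_parameterBox (hM : M ≠ 0) (α : ι → ℤ) (S T : ℕ) :
    (parameterBox α M S T).card = S ^ Fintype.card ι * T := by
  simp [parameterBox, card_progression hM]

lemma fst_mem_Ico_of_mem_parameterBox (hα : ∀ j, α j ∈ Set.Ico 0 (M : ℤ))
    (hx : x ∈ parameterBox α M S T) (j : ι) : x.1 j ∈ Set.Ico 0 (M * S : ℤ) := by
  have hxj := mem_Icc_of_mem_progression ((mem_parameterBox.1 hx).1 j)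
  exact ⟨(hα j).1.trans hxj.1, hxj.2.trans_lt (by linarith [(hα j).2])⟩

lemma mem_Ioc_of_mem_progression (hM : 0 < M) {t : ℤ} (ht : t ∈ progression (1 + M * T) M T) :
    t ∈ Set.Ioc (M * T : ℤ) (2 * M * T : ℕ) := by
  have ht' := mem_Icc_of_mem_progression ht
  have hM' : (1 : ℤ) ≤ M := by exact_mod_cast hM
  push_cast
  exact ⟨by linarith [ht'.1], by linarith [ht'.2, hM']⟩

section Coprimality

lemma exists_prime_dvd_of_not_isCoprime (h : IsAdmissibleClass ℓ M j₀ α) {w₀ : ℕ}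
    (hw₀ : w₀.factorial ∣ M) (hx : x ∈ parameterBox α M S T) {i j : ι} (hij : i ≠ j)
    (hcop : ¬IsCoprime x.2 (x.1 i - x.1 j)) :
    ∃ w ∈ Finset.Ioc w₀ (M * S), w.Coprime M ∧ (w : ℤ) ∣ x.2 ∧ (w : ℤ) ∣ x.1 i - x.1 j := by
  obtain ⟨w, hw, hdvd⟩ := Nat.exists_prime_and_dvd (mt Int.isCoprime_iff_gcd_eq_one.2 hcop)
  have hdvd' := Int.natCast_dvd_natCast.2 hdvd
  have hwt : (w : ℤ) ∣ x.2 := hdvd'.trans (Int.gcd_dvd_left _ _)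
  have hwa : (w : ℤ) ∣ x.1 i - x.1 j := hdvd'.trans (Int.gcd_dvd_right _ _)
  obtain ⟨hxa, hxt⟩ := mem_parameterBox.1 hx
  have hwM : ¬w ∣ M := fun hwM ↦ by
    have hmod : x.2 ≡ 1 [ZMOD M] := (modEq_of_mem_progression hxt).trans (by simp [Int.ModEq])
    have hone : (w : ℤ) ∣ 1 :=
      (hmod.of_dvd (Int.natCast_dvd_natCast.2 hwM)).dvd_iff.1 hwt
    exact hw.one_lt.ne' (Nat.dvd_one.1 (by exact_mod_cast hone))
  have hne : x.1 i - x.1 j ≠ 0 := fun hzero ↦ hij (h.eq_of_modEq i j (by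
    have hmod := modEq_of_mem_progression (hxa i)
    rw [sub_eq_zero.1 hzero] at hmod
    exact hmod.symm.trans (modEq_of_mem_progression (hxa j))))
  have hle : (w : ℤ) ≤ M * S := by
    have hxi := fst_mem_Ico_of_mem_parameterBox h.mem_Ico hx i
    have hxj := fst_mem_Ico_of_mem_parameterBox h.mem_Ico hx j
    refine (Int.le_of_dvd (abs_pos.2 hne) ((dvd_abs _ _).2 hwa)).trans (abs_le.2 ⟨?_, ?_⟩)
    · linarith [hxi.1, hxj.2]
    · linarith [hxi.2, hxj.1]
  refine ⟨w, Finset.mem_Ioc.2 ⟨?_, by exact_mod_cast hle⟩, hw.coprime_iff_not_dvd.2 hwM, hwt, hwa⟩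
  by_contra! hww₀
  exact hwM ((hw.dvd_factorial.2 hww₀).trans hw₀)

lemma card_filter_dvd_parameterBox_le (hM : M ≠ 0) {i j : ι} (hij : i ≠ j) {w : ℕ}
    (hw : w.Coprime M) :
    ((parameterBox α M S T).filter fun x ↦ (w : ℤ) ∣ x.2 ∧ (w : ℤ) ∣ x.1 i - x.1 j).card ≤
      S ^ (Fintype.card ι - 1) * ((S / w + 1) * (T / w + 1)) := by
  classical
  have htuples := card_filter_piFinset_le (s := fun j ↦ progression (α j) M S) (i := i)
    (P := fun a ↦ (w : ℤ) ∣ a i - a j) (k := S / w + 1) fun a ↦ by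
      simpa [Function.update_of_ne hij.symm] using
        card_filter_dvd_sub_progression_le hw (α i) (a j) S
  have hscalars := card_filter_dvd_sub_progression_le hw (1 + M * T) 0 T
  simp only [card_progression hM, Finset.prod_const, Finset.card_erase_of_mem (Finset.mem_univ i),
    Finset.card_univ] at htuples
  simp only [sub_zero] at hscalars
  calc _ = (((Fintype.piFinset fun j ↦ progression (α j) M S).filter
          fun a ↦ (w : ℤ) ∣ a i - a j) ×ˢ
          (progression (1 + M * T) M T).filter ((w : ℤ) ∣ ·)).card := by
        rw [← Finset.filter_product, parameterBox]
        congr! 2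
        exact and_comm
    _ ≤ S ^ (Fintype.card ι - 1) * ((S / w + 1) * (T / w + 1)) := by
        rw [Finset.card_product, ← mul_assoc]
        exact Nat.mul_le_mul htuples hscalars

open scoped Classical in
lemma card_filter_not_pairwise_isCoprime_le (h : IsAdmissibleClass ℓ M j₀ α) {w₀ : ℕ}
    (hw₀ : w₀.factorial ∣ M) (S T : ℕ) :
    ((parameterBox α M S T).filter
      fun x ↦ ¬Pairwise fun i j ↦ IsCoprime x.2 (x.1 i - x.1 j)).card ≤
      Fintype.card ι ^ 2 * S ^ (Fintype.card ι - 1) *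
        ∑ w ∈ Finset.Ioc w₀ (M * S), (S / w + 1) * (T / w + 1) := by
  set B := parameterBox α M S T
  set pairs := (Finset.univ : Finset (ι × ι)).filter fun p ↦ p.1 ≠ p.2
  set primes := (Finset.Ioc w₀ (M * S)).filter (Nat.Coprime · M)
  have hsub : (B.filter fun x ↦ ¬Pairwise fun i j ↦ IsCoprime x.2 (x.1 i - x.1 j)) ⊆
      (pairs ×ˢ primes).biUnion fun y ↦
        B.filter fun x ↦ (y.2 : ℤ) ∣ x.2 ∧ (y.2 : ℤ) ∣ x.1 y.1.1 - x.1 y.1.2 := by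
    intro x hx
    obtain ⟨hxB, hcop⟩ := Finset.mem_filter.1 hx
    simp only [Pairwise, not_forall] at hcop
    obtain ⟨i, j, hij, hcop⟩ := hcop
    obtain ⟨w, hw, hwM, hdvd⟩ := exists_prime_dvd_of_not_isCoprime h hw₀ hxB hij hcop
    refine Finset.mem_biUnion.2 ⟨((i, j), w), Finset.mem_product.2 ⟨?_, ?_⟩, ?_⟩
    · exact Finset.mem_filter.2 ⟨Finset.mem_univ _, hij⟩
    · exact Finset.mem_filter.2 ⟨hw, hwM⟩
    · exact Finset.mem_filter.2 ⟨hxB, hdvd⟩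
  calc _ ≤ ∑ y ∈ pairs ×ˢ primes,
          S ^ (Fintype.card ι - 1) * ((S / y.2 + 1) * (T / y.2 + 1)) := by
        refine (Finset.card_le_card hsub).trans (Finset.card_biUnion_le.trans
          (Finset.sum_le_sum fun y hy ↦ ?_))
        obtain ⟨hpair, hprime⟩ := Finset.mem_product.1 hy
        exact card_filter_dvd_parameterBox_le h.modulus_pos.ne' (Finset.mem_filter.1 hpair).2
          (Finset.mem_filter.1 hprime).2
    _ ≤ ∑ y ∈ Finset.univ ×ˢ Finset.Ioc w₀ (M * S),
          S ^ (Fintype.card ι - 1) * ((S / y.2 + 1) * (T / y.2 + 1)) :=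
        Finset.sum_le_sum_of_subset
          (Finset.product_subset_product (Finset.filter_subset _ _) (Finset.filter_subset _ _))
    _ = _ := by
        simp only [Finset.sum_product, Finset.sum_const, Finset.card_univ, Fintype.card_prod,
          smul_eq_mul, ← Finset.mul_sum]
        ring

end Coprimality

section Collisions

lemma eq_of_parameterPoly_eq {y : (ι → ℤ) × ℤ} (hα : ∀ i j, α i ≡ α j [ZMOD M] → i = j)
    (hx : x ∈ parameterBox α M S T) (hy : y ∈ parameterBox α M S T)
    (hpoly : parameterPoly ℓ x = parameterPoly ℓ y) (ht : x.2 = y.2) : x = y := by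
  refine Prod.ext (funext fun i ↦ ?_) ht
  have hxa := (mem_parameterBox.1 hx).1
  have hya := (mem_parameterBox.1 hy).1
  have hroot : (∏ j, (X - C (x.1 j)) : ℤ[X]).eval (y.1 i) = 0 := by
    rw [parameterPoly, parameterPoly, shiftedProd, shiftedProd, ht] at hpoly
    rw [add_right_cancel hpoly, eval_prod]
    exact Finset.prod_eq_zero (Finset.mem_univ i) (by simp)
  rw [eval_prod, Finset.prod_eq_zero_iff] at hroot
  obtain ⟨k, -, hk⟩ := hroot
  have hk : y.1 i = x.1 k := by simpa [sub_eq_zero] using hk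
  have hik : i = k := hα i k ((modEq_of_mem_progression (hya i)).symm.trans
    (hk ▸ modEq_of_mem_progression (hxa k)))
  rw [hk, hik]

lemma prod_sub_eq_of_parameterPoly_eq {y : (ι → ℤ) × ℤ}
    (hpoly : parameterPoly ℓ x = parameterPoly ℓ y) (i : ι) :
    ∏ j, (y.1 i - x.1 j) = y.2 ^ ℓ - x.2 ^ ℓ := by
  have heval := congrArg (eval (y.1 i)) hpoly
  simp only [parameterPoly, shiftedProd, eval_add, eval_prod, eval_sub, eval_X, eval_C] at heval
  rw [Finset.prod_eq_zero (f := fun j ↦ y.1 i - y.1 j) (Finset.mem_univ i) (sub_self _),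
    zero_add] at heval
  rw [← heval, add_sub_cancel_right]

lemma natAbs_pow_sub_pow_ne_zero_and_le {N s t : ℤ} {K : ℕ} (hℓ : ℓ ≠ 0) (hN : 0 ≤ N)
    (hs : s ∈ Set.Ioc N K) (ht : t ∈ Set.Ioc N K) (hst : s ≠ t) :
    (t ^ ℓ - s ^ ℓ).natAbs ≠ 0 ∧ (t ^ ℓ - s ^ ℓ).natAbs ≤ K ^ ℓ := by
  have hs0 : 0 ≤ s := hN.trans hs.1.le
  have ht0 : 0 ≤ t := hN.trans ht.1.le
  refine ⟨Int.natAbs_ne_zero.2 (sub_ne_zero.2 fun h ↦ hst ((pow_left_inj₀ hs0 ht0 hℓ).1 h.symm)),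
    ?_⟩
  zify
  rw [abs_le]
  have hsK := pow_le_pow_left₀ hs0 hs.2 ℓ
  have htK := pow_le_pow_left₀ ht0 ht.2 ℓ
  constructor <;> linarith [pow_nonneg hs0 ℓ, pow_nonneg ht0 ℓ]

lemma card_filter_prod_sub_eq_le (B : Finset ((ι → ℤ) × ℤ)) (t v : ℤ) {c : ℤ} (hc : c ≠ 0) :
    (B.filter fun x ↦ x.2 = t ∧ ∏ j, (v - x.1 j) = c).card ≤
      (2 * c.natAbs.divisors.card) ^ Fintype.card ι := by
  classical
  rw [← Finset.card_image_of_injOn (f := Prod.fst) fun x hx y hy h ↦ Prod.ext h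
    ((Finset.mem_filter.1 hx).2.1.trans (Finset.mem_filter.1 hy).2.1.symm)]
  refine card_le_of_forall_prod_sub_eq (x := v) hc fun a ha ↦ ?_
  obtain ⟨x, hx, rfl⟩ := Finset.mem_image.1 ha
  exact (Finset.mem_filter.1 hx).2.2

open scoped Classical in
/- Evaluating at `y.1 i`, an equality `parameterPoly ℓ x = parameterPoly ℓ y` writes
`y.2 ^ ℓ - x.2 ^ ℓ` as a product of `card ι` divisors, so `x` is determined by `x.2`, `y.2`, `y.1 i`
and these divisors. -/
lemma card_filter_exists_parameterPoly_eq_le (hM : 0 < M) (hℓ : ℓ ≠ 0) (i : ι) {E : ℕ}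
    (hE : ∀ m ≠ 0, m ≤ (2 * M * T) ^ ℓ → (2 * m.divisors.card) ^ Fintype.card ι ≤ E) :
    ((parameterBox α M S T).filter fun x ↦ ∃ y ∈ parameterBox α M S T,
      x.2 ≠ y.2 ∧ parameterPoly ℓ x = parameterPoly ℓ y).card ≤ T * T * S * E := by
  set B := parameterBox α M S T
  set scalars := progression (1 + M * T) M T
  set data := (scalars ×ˢ scalars) ×ˢ progression (α i) M S
  have hsub : (B.filter fun x ↦ ∃ y ∈ B, x.2 ≠ y.2 ∧ parameterPoly ℓ x = parameterPoly ℓ y) ⊆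
      (data.filter fun d ↦ d.1.1 ≠ d.1.2).biUnion fun d ↦
        B.filter fun x ↦ x.2 = d.1.1 ∧ ∏ j, (d.2 - x.1 j) = d.1.2 ^ ℓ - d.1.1 ^ ℓ := by
    intro x hx
    obtain ⟨hxB, y, hyB, ht, hpoly⟩ := Finset.mem_filter.1 hx
    obtain ⟨-, hxt⟩ := mem_parameterBox.1 hxB
    obtain ⟨hya, hyt⟩ := mem_parameterBox.1 hyB
    exact Finset.mem_biUnion.2 ⟨((x.2, y.2), y.1 i), Finset.mem_filter.2 ⟨Finset.mem_product.2
      ⟨Finset.mem_product.2 ⟨hxt, hyt⟩, hya i⟩, ht⟩, Finset.mem_filter.2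
      ⟨hxB, rfl, prod_sub_eq_of_parameterPoly_eq hpoly i⟩⟩
  have hfiber (d) (hd : d ∈ data.filter fun d ↦ d.1.1 ≠ d.1.2) : (B.filter fun x ↦
      x.2 = d.1.1 ∧ ∏ j, (d.2 - x.1 j) = d.1.2 ^ ℓ - d.1.1 ^ ℓ).card ≤ E := by
    obtain ⟨hd, hne⟩ := Finset.mem_filter.1 hd
    obtain ⟨hs, ht⟩ := Finset.mem_product.1 (Finset.mem_product.1 hd).1
    obtain ⟨hc, hcle⟩ := natAbs_pow_sub_pow_ne_zero_and_le (K := 2 * M * T) hℓ (by positivity)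
      (mem_Ioc_of_mem_progression hM hs) (mem_Ioc_of_mem_progression hM ht) hne
    exact (card_filter_prod_sub_eq_le B d.1.1 d.2 (Int.natAbs_ne_zero.1 hc)).trans (hE _ hc hcle)
  calc _ ≤ (data.filter fun d ↦ d.1.1 ≠ d.1.2).card * E :=
        (Finset.card_le_card hsub).trans (Finset.card_biUnion_le_card_mul _ _ _ hfiber)
    _ ≤ data.card * E := by gcongr; exact Finset.filter_subset _ _
    _ = T * T * S * E := by
        simp only [data, scalars, Finset.card_product, card_progression hM.ne']

end Collisions

end ParameterBox

section Sieve

open Polynomial Filter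

lemma sum_Ioc_div_add_one_mul_le {w₀ : ℕ} (hw₀ : w₀ ≠ 0) (S T W : ℕ) :
    ((∑ w ∈ Finset.Ioc w₀ W, (S / w + 1) * (T / w + 1) : ℕ) : ℝ) ≤
      S * T / w₀ + (S + T) * (1 + Real.log W) + W := by
  have hinv_sq : ∑ w ∈ Finset.Ioc w₀ W, ((w : ℝ) ^ 2)⁻¹ ≤ (w₀ : ℝ)⁻¹ := by
    rcases le_total w₀ W with h | h
    · exact (sum_Ioc_inv_sq_le_sub hw₀ h).trans (sub_le_self _ (by positivity))
    · simp [Finset.Ioc_eq_empty_of_le h]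
  have hinv : ∑ w ∈ Finset.Ioc w₀ W, (w : ℝ)⁻¹ ≤ 1 + Real.log W := by
    have hharmonic := harmonic_le_one_add_log W
    rw [harmonic_eq_sum_Icc] at hharmonic
    push_cast at hharmonic
    refine (Finset.sum_le_sum_of_subset_of_nonneg ?_ fun _ _ _ ↦ by positivity).trans hharmonic
    exact Finset.Ioc_subset_Icc_self.trans
      (Finset.Icc_subset_Icc_left (Nat.one_le_iff_ne_zero.2 hw₀))
  have hone : ∑ _w ∈ Finset.Ioc w₀ W, (1 : ℝ) ≤ W := by simp
  calc _ ≤ ∑ w ∈ Finset.Ioc w₀ W,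
          (S * T * ((w : ℝ) ^ 2)⁻¹ + (S + T) * (w : ℝ)⁻¹ + 1) := by
        push_cast
        refine Finset.sum_le_sum fun w _ ↦ ?_
        calc _ ≤ ((S : ℝ) / w + 1) * (T / w + 1) := by gcongr <;> exact Nat.cast_div_le
          _ = _ := by rw [← inv_pow]; ring
    _ = S * T * ∑ w ∈ Finset.Ioc w₀ W, ((w : ℝ) ^ 2)⁻¹ +
          (S + T) * ∑ w ∈ Finset.Ioc w₀ W, (w : ℝ)⁻¹ + ∑ _w ∈ Finset.Ioc w₀ W, (1 : ℝ) := by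
        simp only [Finset.sum_add_distrib, Finset.mul_sum]
    _ ≤ S * T * (w₀ : ℝ)⁻¹ + (S + T) * (1 + Real.log W) + W := by gcongr

lemma eventually_add_mul_log_le_mul {ε : ℝ} (hε : 0 < ε) (A B : ℝ) :
    ∀ᶠ u : ℕ in atTop, A + B * Real.log u ≤ ε * u := by
  have hlittle : (fun x : ℝ ↦ A + B * Real.log x) =o[atTop] (id : ℝ → ℝ) :=
    (Asymptotics.isLittleO_const_id_atTop A).add (Real.isLittleO_log_id_atTop.const_mul_left B)
  filter_upwards [tendsto_natCast_atTop_atTop.eventually (hlittle.bound hε)] with u hu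
  simpa using (le_abs_self _).trans hu

lemma eventually_add_mul_log_add_le {ε : ℝ} (hε : 0 < ε) {M ℓ : ℕ} (hM : M ≠ 0) (hℓ : ℓ ≠ 0) :
    ∀ᶠ u : ℕ in atTop, ∀ T : ℕ, u ≤ T →
      (u ^ ℓ + T) * (1 + Real.log (M * u ^ ℓ)) + M * u ^ ℓ ≤ ε * (u ^ ℓ * T) := by
  filter_upwards [eventually_add_mul_log_le_mul hε (2 * (1 + Real.log M) + M) (2 * ℓ),
    eventually_ge_atTop 1] with u hu hu₁ T hT
  have hupos : (0 : ℝ) < u := by exact_mod_cast hu₁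
  have huT : (u : ℝ) ≤ T := by exact_mod_cast hT
  have huS : (u : ℝ) ≤ u ^ ℓ := le_self_pow₀ (by exact_mod_cast hu₁) hℓ
  have hlog : Real.log (M * u ^ ℓ) = Real.log M + ℓ * Real.log u := by
    rw [Real.log_mul (by positivity) (by positivity), Real.log_pow]
  set L := 1 + Real.log (M * u ^ ℓ)
  have hL₀ : 0 ≤ L := by
    have : (1 : ℝ) ≤ M * u ^ ℓ := by exact_mod_cast Nat.mul_pos (by positivity) (by positivity)
    linarith [Real.log_nonneg this]
  refine le_of_mul_le_mul_left ?_ hupos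
  calc (u : ℝ) * ((u ^ ℓ + T) * L + M * u ^ ℓ)
      = u ^ ℓ * u * L + u * T * L + u ^ ℓ * u * M := by ring
    _ ≤ u ^ ℓ * T * L + u ^ ℓ * T * L + u ^ ℓ * T * M := by gcongr
    _ = u ^ ℓ * T * (2 * L + M) := by ring
    _ ≤ u ^ ℓ * T * (ε * u) := by gcongr; linarith [hlog]
    _ = u * (ε * (u ^ ℓ * T)) := by ring

variable {ι : Type*} [Fintype ι] {ℓ M : ℕ} {j₀ : ι} {α : ι → ℤ}

open scoped Classical in
lemma eventually_card_filter_not_pairwise_isCoprime_le (h : IsAdmissibleClass ℓ M j₀ α)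
    (hℓ : ℓ ≠ 0) (hw₀ : (4 * Fintype.card ι ^ 2).factorial ∣ M) :
    ∀ᶠ u : ℕ in atTop, ∀ T : ℕ, u ≤ T →
      2 * ((parameterBox α M (u ^ ℓ) T).filter
        fun x ↦ ¬Pairwise fun i j ↦ IsCoprime x.2 (x.1 i - x.1 j)).card ≤
        (parameterBox α M (u ^ ℓ) T).card := by
  have : Nonempty ι := ⟨j₀⟩
  set n := Fintype.card ι
  have hn : n ≠ 0 := Fintype.card_ne_zero
  filter_upwards [eventually_add_mul_log_add_le (ε := 1 / (4 * n ^ 2)) (by positivity)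
    h.modulus_pos.ne' hℓ] with u hu T hT
  set S := u ^ ℓ with hS
  have hS' : (S : ℝ) = (u : ℝ) ^ ℓ := by rw [hS, Nat.cast_pow]
  have hsum := sum_Ioc_div_add_one_mul_le (w₀ := 4 * n ^ 2) (by positivity) S T (M * S)
  have herror := hu T hT
  rw [← hS'] at herror
  push_cast at hsum
  have hbound : (n : ℝ) ^ 2 * ((∑ w ∈ Finset.Ioc (4 * n ^ 2) (M * S),
      (S / w + 1) * (T / w + 1) : ℕ) : ℝ) ≤ S * T / 2 := by
    calc _ ≤ (n : ℝ) ^ 2 * (S * T / (4 * n ^ 2) + 1 / (4 * n ^ 2) * (S * T)) := by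
          gcongr
          push_cast
          linarith
      _ = S * T / 2 := by field_simp; ring
  have hcard := card_filter_not_pairwise_isCoprime_le h hw₀ S T
  rw [card_parameterBox h.modulus_pos.ne']
  rify
  calc _ ≤ 2 * ((n ^ 2 * S ^ (n - 1) * ∑ w ∈ Finset.Ioc (4 * n ^ 2) (M * S),
          (S / w + 1) * (T / w + 1) : ℕ) : ℝ) := by gcongr
    _ = 2 * S ^ (n - 1) * (n ^ 2 * ((∑ w ∈ Finset.Ioc (4 * n ^ 2) (M * S),
          (S / w + 1) * (T / w + 1) : ℕ) : ℝ)) := by push_cast; ring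
    _ ≤ 2 * S ^ (n - 1) * (S * T / 2) := by gcongr
    _ = S ^ n * T := by rw [← pow_sub_one_mul hn]; ring

open scoped Classical in
lemma eventually_card_filter_exists_parameterPoly_eq_le (hι : 3 ≤ Fintype.card ι) (hℓ : 2 ≤ ℓ)
    (hM : 0 < M) (i : ι) {D : ℕ} (hD : D ≠ 0) :
    ∀ᶠ u : ℕ in atTop,
      4 * ((parameterBox α M (u ^ ℓ) ((D * u) ^ Fintype.card ι)).filter
        fun x ↦ ∃ y ∈ parameterBox α M (u ^ ℓ) ((D * u) ^ Fintype.card ι),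
          x.2 ≠ y.2 ∧ parameterPoly ℓ x = parameterPoly ℓ y).card ≤
        (parameterBox α M (u ^ ℓ) ((D * u) ^ Fintype.card ι)).card := by
  set n := Fintype.card ι
  filter_upwards [eventually_mul_card_divisors_pow_le (4 * D ^ n * 2 ^ n) ((2 * M * D ^ n) ^ ℓ)
    (n * ℓ) n, eventually_gt_atTop 0] with u hu hupos
  set T := (D * u) ^ n with hT
  set E := u / (4 * D ^ n)
  have hE (m : ℕ) (hm : m ≠ 0) (hle : m ≤ (2 * M * T) ^ ℓ) : (2 * m.divisors.card) ^ n ≤ E := by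
    rw [Nat.le_div_iff_mul_le (by positivity)]
    calc _ = 4 * D ^ n * 2 ^ n * m.divisors.card ^ n := by ring
      _ ≤ u := hu m hm (hle.trans_eq (by rw [hT]; ring))
  have hexp : ℓ + n + 1 ≤ ℓ * n := by nlinarith
  rw [card_parameterBox hM.ne']
  calc _ ≤ 4 * (T * T * u ^ ℓ * E) := by
        gcongr; exact card_filter_exists_parameterPoly_eq_le hM (by lia) i hE
    _ = (4 * D ^ n * E) * (u ^ n * u ^ ℓ) * T := by rw [hT, mul_pow]; ring
    _ ≤ u * (u ^ n * u ^ ℓ) * T := by gcongr; exact Nat.mul_div_le _ _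
    _ = u ^ (ℓ + n + 1) * T := by ring
    _ ≤ u ^ (ℓ * n) * T := by gcongr
    _ = (u ^ ℓ) ^ n * T := by rw [pow_mul]

end Sieve

section LargeClassNumber

open NumberField Polynomial Module Filter

variable {ι : Type*} [Fintype ι] {ℓ M : ℕ} {j₀ : ι} {α : ι → ℤ}

lemma IsAdmissibleClass.exists_mem_numberFieldSetDvd (h : IsAdmissibleClass ℓ M j₀ α)
    {a : ι → ℤ} {t : ℤ} (ha : ∀ j, a j ≡ α j [ZMOD M]) (ht : t ≡ 1 [ZMOD M]) (ht₀ : t ≠ 0)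
    (hcop : Pairwise fun i j ↦ IsCoprime t (a i - a j)) {R S B : ℝ} (hR : 0 < R)
    (hRt : R ^ Fintype.card ι = (t : ℝ) ^ ℓ) (haS : ∀ j, |(a j : ℝ)| ≤ S)
    (hS : (R + S) ^ Fintype.card ι - R ^ Fintype.card ι <
      (R * Real.sin (Real.pi / Fintype.card ι)) ^ Fintype.card ι) (hB : R + S ≤ B) :
    ∃ F ∈ NumberFieldSetDvd (Fintype.card ι) ℓ
        ((2 * B) ^ (Fintype.card ι * (Fintype.card ι - 1))),
      ∃ (_ : FiniteDimensional ℚ F) (θ : 𝓞 F),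
        minpoly ℤ (θ : F) = shiftedProd a (t ^ ℓ) ∧ ∀ w : InfinitePlace F, w (θ : F) ≤ B := by
  have : Nonempty ι := ⟨j₀⟩
  obtain ⟨F, hF, θ, hθ⟩ :=
    exists_isIntegralGenerator (monic_shiftedProd a (t ^ ℓ)) (h.irreducible a t ha ht)
  have hdeg : finrank ℚ F = Fintype.card ι := by rw [← hθ.natDegree_eq, natDegree_shiftedProd]
  have hplace (w : InfinitePlace F) : w (θ : F) ≤ B := by
    rw [← w.norm_embedding_eq]
    refine (norm_le_of_mem_aroots_shiftedProd hR ?_ haS (hθ.map_mem_aroots w.embedding)).trans hB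
    rw [Int.cast_pow, ← hRt, abs_of_pos (by positivity)]
  have hreal : ¬IsTotallyReal F :=
    not_isTotallyReal_of_shiftedProd hθ hR.le (by rw [hRt, Int.cast_pow]) haS hS
  refine ⟨F, ⟨hF, hdeg, ?_, ?_⟩, hF, θ, hθ.minpoly_eq, hplace⟩
  · simpa only [hdeg] using hθ.abs_discr_le hplace
  · exact dvd_classNumber_of_isSeparatingPrime hθ ht₀ hcop hreal
      (h.exists_isSeparatingPrime a t ha ht)

lemma exists_one_add_div_pow_sub_one_lt {n : ℕ} (hn : 2 ≤ n) (c : ℝ) :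
    ∃ D : ℕ, D ≠ 0 ∧ (1 + c / D) ^ n - 1 < Real.sin (Real.pi / n) ^ n := by
  have hsin : 0 < Real.sin (Real.pi / n) ^ n := by
    refine pow_pos (Real.sin_pos_of_pos_of_lt_pi (by positivity) ?_) n
    exact div_lt_self Real.pi_pos (by exact_mod_cast hn)
  have hlim : Tendsto (fun D : ℕ ↦ (1 + c / (D : ℝ)) ^ n - 1) atTop (nhds 0) := by
    simpa using (((tendsto_const_div_atTop_nhds_zero_nat c).const_add 1).pow n).sub_const 1
  exact ((eventually_ne_atTop 0).and (hlim.eventually_lt_const hsin)).exists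

lemma add_pow_sub_pow_lt_mul_pow {n : ℕ} {R S δ s : ℝ} (hR : 0 < R) (hS₀ : 0 ≤ S)
    (hS : S ≤ δ * R) (hδ : (1 + δ) ^ n - 1 < s ^ n) : (R + S) ^ n - R ^ n < (R * s) ^ n := by
  calc (R + S) ^ n - R ^ n ≤ (R * (1 + δ)) ^ n - R ^ n := by gcongr; linarith
    _ = R ^ n * ((1 + δ) ^ n - 1) := by rw [mul_pow]; ring
    _ < R ^ n * s ^ n := by gcongr
    _ = (R * s) ^ n := by rw [mul_pow]

lemma exists_pow_eq_pow_and_mem_Icc {n ℓ : ℕ} (hn : n ≠ 0) {t V c : ℝ} (hV : 0 ≤ V) (hc : 1 ≤ c)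
    (ht : t ∈ Set.Icc (V ^ n) (c * V ^ n)) :
    ∃ R : ℝ, R ^ n = t ^ ℓ ∧ R ∈ Set.Icc (V ^ ℓ) ((c * V) ^ ℓ) := by
  have ht₀ : 0 ≤ t := (pow_nonneg hV n).trans ht.1
  have hroot : (t ^ (n⁻¹ : ℝ)) ^ n = t := Real.rpow_inv_natCast_pow ht₀ hn
  refine ⟨(t ^ (n⁻¹ : ℝ)) ^ ℓ, by rw [pow_right_comm, hroot], ?_, ?_⟩
  · gcongr
    rw [← pow_le_pow_iff_left₀ hV (by positivity) hn, hroot]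
    exact ht.1
  · gcongr
    rw [← pow_le_pow_iff_left₀ (by positivity) (by positivity) hn, hroot, mul_pow]
    exact ht.2.trans (by gcongr; exact le_self_pow₀ hc hn)

lemma exists_mem_numberFieldSetDvd_of_mem_parameterBox (h : IsAdmissibleClass ℓ M j₀ α)
    (hℓ : ℓ ≠ 0) {D u : ℕ} (hD : D ≠ 0) (hu : u ≠ 0)
    (hDsin : (1 + (M : ℝ) / D) ^ Fintype.card ι - 1 <
      Real.sin (Real.pi / Fintype.card ι) ^ Fintype.card ι) {x : (ι → ℤ) × ℤ}
    (hx : x ∈ parameterBox α M (u ^ ℓ) ((D * u) ^ Fintype.card ι))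
    (hcop : Pairwise fun i j ↦ IsCoprime x.2 (x.1 i - x.1 j)) {B : ℝ}
    (hB : ((2 * M * D) ^ ℓ + M) * (u : ℝ) ^ ℓ ≤ B) :
    ∃ F ∈ NumberFieldSetDvd (Fintype.card ι) ℓ
        ((2 * B) ^ (Fintype.card ι * (Fintype.card ι - 1))),
      ∃ (_ : FiniteDimensional ℚ F) (θ : 𝓞 F),
        minpoly ℤ (θ : F) = parameterPoly ℓ x ∧ ∀ w : InfinitePlace F, w (θ : F) ≤ B := by
  have : Nonempty ι := ⟨j₀⟩
  set n := Fintype.card ι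
  have hn : n ≠ 0 := Fintype.card_ne_zero
  obtain ⟨hxa, hxt⟩ := mem_parameterBox.1 hx
  have hM : (1 : ℝ) ≤ M := by exact_mod_cast h.modulus_pos
  have htbounds := mem_Ioc_of_mem_progression h.modulus_pos hxt
  have htlower : (M : ℝ) * (D * u) ^ n < x.2 := by exact_mod_cast htbounds.1
  have htupper : (x.2 : ℝ) ≤ 2 * M * (D * u) ^ n := by exact_mod_cast htbounds.2
  have hV : (0 : ℝ) < (D * u) ^ n := by positivity
  obtain ⟨R, hRt, hRlower, hRupper⟩ := exists_pow_eq_pow_and_mem_Icc (ℓ := ℓ) (c := 2 * M) hn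
    (by positivity : (0 : ℝ) ≤ D * u) (by linarith)
    ⟨(le_mul_of_one_le_left hV.le hM).trans htlower.le, htupper⟩
  have hR : 0 < R := lt_of_lt_of_le (by positivity) hRlower
  have hDR : (D : ℝ) * u ^ ℓ ≤ R := by
    refine le_trans ?_ hRlower
    rw [mul_pow]
    gcongr
    exact le_self_pow₀ (by exact_mod_cast Nat.one_le_iff_ne_zero.2 hD) hℓ
  have hMR : (M : ℝ) * u ^ ℓ ≤ M / D * R := by
    rw [div_mul_eq_mul_div, le_div_iff₀ (by positivity)]
    calc (M : ℝ) * u ^ ℓ * D = M * (D * u ^ ℓ) := by ring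
      _ ≤ M * R := by gcongr
  refine h.exists_mem_numberFieldSetDvd (S := M * u ^ ℓ)
    (fun j ↦ modEq_of_mem_progression (hxa j))
    ((modEq_of_mem_progression hxt).trans (by simp [Int.ModEq])) ?_ hcop hR hRt (fun j ↦ ?_)
    (add_pow_sub_pow_lt_mul_pow hR (by positivity) hMR hDsin) (le_trans ?_ hB)
  · exact (lt_of_le_of_lt (by positivity) htbounds.1).ne'
  · obtain ⟨hlower, hupper⟩ := fst_mem_Ico_of_mem_parameterBox h.mem_Ico hx j
    rw [abs_of_nonneg (by exact_mod_cast hlower)]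
    exact_mod_cast hupper.le
  · calc R + M * u ^ ℓ ≤ (2 * M * (D * u)) ^ ℓ + M * u ^ ℓ := by gcongr
      _ = ((2 * M * D) ^ ℓ + M) * u ^ ℓ := by ring

end LargeClassNumber

section LowerBound

open NumberField Polynomial Module Filter

variable {ι : Type*} [Fintype ι] {ℓ M D S T : ℕ} {j₀ : ι} {α : ι → ℤ} {x : (ι → ℤ) × ℤ}

open scoped Classical in
/-- The pairs `(a, t)` in a given set for which `t` is coprime to every difference `a i - a j` and
`t` is determined, within the set, by the polynomial attached to `(a, t)`. -/
noncomputable def goodParameters (ℓ : ℕ) (s : Finset ((ι → ℤ) × ℤ)) : Finset ((ι → ℤ) × ℤ) :=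
  s.filter fun x ↦ (Pairwise fun i j ↦ IsCoprime x.2 (x.1 i - x.1 j)) ∧
    ∀ y ∈ s, parameterPoly ℓ x = parameterPoly ℓ y → x.2 = y.2

lemma mem_goodParameters {s : Finset ((ι → ℤ) × ℤ)} : x ∈ goodParameters ℓ s ↔
    x ∈ s ∧ (Pairwise fun i j ↦ IsCoprime x.2 (x.1 i - x.1 j)) ∧
      ∀ y ∈ s, parameterPoly ℓ x = parameterPoly ℓ y → x.2 = y.2 := by
  classical rw [goodParameters, Finset.mem_filter]

lemma injOn_parameterPoly_goodParameters (hα : ∀ i j, α i ≡ α j [ZMOD M] → i = j) :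
    Set.InjOn (parameterPoly ℓ) (goodParameters ℓ (parameterBox α M S T) : Set ((ι → ℤ) × ℤ)) := by
  intro x hx y hy hxy
  obtain ⟨hxbox, -, hdet⟩ := mem_goodParameters.1 hx
  have hybox := (mem_goodParameters.1 hy).1
  exact eq_of_parameterPoly_eq hα hxbox hybox hxy (hdet y hybox hxy)

lemma eventually_card_parameterBox_le (h : IsAdmissibleClass ℓ M j₀ α) (hι : 3 ≤ Fintype.card ι)
    (hℓ : 2 ≤ ℓ) (hw₀ : (4 * Fintype.card ι ^ 2).factorial ∣ M) (hD : D ≠ 0) :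
    ∀ᶠ u : ℕ in atTop, (parameterBox α M (u ^ ℓ) ((D * u) ^ Fintype.card ι)).card ≤
      4 * (goodParameters ℓ (parameterBox α M (u ^ ℓ) ((D * u) ^ Fintype.card ι))).card := by
  classical
  filter_upwards [eventually_card_filter_not_pairwise_isCoprime_le h (by lia) hw₀,
    eventually_card_filter_exists_parameterPoly_eq_le hι hℓ h.modulus_pos j₀ hD]
    with u hcop hcoll
  have huT : u ≤ (D * u) ^ Fintype.card ι :=
    (Nat.le_mul_of_pos_left u (Nat.pos_of_ne_zero hD)).trans (Nat.le_self_pow (by lia) _)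
  specialize hcop _ huT
  set box := parameterBox α M (u ^ ℓ) ((D * u) ^ Fintype.card ι)
  set noncoprime := box.filter fun x ↦ ¬Pairwise fun i j ↦ IsCoprime x.2 (x.1 i - x.1 j)
  set colliding := box.filter fun x ↦ ∃ y ∈ box,
    x.2 ≠ y.2 ∧ parameterPoly ℓ x = parameterPoly ℓ y
  have hcover : box ⊆ goodParameters ℓ box ∪ (noncoprime ∪ colliding) := fun x hx ↦ by
    simp only [noncoprime, colliding, Finset.mem_union, Finset.mem_filter, mem_goodParameters]
    grind
  have hcard := (Finset.card_le_card hcover).trans (Finset.card_union_le _ _)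
  have hcard' := Finset.card_union_le noncoprime colliding
  lia

lemma card_goodParameters_le (h : IsAdmissibleClass ℓ M j₀ α) (hℓ : ℓ ≠ 0) {u : ℕ} (hD : D ≠ 0)
    (hu : u ≠ 0) (hDsin : (1 + (M : ℝ) / D) ^ Fintype.card ι - 1 <
      Real.sin (Real.pi / Fintype.card ι) ^ Fintype.card ι)
    {B : ℝ} (hB : ((2 * M * D) ^ ℓ + M) * (u : ℝ) ^ ℓ ≤ B) :
    ((goodParameters ℓ (parameterBox α M (u ^ ℓ) ((D * u) ^ Fintype.card ι))).card : ℝ) ≤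
      FcardDvd (Fintype.card ι) ℓ ((2 * B) ^ (Fintype.card ι * (Fintype.card ι - 1))) *
        (2 * (B + 1) + 1) ^ Fintype.card ι := by
  classical
  rw [← Finset.card_image_of_injOn (injOn_parameterPoly_goodParameters h.eq_of_modEq)]
  refine card_le_fcardDvd_mul (le_trans (by positivity) hB) fun f hf ↦ ?_
  obtain ⟨x, hx, rfl⟩ := Finset.mem_image.1 hf
  obtain ⟨hxbox, hcop, -⟩ := mem_goodParameters.1 hx
  exact exists_mem_numberFieldSetDvd_of_mem_parameterBox h hℓ hD hu hDsin hxbox hcop hB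

lemma exists_mul_pow_le_fcardDvd {n ℓ : ℕ} (hn : 3 ≤ n) (hℓ : 2 ≤ ℓ) :
    ∃ C c : ℝ, 0 < C ∧ 0 < c ∧ ∀ᶠ u : ℕ in atTop,
      c * (u : ℝ) ^ n ≤ FcardDvd n ℓ (C * (u : ℝ) ^ (ℓ * (n * (n - 1)))) := by
  obtain ⟨ι, _, rfl⟩ : ∃ (ι : Type) (_ : Fintype ι), Fintype.card ι = n :=
    ⟨Fin n, inferInstance, Fintype.card_fin n⟩
  have : Nonempty ι := Fintype.card_pos_iff.1 (by lia)
  set n := Fintype.card ι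
  obtain ⟨M, α, hw₀, h⟩ := exists_isAdmissibleClass hn (ℓ := ℓ) (by lia)
    (Nat.factorial_ne_zero (4 * n ^ 2)) (Classical.arbitrary ι)
  obtain ⟨D, hD, hDsin⟩ := exists_one_add_div_pow_sub_one_lt (n := n) (by lia) (M : ℝ)
  set A : ℝ := (2 * M * D) ^ ℓ + M
  have hA : 1 ≤ A := le_add_of_nonneg_of_le (by positivity) (by exact_mod_cast h.modulus_pos)
  refine ⟨(2 * A) ^ (n * (n - 1)), (D : ℝ) ^ n / (4 * (5 * A) ^ n),
    by positivity, by positivity, ?_⟩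
  filter_upwards [eventually_card_parameterBox_le h hn hℓ hw₀ hD, eventually_ne_atTop 0]
    with u hgood hu
  set B : ℝ := A * u ^ ℓ with hB
  have hB₁ : 1 ≤ B := one_le_mul_of_one_le_of_one_le hA
    (one_le_pow₀ (by exact_mod_cast Nat.one_le_iff_ne_zero.2 hu))
  have hX : (2 * A) ^ (n * (n - 1)) * (u : ℝ) ^ (ℓ * (n * (n - 1))) =
      (2 * B) ^ (n * (n - 1)) := by rw [hB, pow_mul (u : ℝ) ℓ, ← mul_pow, mul_assoc]
  rw [card_parameterBox h.modulus_pos.ne'] at hgood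
  rw [hX, div_mul_eq_mul_div, div_le_iff₀ (by positivity)]
  refine le_of_mul_le_mul_left ?_ (by positivity : (0 : ℝ) < (u ^ ℓ) ^ n)
  calc ((u : ℝ) ^ ℓ) ^ n * (D ^ n * u ^ n) = ((u ^ ℓ) ^ n * (D * u) ^ n : ℕ) := by
        push_cast; rw [mul_pow (D : ℝ)]
    _ ≤ 4 * ((goodParameters ℓ (parameterBox α M (u ^ ℓ) ((D * u) ^ n))).card : ℝ) := by
        exact_mod_cast hgood
    _ ≤ 4 * (FcardDvd n ℓ ((2 * B) ^ (n * (n - 1))) * (2 * (B + 1) + 1) ^ n) := by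
        gcongr; exact card_goodParameters_le h (by lia) hD hu hDsin le_rfl
    _ ≤ 4 * (FcardDvd n ℓ ((2 * B) ^ (n * (n - 1))) * (5 * B) ^ n) := by gcongr; linarith
    _ = (u ^ ℓ) ^ n * (FcardDvd n ℓ ((2 * B) ^ (n * (n - 1))) * (4 * (5 * A) ^ n)) := by
        rw [hB, ← mul_assoc 5 A, mul_pow (5 * A)]; ring

end LowerBound

section Logarithms

open Filter

lemma exists_add_mul_log_le_log_of_eventually_mul_pow_le {f : ℝ → ℕ} (hf : Monotone f)
    {n N : ℕ} (hN : N ≠ 0) {C c : ℝ} (hC : 0 < C) (hc : 0 < c)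
    (h : ∀ᶠ u : ℕ in atTop, c * (u : ℝ) ^ n ≤ f (C * (u : ℝ) ^ N)) :
    ∃ κ : ℝ, ∀ᶠ X : ℝ in atTop, κ + n / N * Real.log X ≤ Real.log (f X) := by
  have hroot : Tendsto (fun X : ℝ ↦ (X / C) ^ (N⁻¹ : ℝ)) atTop atTop :=
    (tendsto_rpow_atTop (by positivity)).comp (tendsto_id.atTop_div_const hC)
  refine ⟨Real.log (c / 2 ^ n) - n / N * Real.log C, ?_⟩
  filter_upwards [(tendsto_nat_floor_atTop.comp hroot).eventually h, hroot.eventually_ge_atTop 1,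
    eventually_gt_atTop 0] with X hX hy hXpos
  set y := (X / C) ^ (N⁻¹ : ℝ) with hydef
  set u := ⌊y⌋₊
  have hu : (u : ℝ) ≤ y := Nat.floor_le (by linarith)
  have hu' : y / 2 ≤ u := by
    have hone : (1 : ℝ) ≤ u := by exact_mod_cast (Nat.one_le_floor_iff y).2 hy
    linarith [Nat.lt_floor_add_one y]
  have hyN : y ^ N = X / C := Real.rpow_inv_natCast_pow (by positivity) hN
  have hle : C * (u : ℝ) ^ N ≤ X := by
    calc C * (u : ℝ) ^ N ≤ C * y ^ N := by gcongr
      _ = X := by rw [hyN, mul_div_cancel₀ _ hC.ne']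
  have hlower : c / 2 ^ n * y ^ n ≤ f X := by
    calc c / 2 ^ n * y ^ n = c * (y / 2) ^ n := by rw [div_pow]; ring
      _ ≤ c * (u : ℝ) ^ n := by gcongr
      _ ≤ f (C * (u : ℝ) ^ N) := hX
      _ ≤ f X := by exact_mod_cast hf hle
  refine le_trans (le_of_eq ?_) (Real.log_le_log (by positivity) hlower)
  rw [Real.log_mul (by positivity) (by positivity), Real.log_pow, hydef,
    Real.log_rpow (by positivity), Real.log_div hXpos.ne' hC.ne']
  ring

lemma exists_add_mul_log_le_log_fcardDvd {n ℓ : ℕ} (hn : 3 ≤ n) (hℓ : 2 ≤ ℓ) :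
    ∃ κ : ℝ, ∀ᶠ X : ℝ in atTop,
      κ + 1 / (ℓ * (n - 1)) * Real.log X ≤ Real.log (FcardDvd n ℓ X) := by
  obtain ⟨C, c, hC, hc, h⟩ := exists_mul_pow_le_fcardDvd hn hℓ
  have hN : ℓ * (n * (n - 1)) ≠ 0 := by
    simp only [ne_eq, mul_eq_zero]
    lia
  have hexp : (n : ℝ) / (ℓ * (n * (n - 1)) : ℕ) = 1 / (ℓ * (n - 1)) := by
    rw [Nat.cast_mul, Nat.cast_mul, Nat.cast_sub (by lia), Nat.cast_one]
    have : (n : ℝ) ≠ 0 := by positivity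
    field_simp
  simpa only [hexp] using
    exists_add_mul_log_le_log_of_eventually_mul_pow_le (monotone_fcardDvd n ℓ) hN hC hc h

lemma exists_log_fcard_le {n : ℕ} (hn : n ≠ 0) :
    ∃ κ : ℝ, ∀ X : ℝ, 1 ≤ X → Real.log (Fcard n X) ≤ κ + (n + 1) / 2 * Real.log X := by
  obtain ⟨C, hC, hle⟩ := exists_fcard_le hn
  refine ⟨Real.log (max C 1), fun X hX ↦ ?_⟩
  obtain h | h := (Fcard n X).eq_zero_or_pos
  · have := Real.log_nonneg hX
    have := Real.log_nonneg (le_max_right C 1)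
    simp only [h, Nat.cast_zero, Real.log_zero]
    positivity
  · rw [← Real.log_rpow (by positivity), ← Real.log_mul (by positivity) (by positivity)]
    refine Real.log_le_log (by exact_mod_cast h) ((hle X hX).trans ?_)
    gcongr
    exact le_max_left C 1

lemma log_fcardDvd_le_log_fcard (n ℓ : ℕ) (X : ℝ) :
    Real.log (FcardDvd n ℓ X) ≤ Real.log (Fcard n X) := by
  obtain h | h := (FcardDvd n ℓ X).eq_zero_or_pos
  · simpa only [h, Nat.cast_zero, Real.log_zero] using Real.log_natCast_nonneg _
  · exact Real.log_le_log (by exact_mod_cast h) (by exact_mod_cast fcardDvd_le_fcard n ℓ X)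

lemma tendsto_log_fcard_atTop {n : ℕ} (hn : 3 ≤ n) :
    Tendsto (fun X : ℝ ↦ Real.log (Fcard n X)) atTop atTop := by
  obtain ⟨κ, hκ⟩ := exists_add_mul_log_le_log_fcardDvd hn le_rfl
  have hn' : (3 : ℝ) ≤ n := by exact_mod_cast hn
  have hcoeff : (0 : ℝ) < 1 / ((2 : ℕ) * (n - 1)) := one_div_pos.2 (by push_cast; linarith)
  refine tendsto_atTop_mono' atTop (hκ.mono fun X hX ↦ hX.trans ?_)
    (tendsto_atTop_add_const_left _ κ (Real.tendsto_log_atTop.const_mul_atTop hcoeff))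
  exact log_fcardDvd_le_log_fcard n 2 X

lemma div_le_liminf_div_of_eventually_affine_le {α : Type*} {F : Filter α} {f g L : α → ℝ}
    {a b κ κ' : ℝ} (ha : 0 < a) (hb : 0 < b) (hL : Tendsto L F atTop)
    (hf : ∀ᶠ x in F, κ + a * L x ≤ f x) (hg : ∀ᶠ x in F, g x ≤ κ' + b * L x)
    (hgpos : ∀ᶠ x in F, 0 < g x) (hcobdd : F.IsCoboundedUnder (· ≥ ·) fun x ↦ f x / g x) :
    a / b ≤ liminf (fun x ↦ f x / g x) F := by
  refine le_of_forall_lt_imp_le_of_dense fun r hr ↦ le_liminf_of_le hcobdd ?_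
  set s := max r 0
  have hs : 0 < a - s * b := sub_pos.2 ((lt_div_iff₀ hb).1 (max_lt hr (by positivity)))
  filter_upwards [hf, hg, hgpos,
    (hL.const_mul_atTop hs).eventually_ge_atTop (s * κ' - κ)] with x hfx hgx hpos hLx
  rw [le_div_iff₀ hpos]
  calc r * g x ≤ s * g x := by gcongr; exact le_max_left r 0
    _ ≤ s * (κ' + b * L x) := by gcongr
    _ ≤ κ + a * L x := by linarith
    _ ≤ f x := hfx

lemma isCoboundedUnder_log_fcardDvd_div_log_fcard (n ℓ : ℕ) :
    (atTop : Filter ℝ).IsCoboundedUnder (· ≥ ·)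
      fun X ↦ Real.log (FcardDvd n ℓ X) / Real.log (Fcard n X) :=
  IsBoundedUnder.isCoboundedUnder_ge ⟨1, eventually_map.2 <| .of_forall fun X ↦
    div_le_one_of_le₀ (log_fcardDvd_le_log_fcard n ℓ X) (Real.log_natCast_nonneg _)⟩

end Logarithms

theorem liminf_log_card_ratio_general (n ℓ : ℕ) (hn : 3 ≤ n) (hℓ : 1 ≤ ℓ) :
    (2 : ℝ) / (((n : ℝ) - 1) * ((n : ℝ) + 1) * (ℓ : ℝ)) ≤
      Filter.liminf
        (fun X : ℝ => Real.log (FcardDvd n ℓ X) / Real.log (Fcard n X))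
        Filter.atTop := by
  have hn' : (3 : ℝ) ≤ n := by exact_mod_cast hn
  have hpos := (tendsto_log_fcard_atTop hn).eventually_gt_atTop 0
  obtain rfl | hℓ₂ := hℓ.eq_or_lt
  · refine Filter.le_liminf_of_le (isCoboundedUnder_log_fcardDvd_div_log_fcard n 1) ?_
    filter_upwards [hpos] with X hX
    rw [fcardDvd_one, div_self hX.ne', div_le_one (by push_cast; nlinarith)]
    push_cast
    nlinarith
  obtain ⟨κ, hlower⟩ := exists_add_mul_log_le_log_fcardDvd hn hℓ₂
  obtain ⟨κ', hupper⟩ := exists_log_fcard_le (n := n) (by lia)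
  have ha : (0 : ℝ) < 1 / (ℓ * (n - 1)) :=
    one_div_pos.2 (mul_pos (by exact_mod_cast hℓ) (by linarith))
  have hlim := div_le_liminf_div_of_eventually_affine_le ha (b := (n + 1) / 2) (by positivity)
    Real.tendsto_log_atTop hlower ((Filter.eventually_ge_atTop 1).mono hupper) hpos
    (isCoboundedUnder_log_fcardDvd_div_log_fcard n ℓ)
  convert hlim using 1
  field_simp

/-- For all integers `n ≥ 3` and `ℓ ≥ 1`,
`liminf_{X→∞} log |F_n^{(ℓ)}(X)| / log |F_n(X)| ≥ 2/((n−1)(n+2)ℓ)`. -/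
theorem liminf_log_card_ratio (n ℓ : ℕ) (hn : 3 ≤ n) (hℓ : 1 ≤ ℓ) :
    (2 : ℝ) / (((n : ℝ) - 1) * ((n : ℝ) + 2) * (ℓ : ℝ)) ≤
      Filter.liminf
        (fun X : ℝ => Real.log (FcardDvd n ℓ X) / Real.log (Fcard n X))
        Filter.atTop := by
  have hn₁ : (0 : ℝ) < n - 1 := sub_pos.2 (by exact_mod_cast (by lia : 1 < n))
  exact le_trans (by gcongr; norm_num) (liminf_log_card_ratio_general n ℓ hn hℓ)
end

section
/- Let K be a field of characteristic 0, let L be a finitely generated field extension of K, let n ≥ 1, and let Υ be a thin subset of L^n. Then Υ ∩ K^n is a thin subset of K^n. -/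
/-- `S ⊆ K^n` is a basic thin set of the first type: the zero locus of a nonzero
polynomial `F ∈ K[t_1,…,t_n]`. -/
def IsBasicThinOne (K : Type*) [Field K] (n : ℕ) (S : Set (Fin n → K)) : Prop :=
  ∃ F : MvPolynomial (Fin n) K, F ≠ 0 ∧ S = {τ | MvPolynomial.eval τ F = 0}

/-- `S ⊆ K^n` is a basic thin set of the second type: there is an irreducible
polynomial `F ∈ K[t_1,…,t_n][x]` with `deg_x F ≥ 2` such that `S` is the set of
`τ` for which the specialization `F(τ, x) ∈ K[x]` has a root in `K`. -/
def IsBasicThinTwo (K : Type*) [Field K] (n : ℕ) (S : Set (Fin n → K)) : Prop :=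
  ∃ F : Polynomial (MvPolynomial (Fin n) K), Irreducible F ∧ 2 ≤ F.natDegree ∧
    S = {τ | ∃ r : K, (F.map (MvPolynomial.eval τ)).eval r = 0}

/-- `S ⊆ K^n` is thin: it is contained in a finite union of basic thin sets. -/
def IsThin (K : Type*) [Field K] (n : ℕ) (S : Set (Fin n → K)) : Prop :=
  ∃ (m : ℕ) (B : Fin m → Set (Fin n → K)),
    (∀ i, IsBasicThinOne K n (B i) ∨ IsBasicThinTwo K n (B i)) ∧ S ⊆ ⋃ i, B i

/-!
Clearing denominators and normalizing the leading coefficient reduces thin sets of the second type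
to loci `{τ ∈ Kⁿ | G(τ, x) has a root in R}`, where `R` is integrally closed with fraction field `L`
and `G ∈ R[t][x]` is monic and has no root in `R[t]`.

Suppose that every root `ρ` of every `G(τ, x)` is a combination `∑ yᵢ bᵢ` of fixed `bᵢ ∈ R` whose
coordinates `yᵢ ∈ K` satisfy `Hᵢ(τ, yᵢ) = 0` for fixed monic `Hᵢ ∈ K[t][x]`. Factoring `Hᵢ` shows
that outside a thin set each `yᵢ` is the value at `τ` of one of the finitely many roots of `Hᵢ` in
`K[t]`. Then `ρ` is the value of one of finitely many `Q ∈ R[t]`, and `τ` is a zero of the nonzero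
polynomial `G(Q)`, so the locus is thin.

Such coordinates exist in two cases. If `L/K` is finite separable, take `R = L`: the coordinates are
traces of multiples of `ρ`, hence integral over `K[t]`. If `R = K[X]` with `K` infinite, roots have
bounded degree, so Lagrange interpolation expresses `ρ` through its values at fixed points of `K`,
and these are roots of specializations of `G`. A separating transcendence basis reduces the general
case to these two.
-/

/-- The `K`-points `τ` at which the polynomial `G(τ, x) ∈ R[x]`, obtained by specializing
the parameters of `G ∈ R[t₁, …, tₙ][x]`, has a root in `R`. -/
def rootLocus (K : Type*) {R : Type*} [CommSemiring K] [CommSemiring R] [Algebra K R] {n : ℕ}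
    (G : Polynomial (MvPolynomial (Fin n) R)) : Set (Fin n → K) :=
  {τ | ∃ ρ : R, G.eval₂ (MvPolynomial.eval (algebraMap K R ∘ τ)) ρ = 0}

/-- Thin subsets of `L^n` meet `K^n` in thin subsets of `K^n`; here `K^n` is embedded in `L^n`
through `algebraMap K L`. -/
def ThinDescends (K L : Type*) [Field K] [Field L] [Algebra K L] (n : ℕ) : Prop :=
  ∀ Υ : Set (Fin n → L), IsThin L n Υ →
    IsThin K n {τ : Fin n → K | algebraMap K L ∘ τ ∈ Υ}

section IsThin

variable {K : Type*} [Field K] {n : ℕ}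

theorem isThin_of_subset_iUnion {ι : Type*} [Finite ι] {S : Set (Fin n → K)}
    {B : ι → Set (Fin n → K)} (hB : ∀ i, IsBasicThinOne K n (B i) ∨ IsBasicThinTwo K n (B i))
    (hS : S ⊆ ⋃ i, B i) : IsThin K n S :=
  ⟨Nat.card ι, B ∘ (Finite.equivFin ι).symm, fun _ => hB _,
    hS.trans_eq ((Finite.equivFin ι).symm.surjective.iUnion_comp B).symm⟩

theorem IsBasicThinOne.isThin {S : Set (Fin n → K)} (hS : IsBasicThinOne K n S) : IsThin K n S :=
  isThin_of_subset_iUnion (fun _ : Unit => Or.inl hS) (Set.subset_iUnion (fun _ => S) ())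

theorem IsBasicThinTwo.isThin {S : Set (Fin n → K)} (hS : IsBasicThinTwo K n S) : IsThin K n S :=
  isThin_of_subset_iUnion (fun _ : Unit => Or.inr hS) (Set.subset_iUnion (fun _ => S) ())

theorem IsThin.mono {S T : Set (Fin n → K)} (hT : IsThin K n T) (hST : S ⊆ T) : IsThin K n S :=
  let ⟨m, B, hB, hTB⟩ := hT
  ⟨m, B, hB, hST.trans hTB⟩

theorem IsThin.iUnion {ι : Type*} [Finite ι] {S : ι → Set (Fin n → K)}
    (hS : ∀ i, IsThin K n (S i)) : IsThin K n (⋃ i, S i) := by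
  choose m B hB hSB using hS
  refine isThin_of_subset_iUnion (B := fun j : Σ i, Fin (m i) => B j.1 j.2)
    (fun j => hB j.1 j.2) ?_
  rw [Set.iUnion_sigma]
  exact Set.iUnion_mono hSB

theorem IsThin.union {S T : Set (Fin n → K)} (hS : IsThin K n S) (hT : IsThin K n T) :
    IsThin K n (S ∪ T) := by
  rw [Set.union_eq_iUnion]
  exact .iUnion (Bool.rec hT hS)

theorem isThin_empty : IsThin K n (∅ : Set (Fin n → K)) :=
  isThin_of_subset_iUnion (ι := Empty) (B := nofun) nofun (Set.empty_subset _)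

theorem isThin_of_finite [Finite K] (hn : 1 ≤ n) (S : Set (Fin n → K)) : IsThin K n S := by
  have hne (a : K) : (MvPolynomial.X ⟨0, hn⟩ - MvPolynomial.C a : MvPolynomial (Fin n) K) ≠ 0 :=
    sub_ne_zero.2 fun h => by simpa using congr_arg MvPolynomial.totalDegree h
  refine isThin_of_subset_iUnion (fun a => .inl ⟨_, hne a, rfl⟩) fun τ _ => ?_
  exact Set.mem_iUnion.2 ⟨τ ⟨0, hn⟩, by simp⟩

end IsThin

section CommSemiring

variable {K R : Type*} [CommSemiring K] [CommSemiring R] [Algebra K R] {σ : Type*}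

theorem eval_addMonoidAlgebraMap (l : R →ₗ[K] K) (f : MvPolynomial σ R) (τ : σ → K) :
    MvPolynomial.eval τ (AddMonoidAlgebra.map l.toAddMonoidHom f) =
      l (MvPolynomial.eval (algebraMap K R ∘ τ) f) := by
  induction f using MvPolynomial.induction_on' with
  | monomial m a =>
    have hprod : (m.prod fun i k => algebraMap K R (τ i) ^ k) =
        algebraMap K R (m.prod fun i k => τ i ^ k) := by
      simp only [Finsupp.prod, map_prod, map_pow]
    rw [← MvPolynomial.single_eq_monomial, AddMonoidAlgebra.map_single]
    simp only [MvPolynomial.single_eq_monomial, MvPolynomial.eval_monomial, Function.comp_apply]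
    rw [hprod, mul_comm, mul_comm a, ← Algebra.smul_def, map_smul]
    rfl
  | add p q hp hq => rw [AddMonoidAlgebra.map_add, map_add, hp, hq, map_add, map_add]

theorem eval_algebraMap_comp_map (p : MvPolynomial σ K) (τ : σ → K) :
    MvPolynomial.eval (algebraMap K R ∘ τ) (MvPolynomial.map (algebraMap K R) p) =
      algebraMap K R (MvPolynomial.eval τ p) := by
  rw [MvPolynomial.eval_map, MvPolynomial.eval₂_comp]

theorem rootLocus_subset_rootLocus_mul {n : ℕ} (P F : Polynomial (MvPolynomial (Fin n) R)) :
    rootLocus K F ⊆ rootLocus K (P * F) :=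
  fun _ ⟨ρ, hρ⟩ => ⟨ρ, by rw [Polynomial.eval₂_mul, hρ, mul_zero]⟩

end CommSemiring

section Field

variable {K : Type*} [Field K] {n : ℕ}

theorem isThin_setOfPred_eval_algebraMap_eq_zero {R : Type*} [CommRing R] [Algebra K R]
    {f : MvPolynomial (Fin n) R} (hf : f ≠ 0) :
    IsThin K n {τ | MvPolynomial.eval (algebraMap K R ∘ τ) f = 0} := by
  obtain ⟨m, hm⟩ := MvPolynomial.ne_zero_iff.1 hf
  obtain ⟨l, hl⟩ : ∃ l : Module.Dual K R, l (f.coeff m) ≠ 0 := by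
    by_contra! h
    exact hm ((Module.forall_dual_apply_eq_zero_iff K _).1 h)
  have hlf : AddMonoidAlgebra.map l.toAddMonoidHom f ≠ 0 := fun h => hl <| by
    rw [← MvPolynomial.coeff_zero m, ← h, MvPolynomial.coeff_addMonoidAlgebraMap]; rfl
  refine IsBasicThinOne.isThin ⟨_, hlf, rfl⟩ |>.mono fun τ hτ => ?_
  rw [Set.mem_ofPred_eq, eval_addMonoidAlgebraMap, hτ, map_zero]

theorem isThin_rootLocus_of_irreducible {H : Polynomial (MvPolynomial (Fin n) K)}
    (hH : Irreducible H) (hdeg : 2 ≤ H.natDegree) : IsThin K n (rootLocus K H) := by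
  refine IsBasicThinTwo.isThin ⟨H, hH, hdeg, ?_⟩
  simp only [rootLocus, Algebra.algebraMap_self, Polynomial.eval_map]
  rfl

theorem isThin_setOfPred_exists_root_ne_eval {H : Polynomial (MvPolynomial (Fin n) K)}
    (hH : H.Monic) :
    IsThin K n {τ | ∃ y, H.eval₂ (MvPolynomial.eval τ) y = 0 ∧
      ∀ r, H.IsRoot r → MvPolynomial.eval τ r ≠ y} := by
  induction hd : H.natDegree using Nat.strong_induction_on generalizing H with | _ d ih
  subst hd
  obtain hdeg | hdeg | hdeg : H.natDegree = 0 ∨ H.natDegree = 1 ∨ 2 ≤ H.natDegree := by omega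
  · refine isThin_empty.mono fun τ ⟨y, hy, _⟩ => ?_
    simp [hH.natDegree_eq_zero.1 hdeg] at hy
  · obtain ⟨a, rfl⟩ : ∃ a, H = Polynomial.X + Polynomial.C a := ⟨_, hH.eq_X_add_C hdeg⟩
    refine isThin_empty.mono fun τ ⟨y, hy, hne⟩ => hne (-a) (by simp) ?_
    rw [Polynomial.eval₂_add, Polynomial.eval₂_X, Polynomial.eval₂_C] at hy
    rw [map_neg, eq_neg_of_add_eq_zero_left hy]
  by_cases hirr : Irreducible H
  · exact (isThin_rootLocus_of_irreducible hirr hdeg).mono fun τ ⟨y, hy, _⟩ => ⟨y, hy⟩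
  · have hH1 : H ≠ 1 := fun h => by simp [h] at hdeg
    rw [hH.irreducible_iff_natDegree] at hirr
    push Not at hirr
    obtain ⟨f, g, hf, hg, rfl, hf0, hg0⟩ := hirr hH1
    have hfg := hf.natDegree_mul hg
    refine ((ih _ (by omega) hf rfl).union (ih _ (by omega) hg rfl)).mono ?_
    rintro τ ⟨y, hy, hne⟩
    rw [Polynomial.eval₂_mul, mul_eq_zero] at hy
    exact hy.imp
      (fun hy => ⟨y, hy, fun r hr => hne r (Polynomial.root_mul_right_of_isRoot g hr)⟩)
      (fun hy => ⟨y, hy, fun r hr => hne r (Polynomial.root_mul_left_of_isRoot f hr)⟩)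

theorem isThin_rootLocus_of_coordinates {R ι : Type*} [CommRing R] [Algebra K R] [Fintype ι]
    {G : Polynomial (MvPolynomial (Fin n) R)} (hG : ∀ Q, ¬G.IsRoot Q)
    {b : ι → R} {H : ι → Polynomial (MvPolynomial (Fin n) K)} (hH : ∀ i, (H i).Monic)
    (hcoord : ∀ (τ : Fin n → K) (ρ : R),
      G.eval₂ (MvPolynomial.eval (algebraMap K R ∘ τ)) ρ = 0 →
      ∃ y : ι → K, ρ = ∑ i, y i • b i ∧ ∀ i, (H i).eval₂ (MvPolynomial.eval τ) (y i) = 0) :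
    IsThin K n (rootLocus K G) := by
  let combination (r : ι → MvPolynomial (Fin n) K) : MvPolynomial (Fin n) R :=
    ∑ i, MvPolynomial.map (algebraMap K R) (r i) * MvPolynomial.C (b i)
  have eval_combination (r : ι → MvPolynomial (Fin n) K) (τ : Fin n → K) :
      MvPolynomial.eval (algebraMap K R ∘ τ) (combination r) =
        ∑ i, MvPolynomial.eval τ (r i) • b i := by
    simp only [combination, map_sum, map_mul, eval_algebraMap_comp_map, MvPolynomial.eval_C,
      Algebra.smul_def]
  have finite_roots (i : ι) : Finite {r // (H i).IsRoot r} :=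
    Polynomial.finite_setOfPred_isRoot (hH i).ne_zero
  have hthin := (IsThin.iUnion fun i => isThin_setOfPred_exists_root_ne_eval (hH i)).union <|
    IsThin.iUnion fun r : ∀ i, {r // (H i).IsRoot r} =>
      isThin_setOfPred_eval_algebraMap_eq_zero (K := K) (hG (combination fun i => r i))
  refine hthin.mono ?_
  rintro τ ⟨ρ, hρ⟩
  obtain ⟨y, rfl, hy⟩ := hcoord τ ρ hρ
  by_cases hroot : ∀ i, ∃ r, (H i).IsRoot r ∧ MvPolynomial.eval τ r = y i
  · choose r hr hry using hroot
    refine .inr (Set.mem_iUnion.2 ⟨fun i => ⟨r i, hr i⟩, ?_⟩)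
    simpa [Set.mem_ofPred_eq, ← Polynomial.eval₂_at_apply, eval_combination, hry] using hρ
  · push Not at hroot
    obtain ⟨i, hi⟩ := hroot
    exact .inl (Set.mem_iUnion.2 ⟨i, y i, hy i, hi⟩)

end Field

section IsFractionRing

theorem not_isRoot_integralNormalization {A k : Type*} [CommRing A] [Field k] {p : Polynomial A}
    (hp : 1 ≤ p.natDegree) {f : A →+* k} (hf : Function.Injective f)
    (hroot : ∀ x, p.eval₂ f x ≠ 0) (a : A) : ¬p.integralNormalization.IsRoot a := by
  intro ha
  have hlead : f p.leadingCoeff ≠ 0 := by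
    rw [Ne, map_eq_zero_iff f hf, Polynomial.leadingCoeff_eq_zero]
    rintro rfl
    simp at hp
  have heval := Polynomial.integralNormalization_eval₂_leadingCoeff_mul hp f
    (f a / f p.leadingCoeff)
  rw [mul_div_cancel₀ _ hlead, Polynomial.eval₂_at_apply, ha.eq_zero, map_zero] at heval
  exact mul_ne_zero (pow_ne_zero _ hlead) (hroot _) heval.symm

theorem aeval_ne_zero_of_irreducible {A k : Type*} [CommRing A] [IsDomain A] [IsGCDMonoid A]
    [Field k] [Algebra A k] [IsFractionRing A k] {F : Polynomial A} (hF : Irreducible F)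
    (hdeg : 2 ≤ F.natDegree) (x : k) : F.aeval x ≠ 0 := by
  intro hx
  have hirr : Irreducible (F.map (algebraMap A k)) :=
    (hF.isPrimitive (by omega)).irreducible_iff_irreducible_map_fraction_map.1 hF
  have hdeg_map : (F.map (algebraMap A k)).degree = (1 : ℕ) :=
    Polynomial.degree_eq_one_of_irreducible_of_root hirr
      ((Polynomial.eval_map_algebraMap F x).trans hx)
  have hdeg1 : F.natDegree = 1 := by
    rw [← Polynomial.natDegree_map_eq_of_injective (IsFractionRing.injective A k),
      Polynomial.natDegree_eq_of_degree_eq_some hdeg_map]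
  omega

variable {R L : Type*} [CommRing R] [Field L] [Algebra R L] [IsFractionRing R L]

theorem exists_map_eq_C_C_mul [IsDomain R] {σ : Type*} (F : Polynomial (MvPolynomial σ L)) :
    ∃ (P : Polynomial (MvPolynomial σ R)) (c : L), c ≠ 0 ∧
      P.map (MvPolynomial.map (algebraMap R L)) = Polynomial.C (MvPolynomial.C c) * F := by
  let := MvPolynomial.algebraMvPolynomial (σ := σ) (R := R) (S := L)
  have := MvPolynomial.isLocalization (σ := σ) (nonZeroDivisors R) L
  obtain ⟨_, ⟨r, hr, rfl⟩, hP⟩ := IsLocalization.integerNormalization_spec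
    ((nonZeroDivisors R).map (MvPolynomial.C (σ := σ))) F
  refine ⟨_, algebraMap R L r, IsFractionRing.to_map_ne_zero_of_mem_nonZeroDivisors hr,
    hP.trans ?_⟩
  rw [← IsScalarTower.algebraMap_smul (MvPolynomial σ L) _ F, Polynomial.smul_eq_C_mul]
  exact congr_arg (Polynomial.C · * F) (MvPolynomial.map_C _ _)

variable [IsIntegrallyClosed R] {n : ℕ}

theorem rootLocus_map_subset_rootLocus_integralNormalization {K : Type*} [CommSemiring K]
    [Algebra K R] [Algebra K L] [IsScalarTower K R L] {P : Polynomial (MvPolynomial (Fin n) R)}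
    (hP : 1 ≤ P.natDegree) :
    rootLocus K (P.map (MvPolynomial.map (algebraMap R L))) ⊆
      rootLocus K P.integralNormalization := by
  rintro τ ⟨ρ, hρ⟩
  let ev : MvPolynomial (Fin n) R →+* R := MvPolynomial.eval (algebraMap K R ∘ τ)
  have hcomp : (MvPolynomial.eval (algebraMap K L ∘ τ)).comp (MvPolynomial.map (algebraMap R L)) =
      (algebraMap R L).comp ev := by
    ext <;> simp [ev, ← IsScalarTower.algebraMap_apply]
  have hmonic : P.integralNormalization.Monic :=
    Polynomial.monic_integralNormalization (Polynomial.ne_zero_of_natDegree_gt hP)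
  have hroot : P.integralNormalization.eval₂ ((algebraMap R L).comp ev)
      ((algebraMap R L).comp ev P.leadingCoeff * ρ) = 0 := by
    rw [Polynomial.integralNormalization_eval₂_leadingCoeff_mul hP, ← hcomp,
      ← Polynomial.eval₂_map, hρ, mul_zero]
  have hint : IsIntegral R ((algebraMap R L).comp ev P.leadingCoeff * ρ) :=
    ⟨P.integralNormalization.map ev, hmonic.map ev, by rw [Polynomial.eval₂_map, hroot]⟩
  obtain ⟨ρ', hρ'⟩ := IsIntegrallyClosed.algebraMap_eq_of_integral hint
  refine ⟨ρ', IsFractionRing.injective R L ?_⟩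
  rw [Polynomial.hom_eval₂, hρ', hroot, map_zero]

theorem exists_monic_rootLocus_subset [IsDomain R] (K : Type*) [CommSemiring K] [Algebra K R]
    [Algebra K L] [IsScalarTower K R L] {F : Polynomial (MvPolynomial (Fin n) L)}
    (hF : Irreducible F) (hdeg : 2 ≤ F.natDegree) :
    ∃ G : Polynomial (MvPolynomial (Fin n) R), G.Monic ∧ (∀ Q, ¬G.IsRoot Q) ∧
      rootLocus K F ⊆ rootLocus K G := by
  obtain ⟨P, c, hc, hP⟩ := exists_map_eq_C_C_mul (R := R) F
  have hCc : (MvPolynomial.C c : MvPolynomial (Fin n) L) ≠ 0 := by simpa using hc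
  have map_injective : Function.Injective (MvPolynomial.map (σ := Fin n) (algebraMap R L)) :=
    MvPolynomial.map_injective _ (IsFractionRing.injective R L)
  have hdegP : 1 ≤ P.natDegree := by
    rw [← Polynomial.natDegree_map_eq_of_injective map_injective, hP,
      Polynomial.natDegree_C_mul hCc]
    omega
  refine ⟨P.integralNormalization,
    Polynomial.monic_integralNormalization (Polynomial.ne_zero_of_natDegree_gt hdegP), ?_, ?_⟩
  · let k := FractionRing (MvPolynomial (Fin n) L)
    have algebraMap_injective := IsFractionRing.injective (MvPolynomial (Fin n) L) k
    refine not_isRoot_integralNormalization hdegP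
      (f := (algebraMap _ k).comp (MvPolynomial.map (algebraMap R L)))
      (algebraMap_injective.comp map_injective) fun x => ?_
    rw [← Polynomial.eval₂_map, hP, Polynomial.eval₂_mul, Polynomial.eval₂_C]
    exact mul_ne_zero ((map_ne_zero_iff _ algebraMap_injective).2 hCc)
      (aeval_ne_zero_of_irreducible hF hdeg x)
  · refine (rootLocus_subset_rootLocus_mul (Polynomial.C (MvPolynomial.C c)) F).trans ?_
    rw [← hP]
    exact rootLocus_map_subset_rootLocus_integralNormalization hdegP

end IsFractionRing

theorem ThinDescends.of_isFractionRing {K : Type*} (R : Type*) {L : Type*} [Field K] [CommRing R]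
    [IsDomain R] [IsIntegrallyClosed R] [Field L] [Algebra R L] [IsFractionRing R L] [Algebra K R]
    [Algebra K L] [IsScalarTower K R L] {n : ℕ}
    (hR : ∀ G : Polynomial (MvPolynomial (Fin n) R), G.Monic → (∀ Q, ¬G.IsRoot Q) →
      IsThin K n (rootLocus K G)) :
    ThinDescends K L n := by
  rintro Υ ⟨m, B, hB, hΥ⟩
  suffices hthin : ∀ j, IsThin K n {τ | algebraMap K L ∘ τ ∈ B j} from
    (IsThin.iUnion hthin).mono fun τ hτ => by simpa using hΥ hτ
  intro j
  obtain ⟨F, hF, hBj⟩ | ⟨F, hF, hdeg, hBj⟩ := hB j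
  · rw [hBj]
    exact isThin_setOfPred_eval_algebraMap_eq_zero hF
  · obtain ⟨G, hG, hroot, hsub⟩ := exists_monic_rootLocus_subset (R := R) K hF hdeg
    refine (hR G hG hroot).mono fun τ hτ => hsub ?_
    rw [hBj] at hτ
    obtain ⟨ρ, hρ⟩ := hτ
    exact ⟨ρ, by rwa [← Polynomial.eval_map]⟩

theorem isIntegralElem_trace_comp {A X K L : Type*} [CommRing A] [Field K] [Field L] [Algebra K L]
    [FiniteDimensional K L] [Algebra.IsSeparable K L] (φ : A →+* (X → K)) {f : X → L}
    (hf : (((algebraMap K L).compLeft X).comp φ).IsIntegralElem f) :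
    φ.IsIntegralElem fun x => Algebra.trace K L (f x) := by
  let Ω := AlgebraicClosure K
  let ψ : A →+* (X → Ω) := ((algebraMap K Ω).compLeft X).comp φ
  have hconj (σ : L →ₐ[K] Ω) : ψ.IsIntegralElem fun x => σ (f x) := by
    have hcomp : (σ.toRingHom.compLeft X).comp (((algebraMap K L).compLeft X).comp φ) = ψ := by
      ext a x
      exact σ.commutes _
    rw [← hcomp]
    exact hf.map (σ.toRingHom.compLeft X)
  have hsum : ψ.IsIntegralElem (∑ σ : L →ₐ[K] Ω, fun x => σ (f x)) := by
    let := ψ.toAlgebra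
    exact IsIntegral.sum _ fun σ _ => hconj σ
  have htrace : (∑ σ : L →ₐ[K] Ω, fun x => σ (f x)) =
      (algebraMap K Ω).compLeft X fun x => Algebra.trace K L (f x) := by
    ext x
    simp [trace_eq_sum_embeddings Ω]
  rw [htrace] at hsum
  exact hsum.of_map (algebraMap K Ω).injective.comp_left

section Finite

variable {K L : Type*} [Field K] [Field L] [Algebra K L] [FiniteDimensional K L]
  [Algebra.IsSeparable K L]

theorem exists_monic_eval₂_trace_mul_eq_zero {σ X : Type*}
    {G : Polynomial (MvPolynomial σ L)} (hG : G.Monic) {τ : X → σ → K} {ρ : X → L}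
    (hρ : ∀ x, G.eval₂ (MvPolynomial.eval (algebraMap K L ∘ τ x)) (ρ x) = 0) (c : L) :
    ∃ H : Polynomial (MvPolynomial σ K), H.Monic ∧
      ∀ x, H.eval₂ (MvPolynomial.eval (τ x)) (Algebra.trace K L (ρ x * c)) = 0 := by
  -- The roots at all points `x` form one integral element of the ring of functions `X → L`;
  -- this makes `H` independent of `x`.
  let φ : MvPolynomial σ K →+* (X → K) := RingHom.pi fun x => MvPolynomial.eval (τ x)
  let ψ : MvPolynomial σ L →+* (X → L) :=
    RingHom.pi fun x => MvPolynomial.eval (algebraMap K L ∘ τ x)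
  have hψφ : ψ.comp (MvPolynomial.map (algebraMap K L)) =
      ((algebraMap K L).compLeft X).comp φ :=
    RingHom.ext fun p => funext fun x => eval_algebraMap_comp_map p (τ x)
  have hψρ : ψ.IsIntegralElem ρ := ⟨G, hG, funext fun x =>
    (Polynomial.hom_eval₂ G ψ (Pi.evalRingHom _ x) ρ).trans (hρ x)⟩
  have hψc : ψ.IsIntegralElem fun x => ρ x * c := by
    have hmul : (fun x => ρ x * c) = ρ * ψ (MvPolynomial.C c) :=
      funext fun x => congr_arg (ρ x * ·) (MvPolynomial.eval_C c).symm
    rw [hmul]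
    exact hψρ.mul ψ ψ.isIntegralElem_map
  have hint : (((algebraMap K L).compLeft X).comp φ).IsIntegralElem fun x => ρ x * c := by
    let := MvPolynomial.algebraMvPolynomial (σ := σ) (R := K) (S := L)
    let := ψ.toAlgebra
    let := (ψ.comp (algebraMap (MvPolynomial σ K) (MvPolynomial σ L))).toAlgebra
    have : IsScalarTower (MvPolynomial σ K) (MvPolynomial σ L) (X → L) := .of_algebraMap_eq' rfl
    rw [← hψφ]
    exact isIntegral_trans (R := MvPolynomial σ K) (A := MvPolynomial σ L) _ hψc
  obtain ⟨H, hH, hHφ⟩ := isIntegralElem_trace_comp φ hint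
  refine ⟨H, hH, fun x => ?_⟩
  exact (Polynomial.hom_eval₂ H φ (Pi.evalRingHom _ x) _).symm.trans (congr_fun hHφ x)

theorem ThinDescends.of_finite_of_isSeparable {n : ℕ} : ThinDescends K L n := by
  refine .of_isFractionRing L fun G hG hroot => ?_
  let b := Module.finBasis K L
  let X := {p : (Fin n → K) × L // G.eval₂ (MvPolynomial.eval (algebraMap K L ∘ p.1)) p.2 = 0}
  choose H hH hHroot using exists_monic_eval₂_trace_mul_eq_zero hG (fun x : X => x.2)
  refine isThin_rootLocus_of_coordinates hroot (b := b.traceDual) (fun i => hH (b i))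
    fun τ ρ hρ => ⟨_, (b.traceDual.sum_repr ρ).symm, fun i => ?_⟩
  rw [Module.Basis.traceDual_repr_apply]
  exact hHroot _ ⟨(τ, ρ), hρ⟩

end Finite

theorem natDegree_le_of_isRoot_of_monic {A : Type*} [CommRing A] [NoZeroDivisors A]
    {g : Polynomial (Polynomial A)} (hg : g.Monic) {D : ℕ} (hD : ∀ i, (g.coeff i).natDegree ≤ D)
    {ρ : Polynomial A} (hρ : g.IsRoot ρ) : ρ.natDegree ≤ D := by
  nontriviality A
  by_contra! hlt
  obtain ⟨d, hd⟩ : ∃ d, g.natDegree = d + 1 := Nat.exists_eq_succ_of_ne_zero fun h => by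
    simp [hg.natDegree_eq_zero.1 h] at hρ
  have hpow : ρ ^ (d + 1) = -∑ i ∈ Finset.range (d + 1), g.coeff i * ρ ^ i := by
    have hsum := hρ.eq_zero
    rw [Polynomial.eval_eq_sum_range, Finset.sum_range_succ, hg.coeff_natDegree, hd, one_mul]
      at hsum
    exact eq_neg_of_add_eq_zero_right hsum
  have hdeg : (d + 1) * ρ.natDegree ≤ D + d * ρ.natDegree := by
    rw [← Polynomial.natDegree_pow, hpow, Polynomial.natDegree_neg]
    refine Polynomial.natDegree_sum_le_of_forall_le _ _ fun i hi => ?_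
    refine Polynomial.natDegree_mul_le.trans (add_le_add (hD i) ?_)
    exact Polynomial.natDegree_pow_le.trans
      (Nat.mul_le_mul_right _ (Finset.mem_range_succ_iff.1 hi))
  rw [Nat.succ_mul] at hdeg
  omega

theorem exists_natDegree_eval_algebraMap_le {A σ : Type*} [CommSemiring A]
    (f : MvPolynomial σ (Polynomial A)) : ∃ D, ∀ τ : σ → A,
      (MvPolynomial.eval (algebraMap A (Polynomial A) ∘ τ) f).natDegree ≤ D := by
  refine ⟨f.support.sup fun m => (f.coeff m).natDegree, fun τ => ?_⟩
  rw [MvPolynomial.eval_eq]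
  refine Polynomial.natDegree_sum_le_of_forall_le _ _ fun m hm => ?_
  have hprod : ∏ i ∈ m.support, (algebraMap A (Polynomial A) ∘ τ) i ^ m i =
      Polynomial.C (∏ i ∈ m.support, τ i ^ m i) := by
    simp [Polynomial.algebraMap_eq]
  rw [hprod]
  exact (Polynomial.natDegree_mul_C_le _ _).trans
    (Finset.le_sup (f := fun m => (f.coeff m).natDegree) hm)

theorem exists_natDegree_root_le {A σ : Type*} [CommRing A] [NoZeroDivisors A]
    {G : Polynomial (MvPolynomial σ (Polynomial A))} (hG : G.Monic) :
    ∃ D, ∀ (τ : σ → A) (ρ : Polynomial A),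
      G.eval₂ (MvPolynomial.eval (algebraMap A (Polynomial A) ∘ τ)) ρ = 0 → ρ.natDegree ≤ D := by
  choose d hd using fun i => exists_natDegree_eval_algebraMap_le (G.coeff i)
  refine ⟨G.support.sup d, fun τ ρ hρ => ?_⟩
  refine natDegree_le_of_isRoot_of_monic
    (hG.map (MvPolynomial.eval (algebraMap A (Polynomial A) ∘ τ))) (fun i => ?_)
    ((Polynomial.eval_map _ ρ).trans hρ)
  rw [Polynomial.coeff_map]
  by_cases hi : i ∈ G.support
  · exact (hd i τ).trans (Finset.le_sup hi)
  · simp [Polynomial.notMem_support_iff.1 hi]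

section Polynomial

variable {K : Type*} [Field K] [Infinite K] {n : ℕ}

theorem isThin_rootLocus_polynomial {G : Polynomial (MvPolynomial (Fin n) (Polynomial K))}
    (hG : G.Monic) (hroot : ∀ Q, ¬G.IsRoot Q) : IsThin K n (rootLocus K G) := by
  obtain ⟨D, hD⟩ := exists_natDegree_root_le hG
  let v (i : Fin (D + 1)) : K := Infinite.natEmbedding K i
  have hv : Function.Injective v := (Infinite.natEmbedding K).injective.comp Fin.val_injective
  let specialize (i : Fin (D + 1)) :
      MvPolynomial (Fin n) (Polynomial K) →+* MvPolynomial (Fin n) K :=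
    MvPolynomial.map (Polynomial.evalRingHom (v i))
  refine isThin_rootLocus_of_coordinates hroot (b := Lagrange.basis Finset.univ v)
    (H := fun i => G.map (specialize i)) (fun i => hG.map _) fun τ ρ hρ =>
    ⟨fun i => ρ.eval (v i), ?_, fun i => ?_⟩
  · have hdeg : ρ.degree < (Finset.univ : Finset (Fin (D + 1))).card := by
      rw [Finset.card_fin]
      exact Polynomial.degree_le_natDegree.trans_lt (mod_cast Nat.lt_succ_of_le (hD τ ρ hρ))
    simpa only [Lagrange.interpolate_apply, ← Polynomial.smul_eq_C_mul] using
      Lagrange.eq_interpolate hv.injOn hdeg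
  · have hcomp : (MvPolynomial.eval τ).comp (specialize i) = (Polynomial.evalRingHom (v i)).comp
        (MvPolynomial.eval (algebraMap K (Polynomial K) ∘ τ)) := by
      ext <;> simp [specialize, Polynomial.algebraMap_eq]
    simp only [Polynomial.eval₂_map, hcomp, ← Polynomial.coe_evalRingHom]
    rw [← Polynomial.hom_eval₂, hρ, map_zero]

end Polynomial

open IntermediateField

theorem ThinDescends.trans {K E L : Type*} [Field K] [Field E] [Field L] [Algebra K E]
    [Algebra E L] [Algebra K L] [IsScalarTower K E L] {n : ℕ} (hKE : ThinDescends K E n)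
    (hEL : ThinDescends E L n) : ThinDescends K L n := by
  intro Υ hΥ
  have hτ (τ : Fin n → K) : algebraMap K L ∘ τ = algebraMap E L ∘ algebraMap K E ∘ τ :=
    funext fun i => IsScalarTower.algebraMap_apply K E L (τ i)
  simp only [hτ]
  exact hKE _ (hEL Υ hΥ)

section AdjoinTranscendental

variable {K L : Type*} [Field K] [Field L] [Algebra K L] {n : ℕ}

theorem ThinDescends.adjoin_simple_of_transcendental [Infinite K] {x : L}
    (hx : Transcendental K x) : ThinDescends K K⟮x⟯ n := by
  let e : RatFunc K ≃ₐ[K] K⟮x⟯ := RatFunc.algEquivOfTranscendental x hx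
  let : Algebra (Polynomial K) K⟮x⟯ :=
    (e.toRingHom.comp (algebraMap (Polynomial K) (RatFunc K))).toAlgebra
  let e' : RatFunc K ≃ₐ[Polynomial K] K⟮x⟯ := { e with commutes' := fun _ => rfl }
  have : IsFractionRing (Polynomial K) K⟮x⟯ := IsLocalization.isLocalization_of_algEquiv _ e'
  have : IsScalarTower K (Polynomial K) K⟮x⟯ := .of_algebraMap_eq fun a =>
    (e.commutes a).symm
  exact .of_isFractionRing (Polynomial K) fun G hG hroot => isThin_rootLocus_polynomial hG hroot

theorem ThinDescends.adjoin_of_algebraicIndepOn [Infinite K] {s : Set L} (hs : s.Finite)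
    (hind : AlgebraicIndepOn K id s) : ThinDescends K (adjoin K s) n := by
  induction s, hs using Set.Finite.induction_on with
  | empty =>
    rw [adjoin_empty]
    exact .of_finite_of_isSeparable
  | @insert x s hx _ ih =>
    rw [AlgebraicIndepOn.insert_iff hx, Set.image_id] at hind
    have : Infinite (adjoin K s) := .of_injective _ (algebraMap K (adjoin K s)).injective
    have hsx : ThinDescends K (adjoin K s)⟮x⟯ n := (ih hind.1).trans
      (.adjoin_simple_of_transcendental (transcendental_adjoin_iff.2 hind.2))
    rw [Set.insert_eq, Set.union_comm, ← adjoin_adjoin_left]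
    exact hsx

end AdjoinTranscendental

theorem thin_inter_base_field_general (K L : Type*) [Field K] [Field L] [PerfectField K]
    [Algebra K L] (hfg : (⊤ : IntermediateField K L).FG)
    (n : ℕ) (hn : 1 ≤ n) (Υ : Set (Fin n → L)) (hΥ : IsThin L n Υ) :
    IsThin K n {τ : Fin n → K | (fun i => algebraMap K L (τ i)) ∈ Υ} := by
  obtain _ | _ := finite_or_infinite K
  · exact isThin_of_finite hn _
  have : Algebra.EssFiniteType K L := fg_top_iff.1 hfg
  obtain ⟨s, hs, _⟩ := exists_isTranscendenceBasis_and_isSeparable_of_perfectField K L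
  have : Algebra.EssFiniteType (adjoin K (s : Set L)) L := .of_comp K _ _
  have : FiniteDimensional (adjoin K (s : Set L)) L :=
    Algebra.finite_of_essFiniteType_of_isAlgebraic
  have hKs : ThinDescends K (adjoin K (s : Set L)) n :=
    .adjoin_of_algebraicIndepOn s.finite_toSet hs.1
  exact hKs.trans .of_finite_of_isSeparable Υ hΥ

/-- **Proposition 2.1.**  Let `K` be a field of characteristic `0`, `L` a finitely
generated field extension of `K`, and `Υ` a thin subset of `L^n` (`n ≥ 1`).  Then
`Υ ∩ K^n` is a thin subset of `K^n`. -/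
theorem thin_inter_base_field (K L : Type*) [Field K] [Field L] [CharZero K]
    [Algebra K L] (hfg : (⊤ : IntermediateField K L).FG)
    (n : ℕ) (hn : 1 ≤ n) (Υ : Set (Fin n → L)) (hΥ : IsThin L n Υ) :
    IsThin K n {τ : Fin n → K | (fun i => algebraMap K L (τ i)) ∈ Υ} :=
  thin_inter_base_field_general K L hfg n hn Υ hΥ
end
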